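/- Let 2 ≤ p ≤ ∞ and q satisfy 2/p + 3/q = 3/2. There exists a constant C > 0 such that for every Schwartz function u₀ on ℝ³ the free KP-II evolution u(t) = S(t)u₀ satisfies the Strichartz estimate ‖u‖_{L^p_t L^q_{x,y}(ℝ×ℝ³)} ≤ C ‖ |D_x|^{1/(3p)} u₀ ‖_{L²(ℝ³)}, where |D_x|^s denotes the Fourier multiplier with symbol |ξ|^s and the mixed norm is ‖u‖_{L^p_t L^q_{x,y}} = ( ∫_ℝ ‖u(t,·)‖_{L^q(ℝ³)}^p dt )^{1/p} (with the usual modification for p = ∞). -/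

import Mathlib

/-!
STATEMENT 0: Strichartz estimate for the free 3D KP-II evolution,
2 ≤ p ≤ ∞, 2/p + 3/q = 3/2:
‖S(t)u₀‖_{L^p_t L^q_{x,y}} ≤ C ‖|D_x|^{1/(3p)} u₀‖_{L²}.
The norm ‖|D_x|^s u₀‖_{L²} is expressed (via Plancherel) as the L² norm of
|ξ|^s û₀ on the Fourier side.
-/

noncomputable section

open MeasureTheory Filter
open scoped ENNReal

abbrev E2 := EuclideanSpace ℝ (Fin 2)

/-- (Nonunitary) Fourier transform on ℝ × ℝ². -/
def ft (f : ℝ × E2 → ℂ) (ζ : ℝ × E2) : ℂ :=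
  ∫ z : ℝ × E2, Complex.exp (-Complex.I * ((z.1 * ζ.1 + inner ℝ z.2 ζ.2 : ℝ) : ℂ)) * f z

/-- KP-II dispersion relation ω(ξ,η) = ξ³ − |η|²/ξ. -/
def omega (ζ : ℝ × E2) : ℝ := ζ.1 ^ 3 - ‖ζ.2‖ ^ 2 / ζ.1

/-- Free KP-II evolution u(t) = S(t)u₀ of Schwartz data, as inverse Fourier
integral of e^{itω(ξ,η)} û₀(ξ,η). -/
def kpEvol (u₀ : SchwartzMap (ℝ × E2) ℂ) (t : ℝ) (z : ℝ × E2) : ℂ :=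
  ∫ ζ : ℝ × E2,
    Complex.exp (Complex.I * ((t * omega ζ + z.1 * ζ.1 + inner ℝ z.2 ζ.2 : ℝ) : ℂ)) * ft (fun w => u₀ w) ζ

/-- `L^p` norm (in `ℝ≥0∞`) of an `ℝ≥0∞`-valued function, with the usual
modification for `p = ∞`. -/
def lpENN {ι : Type*} [MeasurableSpace ι] (μ : Measure ι) (p : ℝ≥0∞) (f : ι → ℝ≥0∞) : ℝ≥0∞ :=
  if p = ∞ then essSup f μ else (∫⁻ t, f t ^ p.toReal ∂μ) ^ (1 / p.toReal)

/-- Mixed norm ‖u‖_{L^p_t L^q_{x,y}}. -/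
def mixedNorm (p q : ℝ≥0∞) (u : ℝ → ℝ × E2 → ℂ) : ℝ≥0∞ :=
  lpENN volume p fun t => eLpNorm (u t) q volume

/-!
On a frequency block `ξ ∈ [a, 4a)` the `η`-integral of the propagator is a Fresnel integral and the
`ξ`-integral is controlled by van der Corput's lemma, which gives the decay `|t|^{-3/2} a^{1/2}`.
This is the situation of Keel and Tao with `σ = 3/2`. For the endpoint `(p, q) = (2, 6)` on a single
block, the dual function is split into level sets, and the interaction of two levels is split at
the time separation that balances the dispersive bound against the energy bound; the result decays
geometrically in the distance of the levels.

Blocks are summed along the families `a 16ⁱ`. At the endpoint one expands `|U + u|⁶`, where the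
frequencies of `u` dominate those of `U`: the term linear in `u` integrates to zero because of the
frequency supports, and the remaining terms are controlled by `∑ ‖u_i‖²`. For `p > 2` the norms of
the products `u_i u_j` decay geometrically in `|i - j|` by interpolation. Two such families cover
`ξ > 0` and reflection handles `ξ < 0`. The case `p = ∞` is Plancherel.
-/

namespace KP

theorem two_mul_mul_le_sq_add_sq (s t : ℝ≥0∞) : 2 * (s * t) ≤ s ^ 2 + t ^ 2 := by
  rcases eq_or_ne s ∞ with rfl | hs
  · simp
  rcases eq_or_ne t ∞ with rfl | ht
  · simp
  lift s to NNReal using hs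
  lift t to NNReal using ht
  rw [← mul_assoc]
  exact_mod_cast two_mul_le_add_sq s t

theorem two_mul_lintegral_convolution_le {G : Type*} [AddCommGroup G] [MeasurableSpace G]
    [MeasurableAdd₂ G] [MeasurableNeg G] [MeasurableSub₂ G]
    (μ : Measure G) [SFinite μ] [μ.IsAddLeftInvariant] [μ.IsNegInvariant]
    {k a b : G → ℝ≥0∞} (hk : Measurable k) (ha : Measurable a) (hb : Measurable b) :
    2 * ∫⁻ x, ∫⁻ y, k (x - y) * (a x * b y) ∂μ ∂μ ≤
      (∫⁻ x, k x ∂μ) * (∫⁻ x, a x ^ 2 ∂μ + ∫⁻ x, b x ^ 2 ∂μ) := by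
  have left_term : ∫⁻ x, ∫⁻ y, k (x - y) * a x ^ 2 ∂μ ∂μ = (∫⁻ x, k x ∂μ) * ∫⁻ x, a x ^ 2 ∂μ := by
    rw [← lintegral_const_mul _ (by fun_prop)]
    refine lintegral_congr fun x => ?_
    rw [lintegral_mul_const _ (by fun_prop), lintegral_sub_left_eq_self (μ := μ) k x]
  have right_term :
      ∫⁻ x, ∫⁻ y, k (x - y) * b y ^ 2 ∂μ ∂μ = (∫⁻ x, k x ∂μ) * ∫⁻ x, b x ^ 2 ∂μ := by
    rw [lintegral_lintegral_swap (by fun_prop), ← lintegral_const_mul _ (by fun_prop)]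
    refine lintegral_congr fun y => ?_
    rw [lintegral_mul_const _ (by fun_prop), lintegral_sub_right_eq_self (μ := μ) k y]
  calc 2 * ∫⁻ x, ∫⁻ y, k (x - y) * (a x * b y) ∂μ ∂μ
      = ∫⁻ x, ∫⁻ y, k (x - y) * (2 * (a x * b y)) ∂μ ∂μ := by
        rw [← lintegral_const_mul _ (by fun_prop)]
        refine lintegral_congr fun x => ?_
        rw [← lintegral_const_mul _ (by fun_prop)]
        exact lintegral_congr fun y => mul_left_comm _ _ _
    _ ≤ ∫⁻ x, ∫⁻ y, (k (x - y) * a x ^ 2 + k (x - y) * b y ^ 2) ∂μ ∂μ := by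
        gcongr with x y
        rw [← mul_add]
        gcongr
        exact two_mul_mul_le_sq_add_sq _ _
    _ = ∫⁻ x, ∫⁻ y, k (x - y) * a x ^ 2 ∂μ ∂μ + ∫⁻ x, ∫⁻ y, k (x - y) * b y ^ 2 ∂μ ∂μ := by
        rw [← lintegral_add_left (by fun_prop)]
        exact lintegral_congr fun x => lintegral_add_left (by fun_prop) _
    _ = (∫⁻ x, k x ∂μ) * (∫⁻ x, a x ^ 2 ∂μ + ∫⁻ x, b x ^ 2 ∂μ) := by
        rw [left_term, right_term, mul_add]

theorem lintegral_le_of_tendsto {X : Type*} [MeasurableSpace X] {μ : Measure X}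
    {f : ℕ → X → ℝ≥0∞} {g : X → ℝ≥0∞} {C : ℝ≥0∞} (hf : ∀ n, AEMeasurable (f n) μ)
    (hlim : ∀ x, Tendsto (fun n => f n x) atTop (nhds (g x))) (hC : ∀ n, ∫⁻ x, f n x ∂μ ≤ C) :
    ∫⁻ x, g x ∂μ ≤ C :=
  calc ∫⁻ x, g x ∂μ = ∫⁻ x, liminf (fun n => f n x) atTop ∂μ :=
        lintegral_congr fun x => (hlim x).liminf_eq.symm
    _ ≤ liminf (fun n => ∫⁻ x, f n x ∂μ) atTop := lintegral_liminf_le' hf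
    _ ≤ C := liminf_le_of_frequently_le' (Eventually.of_forall hC).frequently

theorem conj_circleExp (r : ℝ) : (starRingEnd ℂ) (Circle.exp r : ℂ) = Circle.exp (-r) := by
  rw [Circle.exp_neg, Circle.coe_inv_eq_conj]

theorem coe_circleExp_add (r s : ℝ) :
    (Circle.exp (r + s) : ℂ) = Circle.exp r * Circle.exp s := by
  rw [Circle.exp_add, Circle.coe_mul]

theorem integrable_circleExp_mul {X : Type*} [MeasurableSpace X] {μ : Measure X} {g : X → ℂ}
    {r : X → ℝ} (hg : Integrable g μ) (hr : Measurable r) :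
    Integrable (fun x => (Circle.exp (r x) : ℂ) * g x) μ :=
  hg.bdd_mul (c := 1) (by fun_prop) (by simp)

theorem integrable_conj {X : Type*} [MeasurableSpace X] {μ : Measure X} {f : X → ℂ}
    (hf : Integrable f μ) : Integrable (fun x => (starRingEnd ℂ) (f x)) μ :=
  (LinearIsometryEquiv.integrable_comp_iff Complex.conjLIE).2 hf

/-! ### The inverse Fourier integral on `ℝ × V` -/

section Fourier

variable {V : Type*} [NormedAddCommGroup V]

/-- The Gaussian `e^{-ε|z|²}`, `|z|` being the Euclidean length; it is used as a summability
factor. -/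
def gaussian (ε : ℝ) (z : ℝ × V) : ℝ := Real.exp (-ε * (z.1 ^ 2 + ‖z.2‖ ^ 2))

theorem gaussian_pos (ε : ℝ) (z : ℝ × V) : 0 < gaussian ε z := Real.exp_pos _

theorem gaussian_eq_mul (ε : ℝ) (z : ℝ × V) :
    gaussian ε z = Real.exp (-ε * ‖z.1‖ ^ 2) * Real.exp (-ε * ‖z.2‖ ^ 2) := by
  rw [gaussian, ← Real.exp_add, Real.norm_eq_abs, sq_abs]
  ring_nf

@[fun_prop]
theorem continuous_gaussian (ε : ℝ) : Continuous (gaussian (V := V) ε) := by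
  unfold gaussian
  fun_prop

theorem tendsto_gaussian_one (z : ℝ × V) :
    Tendsto (fun n : ℕ => gaussian (1 / ((n : ℝ) + 1)) z) atTop (nhds 1) := by
  have := (Real.continuous_exp.tendsto _).comp
    (tendsto_one_div_add_atTop_nhds_zero_nat.neg.mul_const (z.1 ^ 2 + ‖z.2‖ ^ 2))
  simpa [gaussian, Function.comp_def] using this

variable [InnerProductSpace ℝ V]

/-- The Fourier transform of `gaussian ε`. -/
def gaussianHat (ε : ℝ) (z : ℝ × V) : ℝ :=
  (Real.pi / ε) ^ ((1 + Module.finrank ℝ V : ℝ) / 2) * gaussian (1 / (4 * ε)) z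

@[fun_prop]
theorem continuous_gaussianHat (ε : ℝ) : Continuous (gaussianHat (V := V) ε) := by
  unfold gaussianHat
  fun_prop

theorem gaussianHat_nonneg {ε : ℝ} (hε : 0 < ε) (z : ℝ × V) : 0 ≤ gaussianHat ε z :=
  mul_nonneg (by positivity) (gaussian_pos _ z).le

/-- The Euclidean pairing of `ℝ × V` with itself. `ℝ × V` carries the sup norm, so this is not an
inner product in the sense of Mathlib. -/
def pairing (z ζ : ℝ × V) : ℝ := z.1 * ζ.1 + inner ℝ z.2 ζ.2

@[fun_prop]
theorem continuous_pairing {X : Type*} [TopologicalSpace X] {f g : X → ℝ × V}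
    (hf : Continuous f) (hg : Continuous g) : Continuous fun x => pairing (f x) (g x) := by
  unfold pairing
  fun_prop

theorem pairing_comm (z ζ : ℝ × V) : pairing z ζ = pairing ζ z := by
  simp only [pairing, real_inner_comm, mul_comm]

theorem pairing_add_right (z ζ w : ℝ × V) : pairing z (ζ + w) = pairing z ζ + pairing z w := by
  simp only [pairing, Prod.fst_add, Prod.snd_add, inner_add_right]
  ring

theorem pairing_neg_right (z ζ : ℝ × V) : pairing z (-ζ) = -pairing z ζ := by
  simp only [pairing, Prod.fst_neg, Prod.snd_neg, inner_neg_right]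
  ring

theorem pairing_sub_right (z ζ w : ℝ × V) : pairing z (ζ - w) = pairing z ζ - pairing z w := by
  rw [sub_eq_add_neg, pairing_add_right, pairing_neg_right, ← sub_eq_add_neg]

variable [FiniteDimensional ℝ V] [MeasurableSpace V] [BorelSpace V]

@[fun_prop]
theorem measurable_pairing {X : Type*} [MeasurableSpace X] {f g : X → ℝ × V}
    (hf : Measurable f) (hg : Measurable g) : Measurable fun x => pairing (f x) (g x) :=
  (continuous_pairing continuous_fst continuous_snd).measurable.comp (hf.prodMk hg)

instance isAddHaarMeasure_volume_prod : (volume : Measure (ℝ × V)).IsAddHaarMeasure :=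
  inferInstanceAs ((volume : Measure ℝ).prod (volume : Measure V)).IsAddHaarMeasure

/-- The inverse Fourier integral `∫ e^{i z·ζ} g(ζ) dζ`, without a normalising factor (the convention
of `kpEvol`). -/
def invFourier (g : ℝ × V → ℂ) (z : ℝ × V) : ℂ :=
  ∫ ζ, (Circle.exp (pairing z ζ) : ℂ) * g ζ

theorem continuous_invFourier {g : ℝ × V → ℂ} (hg : Integrable g) : Continuous (invFourier g) := by
  refine continuous_of_dominated (bound := fun ζ => ‖g ζ‖)
    (fun z => (integrable_circleExp_mul hg (by fun_prop)).aestronglyMeasurable)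
    (fun z => ?_) hg.norm ?_
  · exact Eventually.of_forall fun ζ => by simp
  · exact Eventually.of_forall fun ζ => by fun_prop

theorem norm_invFourier_le (g : ℝ × V → ℂ) (z : ℝ × V) : ‖invFourier g z‖ ≤ ∫ ζ, ‖g ζ‖ :=
  (norm_integral_le_integral_norm _).trans_eq (by simp)

theorem invFourier_add {f g : ℝ × V → ℂ} (hf : Integrable f) (hg : Integrable g) (z : ℝ × V) :
    invFourier (fun ζ => f ζ + g ζ) z = invFourier f z + invFourier g z := by
  simp only [invFourier, mul_add]
  exact integral_add (integrable_circleExp_mul hf (by fun_prop))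
    (integrable_circleExp_mul hg (by fun_prop))

theorem integral_mul_invFourier_mul_conj {m φ ψ : ℝ × V → ℂ}
    (hm : Integrable m) (hφ : Integrable φ) (hψ : Integrable ψ) :
    ∫ ζ, m ζ * (invFourier φ ζ * (starRingEnd ℂ) (invFourier ψ ζ)) =
      ∫ p : (ℝ × V) × (ℝ × V),
        (φ p.1 * (starRingEnd ℂ) (ψ p.2)) * invFourier m (p.1 - p.2) := by
  let G (ζ : ℝ × V) (p : (ℝ × V) × (ℝ × V)) : ℂ :=
    Circle.exp (pairing ζ (p.1 - p.2)) * (m ζ * (φ p.1 * (starRingEnd ℂ) (ψ p.2)))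
  have hG : Integrable (Function.uncurry G) (volume.prod volume) :=
    integrable_circleExp_mul (hm.mul_prod (hφ.mul_prod (integrable_conj hψ))) (by fun_prop)
  have expand : ∀ ζ, m ζ * (invFourier φ ζ * (starRingEnd ℂ) (invFourier ψ ζ)) = ∫ p, G ζ p := by
    intro ζ
    rw [invFourier, invFourier, ← integral_conj, Measure.volume_eq_prod (ℝ × V) (ℝ × V),
      ← integral_prod_mul, ← integral_const_mul]
    refine integral_congr_ae (Eventually.of_forall fun p => ?_)
    simp only [G, pairing_sub_right, sub_eq_add_neg (pairing _ _), coe_circleExp_add, map_mul,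
      conj_circleExp]
    ring
  simp_rw [expand]
  rw [integral_integral_swap hG]
  refine integral_congr_ae (Eventually.of_forall fun p => ?_)
  simp only [G, invFourier]
  rw [← integral_const_mul]
  refine integral_congr_ae (Eventually.of_forall fun ζ => ?_)
  simp only [pairing_comm ζ]
  ring

theorem enorm_integral_mul_invFourier_mul_conj_le {m φ ψ : ℝ × V → ℂ}
    (hm : Integrable m) (hφ : Integrable φ) (hψ : Integrable ψ) :
    ‖∫ ζ, m ζ * (invFourier φ ζ * (starRingEnd ℂ) (invFourier ψ ζ))‖ₑ ≤
      ∫⁻ x, ∫⁻ y, ‖invFourier m (x - y)‖ₑ * (‖φ x‖ₑ * ‖ψ y‖ₑ) := by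
  have hmeas : AEStronglyMeasurable (fun p : (ℝ × V) × (ℝ × V) =>
      (φ p.1 * (starRingEnd ℂ) (ψ p.2)) * invFourier m (p.1 - p.2)) (volume.prod volume) :=
    (hφ.mul_prod (integrable_conj hψ)).aestronglyMeasurable.mul
      ((continuous_invFourier hm).comp (by fun_prop)).aestronglyMeasurable
  rw [integral_mul_invFourier_mul_conj hm hφ hψ]
  refine (enorm_integral_le_lintegral_enorm _).trans_eq ?_
  rw [Measure.volume_eq_prod (ℝ × V) (ℝ × V), lintegral_prod _ hmeas.enorm]
  refine lintegral_congr fun x => lintegral_congr fun y => ?_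
  simp only [enorm_mul, RCLike.enorm_conj]
  ring

/-! ### Gaussian summability and Plancherel's inequality -/

theorem integrable_exp_neg_mul_sq_norm {ε : ℝ} (hε : 0 < ε) :
    Integrable fun v : V => Real.exp (-ε * ‖v‖ ^ 2) := by
  refine (GaussianFourier.integrable_cexp_neg_mul_sq_norm_add (V := V) (b := (ε : ℂ))
    (by simpa using hε) 0 0).norm.congr (Eventually.of_forall fun v => ?_)
  simp only [Complex.norm_exp, zero_mul, add_zero]
  norm_cast

theorem integrable_gaussian {ε : ℝ} (hε : 0 < ε) : Integrable (gaussian (V := V) ε) :=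
  ((integrable_exp_neg_mul_sq_norm (V := ℝ) hε).mul_prod
    (integrable_exp_neg_mul_sq_norm (V := V) hε)).congr
      (Eventually.of_forall fun z => (gaussian_eq_mul ε z).symm)

theorem integral_gaussian {ε : ℝ} (hε : 0 < ε) :
    ∫ z : ℝ × V, gaussian ε z = (Real.pi / ε) ^ ((1 + Module.finrank ℝ V : ℝ) / 2) := by
  simp_rw [gaussian_eq_mul]
  rw [Measure.volume_eq_prod, integral_prod_mul (fun x : ℝ => Real.exp (-ε * ‖x‖ ^ 2))
    (fun v : V => Real.exp (-ε * ‖v‖ ^ 2)), GaussianFourier.integral_rexp_neg_mul_sq_norm hε,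
    GaussianFourier.integral_rexp_neg_mul_sq_norm hε, ← Real.rpow_add (by positivity),
    Module.finrank_self]
  push_cast
  ring_nf

theorem integral_circleExp_mul_exp_neg_mul_sq_norm {ε : ℝ} (hε : 0 < ε) (w : V) :
    ∫ v : V, (Circle.exp (inner ℝ w v) : ℂ) * (Real.exp (-ε * ‖v‖ ^ 2) : ℂ) =
      ((Real.pi / ε) ^ ((Module.finrank ℝ V : ℝ) / 2) *
        Real.exp (-(1 / (4 * ε)) * ‖w‖ ^ 2) : ℝ) := by
  convert GaussianFourier.integral_cexp_neg_mul_sq_norm_add (V := V) (b := (ε : ℂ))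
    (by simpa using hε) Complex.I w using 1
  · refine integral_congr_ae (Eventually.of_forall fun v => ?_)
    simp only [Circle.coe_exp, Complex.ofReal_exp, ← Complex.exp_add]
    push_cast
    ring_nf
  · rw [Complex.ofReal_mul, Complex.ofReal_cpow (by positivity), Complex.ofReal_exp, Complex.I_sq]
    push_cast
    ring_nf

theorem invFourier_gaussian {ε : ℝ} (hε : 0 < ε) (ζ : ℝ × V) :
    invFourier (fun z => (gaussian ε z : ℂ)) ζ = gaussianHat ε ζ := by
  have split : ∀ z : ℝ × V, (Circle.exp (pairing ζ z) : ℂ) * (gaussian ε z : ℂ) =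
      ((Circle.exp (inner ℝ ζ.1 z.1) : ℂ) * (Real.exp (-ε * ‖z.1‖ ^ 2) : ℂ)) *
        ((Circle.exp (inner ℝ ζ.2 z.2) : ℂ) * (Real.exp (-ε * ‖z.2‖ ^ 2) : ℂ)) := by
    intro z
    rw [gaussian_eq_mul, pairing, coe_circleExp_add]
    simp only [RCLike.inner_apply, conj_trivial, mul_comm z.1]
    push_cast
    ring
  simp_rw [invFourier, split]
  rw [Measure.volume_eq_prod, integral_prod_mul
    (fun x : ℝ => (Circle.exp (inner ℝ ζ.1 x) : ℂ) * (Real.exp (-ε * ‖x‖ ^ 2) : ℂ))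
    (fun v : V => (Circle.exp (inner ℝ ζ.2 v) : ℂ) * (Real.exp (-ε * ‖v‖ ^ 2) : ℂ)),
    integral_circleExp_mul_exp_neg_mul_sq_norm hε, integral_circleExp_mul_exp_neg_mul_sq_norm hε,
    ← Complex.ofReal_mul, gaussianHat, gaussian_eq_mul, mul_mul_mul_comm,
    ← Real.rpow_add (by positivity), Module.finrank_self, Nat.cast_one, ← add_div]

theorem integrable_gaussianHat {ε : ℝ} (hε : 0 < ε) : Integrable (gaussianHat (V := V) ε) :=
  (integrable_gaussian (by positivity)).const_mul _

theorem integral_gaussianHat {ε : ℝ} (hε : 0 < ε) :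
    ∫ z : ℝ × V, gaussianHat ε z = (2 * Real.pi) ^ (Module.finrank ℝ V + 1) := by
  have hsq : Real.pi / ε * (Real.pi / (1 / (4 * ε))) = (2 * Real.pi) ^ (2 : ℝ) := by
    rw [Real.rpow_two]
    field_simp
    ring
  simp only [gaussianHat]
  rw [integral_const_mul, integral_gaussian (by positivity),
    ← Real.mul_rpow (by positivity) (by positivity), hsq, ← Real.rpow_mul (by positivity),
    mul_div_cancel₀ _ two_ne_zero, ← Real.rpow_natCast]
  push_cast
  rw [add_comm]

theorem lintegral_gaussianHat {ε : ℝ} (hε : 0 < ε) :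
    ∫⁻ z : ℝ × V, ENNReal.ofReal (gaussianHat ε z) =
      ENNReal.ofReal ((2 * Real.pi) ^ (Module.finrank ℝ V + 1)) := by
  rw [← integral_gaussianHat hε, ofReal_integral_eq_lintegral_ofReal (integrable_gaussianHat hε)
    (Eventually.of_forall (gaussianHat_nonneg hε))]

theorem lintegral_gaussian_mul_invFourier_sq {g : ℝ × V → ℂ} (hg : Integrable g) {ε : ℝ}
    (hε : 0 < ε) :
    ∫⁻ z, ENNReal.ofReal (gaussian ε z) * ‖invFourier g z‖ₑ ^ 2 =
      ‖∫ ζ, (gaussian ε ζ : ℂ) * (invFourier g ζ * (starRingEnd ℂ) (invFourier g ζ))‖ₑ := by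
  have hcont := continuous_invFourier hg
  have hnonneg : ∀ ζ : ℝ × V, 0 ≤ gaussian ε ζ * ‖invFourier g ζ‖ ^ 2 := fun ζ =>
    mul_nonneg (gaussian_pos ε ζ).le (by positivity)
  have hinteg : Integrable fun ζ : ℝ × V => gaussian ε ζ * ‖invFourier g ζ‖ ^ 2 := by
    refine (integrable_gaussian hε).mul_bdd (c := (∫ ζ, ‖g ζ‖) ^ 2) (by fun_prop)
      (Eventually.of_forall fun z => ?_)
    rw [norm_pow, norm_norm]
    gcongr
    exact norm_invFourier_le g z
  have hreal : ∀ ζ : ℝ × V, (gaussian ε ζ : ℂ) * (invFourier g ζ * (starRingEnd ℂ) (invFourier g ζ))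
      = ((gaussian ε ζ * ‖invFourier g ζ‖ ^ 2 : ℝ) : ℂ) := by
    intro ζ
    rw [Complex.mul_conj, Complex.normSq_eq_norm_sq, ← Complex.ofReal_mul]
  simp_rw [hreal]
  rw [integral_complex_ofReal, ← ofReal_norm, Complex.norm_real,
    Real.norm_of_nonneg (integral_nonneg hnonneg),
    ofReal_integral_eq_lintegral_ofReal hinteg (Eventually.of_forall hnonneg)]
  refine lintegral_congr fun z => ?_
  rw [ENNReal.ofReal_mul (gaussian_pos ε z).le, ENNReal.ofReal_pow (norm_nonneg _), ofReal_norm]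

theorem lintegral_gaussian_mul_invFourier_sq_le {g : ℝ × V → ℂ} (hg : Integrable g)
    (hgm : Measurable g) {ε : ℝ} (hε : 0 < ε) :
    ∫⁻ z, ENNReal.ofReal (gaussian ε z) * ‖invFourier g z‖ₑ ^ 2 ≤
      ENNReal.ofReal ((2 * Real.pi) ^ (Module.finrank ℝ V + 1)) * ∫⁻ z, ‖g z‖ₑ ^ 2 := by
  rw [lintegral_gaussian_mul_invFourier_sq hg hε]
  refine (enorm_integral_mul_invFourier_mul_conj_le (m := fun z => (gaussian ε z : ℂ))
    (integrable_gaussian hε).ofReal hg hg).trans ?_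
  have henorm : ∀ z : ℝ × V, ‖invFourier (fun z => (gaussian ε z : ℂ)) z‖ₑ =
      ENNReal.ofReal (gaussianHat ε z) := fun z => by
    rw [invFourier_gaussian hε, ← ofReal_norm, Complex.norm_real,
      Real.norm_of_nonneg (gaussianHat_nonneg hε z)]
  simp_rw [henorm]
  have schur := two_mul_lintegral_convolution_le (volume : Measure (ℝ × V))
    (k := fun z => ENNReal.ofReal (gaussianHat ε z)) (a := fun z => ‖g z‖ₑ) (b := fun z => ‖g z‖ₑ)
    (by fun_prop) (by fun_prop) (by fun_prop)
  rw [lintegral_gaussianHat hε, ← two_mul, mul_left_comm] at schur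
  exact (ENNReal.mul_le_mul_iff_right two_ne_zero ENNReal.ofNat_ne_top).1 schur

theorem lintegral_invFourier_sq_le {g : ℝ × V → ℂ} (hg : Integrable g) :
    ∫⁻ z, ‖invFourier g z‖ₑ ^ 2 ≤
      ENNReal.ofReal ((2 * Real.pi) ^ (Module.finrank ℝ V + 1)) * ∫⁻ z, ‖g z‖ₑ ^ 2 := by
  wlog hgm : Measurable g generalizing g
  · have hae := hg.aestronglyMeasurable.ae_eq_mk
    have hinv : invFourier (hg.aestronglyMeasurable.mk g) = invFourier g := funext fun z =>
      integral_congr_ae (hae.mono fun ζ hζ => by simp only [hζ])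
    have hsq : ∫⁻ z, ‖hg.aestronglyMeasurable.mk g z‖ₑ ^ 2 = ∫⁻ z, ‖g z‖ₑ ^ 2 :=
      lintegral_congr_ae (hae.mono fun ζ hζ => by simp only [hζ])
    rw [← hinv, ← hsq]
    exact this (hg.congr hae) hg.aestronglyMeasurable.measurable_mk
  have hcont := continuous_invFourier hg
  have hlim : ∀ z, Tendsto (fun n : ℕ => ENNReal.ofReal (gaussian (1 / ((n : ℝ) + 1)) z) *
      ‖invFourier g z‖ₑ ^ 2) atTop (nhds (‖invFourier g z‖ₑ ^ 2)) := fun z => by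
    simpa using ENNReal.Tendsto.mul_const (b := ‖invFourier g z‖ₑ ^ 2)
      (ENNReal.tendsto_ofReal (tendsto_gaussian_one z)) (by simp)
  refine lintegral_le_of_tendsto (fun n => ?_) hlim
    fun n => lintegral_gaussian_mul_invFourier_sq_le hg hgm (by positivity)
  fun_prop

end Fourier

/-! ### Van der Corput's second derivative test -/

/-- A bounded substitute for `1 / v` with `δ` as the cut-off: dividing by the derivative of the
phase is what integrates an oscillation by parts, and this quotient makes sense at stationary
points, too. -/
def regInv (δ v : ℝ) : ℝ := v / (δ ^ 2 + v ^ 2)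

section VanDerCorput

variable {δ : ℝ}

theorem one_sub_regInv_mul (hδ : 0 < δ) (v : ℝ) :
    1 - regInv δ v * v = δ ^ 2 / (δ ^ 2 + v ^ 2) := by
  rw [regInv]
  field_simp
  ring

theorem abs_regInv_le (hδ : 0 < δ) (v : ℝ) : |regInv δ v| ≤ 1 / (2 * δ) := by
  have hpos : 0 < δ ^ 2 + v ^ 2 := by positivity
  rw [regInv, abs_div, abs_of_pos hpos, div_le_div_iff₀ hpos (by positivity)]
  nlinarith [sq_nonneg (δ - |v|), sq_abs v]

theorem hasDerivAt_regInv (hδ : 0 < δ) (v : ℝ) :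
    HasDerivAt (regInv δ) ((δ ^ 2 - v ^ 2) / (δ ^ 2 + v ^ 2) ^ 2) v := by
  have hpos : 0 < δ ^ 2 + v ^ 2 := by positivity
  refine ((hasDerivAt_id v).div ((hasDerivAt_pow 2 v).const_add (δ ^ 2)) hpos.ne').congr_deriv ?_
  simp only [id]
  ring

theorem abs_deriv_regInv_le (hδ : 0 < δ) (v : ℝ) :
    |(δ ^ 2 - v ^ 2) / (δ ^ 2 + v ^ 2) ^ 2| ≤ 1 / (δ ^ 2 + v ^ 2) := by
  have hpos : 0 < δ ^ 2 + v ^ 2 := by positivity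
  rw [abs_div, abs_of_pos (pow_pos hpos 2), div_le_div_iff₀ (pow_pos hpos 2) hpos, one_mul,
    sq (δ ^ 2 + v ^ 2)]
  gcongr
  rw [abs_le]
  constructor <;> nlinarith [sq_nonneg δ, sq_nonneg v]

variable {φ φ' φ'' A A' : ℝ → ℝ} {ξ : ℝ}

/-- What is left of the integrand `A e^{iφ}` after one regularised integration by parts. -/
def vdcRemainder (δ : ℝ) (φ φ' φ'' A A' : ℝ → ℝ) (ξ : ℝ) : ℂ :=
  ((A ξ * (δ ^ 2 / (δ ^ 2 + φ' ξ ^ 2)) : ℝ) + Complex.I *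
    ((A' ξ * regInv δ (φ' ξ) +
      A ξ * ((δ ^ 2 - φ' ξ ^ 2) / (δ ^ 2 + φ' ξ ^ 2) ^ 2 * φ'' ξ) : ℝ) : ℂ)) * Circle.exp (φ ξ)

theorem hasDerivAt_coe_circleExp (hφ : HasDerivAt φ (φ' ξ) ξ) :
    HasDerivAt (fun ξ => (Circle.exp (φ ξ) : ℂ)) (Complex.I * φ' ξ * Circle.exp (φ ξ)) ξ := by
  simp only [Circle.coe_exp]
  refine (hφ.ofReal_comp.mul_const Complex.I).cexp.congr_deriv ?_
  ring

theorem hasDerivAt_vdc_corrector (hδ : 0 < δ) (hφ : HasDerivAt φ (φ' ξ) ξ)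
    (hφ' : HasDerivAt φ' (φ'' ξ) ξ) (hA : HasDerivAt A (A' ξ) ξ) :
    HasDerivAt (fun ξ => Complex.I * ((A ξ * regInv δ (φ' ξ) : ℝ) : ℂ) * Circle.exp (φ ξ))
      (vdcRemainder δ φ φ' φ'' A A' ξ - Circle.exp (φ ξ) * A ξ) ξ := by
  have hAr := hA.mul ((hasDerivAt_regInv hδ (φ' ξ)).comp ξ hφ')
  refine ((hAr.ofReal_comp.const_mul Complex.I).mul
    (hasDerivAt_coe_circleExp hφ)).congr_deriv ?_
  rw [vdcRemainder, ← one_sub_regInv_mul hδ]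
  simp only [Pi.mul_apply, Function.comp_apply, Complex.ofReal_add, Complex.ofReal_mul,
    Complex.ofReal_sub, Complex.ofReal_one]
  linear_combination (A ξ * regInv δ (φ' ξ) * φ' ξ * Circle.exp (φ ξ) : ℂ) * Complex.I_sq

theorem norm_vdcRemainder_le {M M' : ℝ} (hδ : 0 < δ) (hφ'' : δ ^ 2 ≤ φ'' ξ) (hA : |A ξ| ≤ M)
    (hA' : |A' ξ| ≤ M') :
    ‖vdcRemainder δ φ φ' φ'' A A' ξ‖ ≤
      M' / (2 * δ) + 2 * M * (φ'' ξ / (δ ^ 2 + φ' ξ ^ 2)) := by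
  have hφ''_nonneg : 0 ≤ φ'' ξ := (sq_nonneg δ).trans hφ''
  have hM : 0 ≤ M := (abs_nonneg _).trans hA
  have hM' : 0 ≤ M' := (abs_nonneg _).trans hA'
  have main_term : |A ξ * (δ ^ 2 / (δ ^ 2 + φ' ξ ^ 2))| ≤ M * (φ'' ξ / (δ ^ 2 + φ' ξ ^ 2)) := by
    rw [abs_mul, abs_of_nonneg (by positivity : 0 ≤ δ ^ 2 / (δ ^ 2 + φ' ξ ^ 2))]
    gcongr
  have amplitude_term : |A' ξ * regInv δ (φ' ξ)| ≤ M' * (1 / (2 * δ)) := by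
    rw [abs_mul]
    gcongr
    exact abs_regInv_le hδ _
  have phase_term : |A ξ * ((δ ^ 2 - φ' ξ ^ 2) / (δ ^ 2 + φ' ξ ^ 2) ^ 2 * φ'' ξ)| ≤
      M * (1 / (δ ^ 2 + φ' ξ ^ 2) * φ'' ξ) := by
    rw [abs_mul, abs_mul, abs_of_nonneg hφ''_nonneg]
    gcongr
    exact abs_deriv_regInv_le hδ _
  rw [vdcRemainder, norm_mul, Circle.norm_coe, mul_one]
  refine (norm_add_le _ _).trans ?_
  rw [norm_mul, Complex.norm_I, one_mul, Complex.norm_real, Complex.norm_real, Real.norm_eq_abs,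
    Real.norm_eq_abs]
  calc _ ≤ M * (φ'' ξ / (δ ^ 2 + φ' ξ ^ 2)) + (M' * (1 / (2 * δ)) +
        M * (1 / (δ ^ 2 + φ' ξ ^ 2) * φ'' ξ)) :=
        add_le_add main_term ((abs_add_le _ _).trans (add_le_add amplitude_term phase_term))
    _ = _ := by ring

theorem integral_deriv_div_sq_add_sq_le {α β : ℝ} (hαβ : α ≤ β) (hδ : 0 < δ)
    (hφ' : ∀ ξ ∈ Set.Icc α β, HasDerivAt φ' (φ'' ξ) ξ) (hφ''c : ContinuousOn φ'' (Set.Icc α β)) :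
    ∫ ξ in α..β, φ'' ξ / (δ ^ 2 + φ' ξ ^ 2) ≤ Real.pi / δ := by
  have hderiv : ∀ ξ ∈ Set.uIcc α β,
      HasDerivAt (fun ξ => 1 / δ * Real.arctan (φ' ξ / δ)) (φ'' ξ / (δ ^ 2 + φ' ξ ^ 2)) ξ := by
    intro ξ hξ
    rw [Set.uIcc_of_le hαβ] at hξ
    refine (((hφ' ξ hξ).div_const δ).arctan.const_mul (1 / δ)).congr_deriv ?_
    field_simp
  have hφ'c : ContinuousOn φ' (Set.Icc α β) := fun ξ hξ =>
    (hφ' ξ hξ).continuousAt.continuousWithinAt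
  rw [intervalIntegral.integral_eq_sub_of_hasDerivAt hderiv
    ((hφ''c.div (by fun_prop) fun ξ _ => by positivity).intervalIntegrable_of_Icc hαβ),
    ← mul_sub, div_mul_eq_mul_div, one_mul]
  gcongr
  linarith [Real.arctan_lt_pi_div_two (φ' β / δ), Real.neg_pi_div_two_lt_arctan (φ' α / δ)]

theorem norm_integral_vdcRemainder_le {α β M M' : ℝ} (hαβ : α ≤ β) (hδ : 0 < δ)
    (hφ' : ∀ ξ ∈ Set.Icc α β, HasDerivAt φ' (φ'' ξ) ξ) (hφ''c : ContinuousOn φ'' (Set.Icc α β))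
    (hφ'' : ∀ ξ ∈ Set.Icc α β, δ ^ 2 ≤ φ'' ξ)
    (hM : ∀ ξ ∈ Set.Icc α β, |A ξ| ≤ M) (hM' : ∀ ξ ∈ Set.Icc α β, |A' ξ| ≤ M') :
    ‖∫ ξ in α..β, vdcRemainder δ φ φ' φ'' A A' ξ‖ ≤
      (β - α) * (M' / (2 * δ)) + 2 * M * (Real.pi / δ) := by
  have hM0 : 0 ≤ M := (abs_nonneg _).trans (hM α (Set.left_mem_Icc.2 hαβ))
  have hφ'c : ContinuousOn φ' (Set.Icc α β) := HasDerivAt.continuousOn hφ'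
  have hquot : ContinuousOn (fun ξ => φ'' ξ / (δ ^ 2 + φ' ξ ^ 2)) (Set.Icc α β) :=
    hφ''c.div (by fun_prop) fun ξ _ => by positivity
  calc _ ≤ ∫ ξ in α..β, (M' / (2 * δ) + 2 * M * (φ'' ξ / (δ ^ 2 + φ' ξ ^ 2))) := by
        refine intervalIntegral.norm_integral_le_of_norm_le hαβ
          (Eventually.of_forall fun ξ hξ => ?_) ?_
        · have hξ' := Set.Ioc_subset_Icc_self hξ
          exact norm_vdcRemainder_le hδ (hφ'' ξ hξ') (hM ξ hξ') (hM' ξ hξ')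
        · exact (continuousOn_const.add
            (continuousOn_const.mul hquot)).intervalIntegrable_of_Icc hαβ
    _ ≤ _ := by
        rw [intervalIntegral.integral_add intervalIntegrable_const
          ((hquot.intervalIntegrable_of_Icc hαβ).const_mul _), intervalIntegral.integral_const,
          intervalIntegral.integral_const_mul, smul_eq_mul]
        gcongr
        exact integral_deriv_div_sq_add_sq_le hαβ hδ hφ' hφ''c

theorem integral_circleExp_mul_eq_vdcRemainder_sub {α β : ℝ} (hαβ : α ≤ β) (hδ : 0 < δ)
    (hφ : ∀ ξ ∈ Set.Icc α β, HasDerivAt φ (φ' ξ) ξ)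
    (hφ' : ∀ ξ ∈ Set.Icc α β, HasDerivAt φ' (φ'' ξ) ξ) (hφ''c : ContinuousOn φ'' (Set.Icc α β))
    (hA : ∀ ξ ∈ Set.Icc α β, HasDerivAt A (A' ξ) ξ) (hA'c : ContinuousOn A' (Set.Icc α β)) :
    ∫ ξ in α..β, (Circle.exp (φ ξ) : ℂ) * A ξ =
      (∫ ξ in α..β, vdcRemainder δ φ φ' φ'' A A' ξ) -
        (Complex.I * ((A β * regInv δ (φ' β) : ℝ) : ℂ) * Circle.exp (φ β) -
          Complex.I * ((A α * regInv δ (φ' α) : ℝ) : ℂ) * Circle.exp (φ α)) := by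
  have hφ'c : ContinuousOn φ' (Set.Icc α β) := HasDerivAt.continuousOn hφ'
  have hAc : ContinuousOn A (Set.Icc α β) := HasDerivAt.continuousOn hA
  have hexp : ContinuousOn (fun ξ => (Circle.exp (φ ξ) : ℂ)) (Set.Icc α β) :=
    (by fun_prop : Continuous fun r : ℝ => (Circle.exp r : ℂ)).comp_continuousOn
      (HasDerivAt.continuousOn hφ)
  have hinteg : IntervalIntegrable (fun ξ => (Circle.exp (φ ξ) : ℂ) * A ξ) volume α β :=
    (hexp.mul (Complex.continuous_ofReal.comp_continuousOn hAc)).intervalIntegrable_of_Icc hαβ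
  have hR : IntervalIntegrable (vdcRemainder δ φ φ' φ'' A A') volume α β := by
    refine ContinuousOn.intervalIntegrable_of_Icc hαβ ?_
    unfold vdcRemainder regInv
    refine ContinuousOn.mul (ContinuousOn.add ?_ (continuousOn_const.mul ?_)) hexp <;>
      refine Complex.continuous_ofReal.comp_continuousOn ?_ <;>
      fun_prop (disch := intros; positivity)
  have ftc := intervalIntegral.integral_eq_sub_of_hasDerivAt
    (fun ξ hξ => by
      rw [Set.uIcc_of_le hαβ] at hξ
      exact hasDerivAt_vdc_corrector hδ (hφ ξ hξ) (hφ' ξ hξ) (hA ξ hξ)) (hR.sub hinteg)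
  rw [← ftc, intervalIntegral.integral_sub hR hinteg, sub_sub_cancel]

theorem norm_integral_circleExp_mul_le {α β Λ M M' : ℝ} (hαβ : α ≤ β) (hΛ : 0 < Λ)
    (hφ : ∀ ξ ∈ Set.Icc α β, HasDerivAt φ (φ' ξ) ξ)
    (hφ' : ∀ ξ ∈ Set.Icc α β, HasDerivAt φ' (φ'' ξ) ξ) (hφ''c : ContinuousOn φ'' (Set.Icc α β))
    (hφ'' : ∀ ξ ∈ Set.Icc α β, Λ ≤ φ'' ξ)
    (hA : ∀ ξ ∈ Set.Icc α β, HasDerivAt A (A' ξ) ξ) (hA'c : ContinuousOn A' (Set.Icc α β))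
    (hM : ∀ ξ ∈ Set.Icc α β, |A ξ| ≤ M) (hM' : ∀ ξ ∈ Set.Icc α β, |A' ξ| ≤ M') :
    ‖∫ ξ in α..β, (Circle.exp (φ ξ) : ℂ) * A ξ‖ ≤ (8 * M + M' * (β - α)) / Real.sqrt Λ := by
  set δ := Real.sqrt Λ
  have hδ : 0 < δ := Real.sqrt_pos.2 hΛ
  have hδ2 : δ ^ 2 = Λ := Real.sq_sqrt hΛ.le
  have hα : α ∈ Set.Icc α β := Set.left_mem_Icc.2 hαβ
  have hM0 : 0 ≤ M := (abs_nonneg _).trans (hM α hα)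
  have hM'0 : 0 ≤ M' := (abs_nonneg _).trans (hM' α hα)
  have boundary_le : ∀ ξ ∈ Set.Icc α β,
      ‖Complex.I * ((A ξ * regInv δ (φ' ξ) : ℝ) : ℂ) * Circle.exp (φ ξ)‖ ≤ M * (1 / (2 * δ)) :=
    fun ξ hξ => by
      simp only [norm_mul, Complex.norm_I, Circle.norm_coe, Complex.norm_real, Real.norm_eq_abs,
        one_mul, mul_one]
      gcongr
      exacts [hM ξ hξ, abs_regInv_le hδ _]
  rw [integral_circleExp_mul_eq_vdcRemainder_sub hαβ hδ hφ hφ' hφ''c hA hA'c]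
  calc _ ≤ ((β - α) * (M' / (2 * δ)) + 2 * M * (Real.pi / δ)) +
        (M * (1 / (2 * δ)) + M * (1 / (2 * δ))) := by
        refine (norm_sub_le _ _).trans (add_le_add
          (norm_integral_vdcRemainder_le hαβ hδ hφ' hφ''c
            (fun ξ hξ => hδ2.trans_le (hφ'' ξ hξ)) hM hM')
          ((norm_sub_le _ _).trans (add_le_add (boundary_le β ?_) (boundary_le α hα))))
        exact Set.right_mem_Icc.2 hαβ
    _ = ((2 * Real.pi + 1) * M + M' * (β - α) / 2) / δ := by field_simp; ring
    _ ≤ (8 * M + M' * (β - α)) / δ := by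
        have := mul_nonneg hM'0 (sub_nonneg.2 hαβ)
        gcongr
        · linarith [Real.pi_lt_d2]
        · linarith

theorem norm_integral_cubic_circleExp_le_of_pos {a τ c : ℝ} (ha : 0 < a) (hτ : 0 < τ)
    (hc : 0 ≤ c) (b : ℝ) :
    ‖∫ ξ in a..(4 * a), (Circle.exp (τ * ξ ^ 3 + b * ξ) : ℂ) * (ξ * Real.exp (-c * ξ) : ℝ)‖ ≤
      15 * Real.sqrt (a / τ) := by
  have hφ : ∀ ξ ∈ Set.Icc a (4 * a),
      HasDerivAt (fun ξ => τ * ξ ^ 3 + b * ξ) (3 * τ * ξ ^ 2 + b) ξ := fun ξ _ =>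
    (((hasDerivAt_pow 3 ξ).const_mul τ).add ((hasDerivAt_id ξ).const_mul b)).congr_deriv
      (by push_cast; ring)
  have hφ' : ∀ ξ ∈ Set.Icc a (4 * a),
      HasDerivAt (fun ξ => 3 * τ * ξ ^ 2 + b) (6 * τ * ξ) ξ := fun ξ _ =>
    (((hasDerivAt_pow 2 ξ).const_mul (3 * τ)).add_const b).congr_deriv (by push_cast; ring)
  have hA : ∀ ξ ∈ Set.Icc a (4 * a),
      HasDerivAt (fun ξ => ξ * Real.exp (-c * ξ)) ((1 - c * ξ) * Real.exp (-c * ξ)) ξ :=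
    fun ξ _ => ((hasDerivAt_id ξ).mul ((hasDerivAt_id ξ).const_mul (-c)).exp).congr_deriv
      (by simp only [id]; ring)
  have hM : ∀ ξ ∈ Set.Icc a (4 * a), |ξ * Real.exp (-c * ξ)| ≤ 4 * a := fun ξ hξ => by
    have hξ0 : 0 ≤ ξ := ha.le.trans hξ.1
    rw [abs_of_nonneg (by positivity)]
    refine (mul_le_of_le_one_right hξ0 (Real.exp_le_one_iff.2 ?_)).trans hξ.2
    nlinarith
  have hM' : ∀ ξ ∈ Set.Icc a (4 * a), |(1 - c * ξ) * Real.exp (-c * ξ)| ≤ 1 := fun ξ hξ => by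
    have hcξ : 0 ≤ c * ξ := mul_nonneg hc (ha.le.trans hξ.1)
    rw [abs_mul, Real.abs_exp, neg_mul, Real.exp_neg, ← div_eq_mul_inv,
      div_le_one (Real.exp_pos _), abs_le]
    constructor <;> linarith [Real.add_one_le_exp (c * ξ)]
  refine (norm_integral_circleExp_mul_le (Λ := 6 * τ * a) (by linarith) (by positivity) hφ hφ'
    (by fun_prop) (fun ξ hξ => by gcongr; exact hξ.1) hA (by fun_prop) hM hM').trans ?_
  rw [div_le_iff₀ (Real.sqrt_pos.2 (by positivity)), mul_assoc, ← Real.sqrt_mul (by positivity),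
    show a / τ * (6 * τ * a) = 6 * a ^ 2 by field_simp, Real.sqrt_mul (by norm_num),
    Real.sqrt_sq ha.le]
  have : (7 : ℝ) / 3 ≤ Real.sqrt 6 := Real.le_sqrt_of_sq_le (by norm_num)
  nlinarith

theorem norm_integral_cubic_circleExp_le {a τ c : ℝ} (ha : 0 < a) (hτ : τ ≠ 0) (hc : 0 ≤ c)
    (b : ℝ) :
    ‖∫ ξ in a..(4 * a), (Circle.exp (τ * ξ ^ 3 + b * ξ) : ℂ) * (ξ * Real.exp (-c * ξ) : ℝ)‖ ≤
      15 * Real.sqrt (a / |τ|) := by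
  rcases hτ.lt_or_gt with hneg | hpos
  · rw [abs_of_neg hneg, ← RCLike.norm_conj, ← intervalIntegral.intervalIntegral_conj]
    refine le_of_eq_of_le (congrArg _ (intervalIntegral.integral_congr fun ξ _ => ?_))
      (norm_integral_cubic_circleExp_le_of_pos ha (neg_pos.2 hneg) hc (-b))
    simp only [map_mul, conj_circleExp, Complex.conj_ofReal]
    ring_nf
  · rw [abs_of_pos hpos]
    exact norm_integral_cubic_circleExp_le_of_pos ha hpos hc b

end VanDerCorput

/-! ### The dispersive estimate on a frequency block -/

@[fun_prop]
theorem measurable_omega : Measurable omega := by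
  unfold omega
  fun_prop

/-- The frequency slab `ξ ∈ [a, 4a)`, with no restriction on `η`. -/
def freqBlock (a : ℝ) : Set (ℝ × E2) := Prod.fst ⁻¹' Set.Ico a (4 * a)

theorem measurableSet_freqBlock (a : ℝ) : MeasurableSet (freqBlock a) :=
  measurable_fst measurableSet_Ico

/-- The KP-II multiplier `e^{iτω}` on a frequency block, made integrable by the damping
`e^{-ε|η|²/ξ}`, which only shifts `iτ` to `ε + iτ` in the Gaussian integral over `η`. -/
def dampedSymbol (a τ ε : ℝ) : ℝ × E2 → ℂ :=
  (freqBlock a).indicator fun ζ =>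
    (Circle.exp (τ * omega ζ) : ℂ) * (Real.exp (-ε * (‖ζ.2‖ ^ 2 / ζ.1)) : ℝ)

section Dispersive

variable {a τ ε : ℝ}

theorem measurable_dampedSymbol (a τ ε : ℝ) : Measurable (dampedSymbol a τ ε) :=
  Measurable.indicator (by fun_prop) (measurableSet_freqBlock a)

theorem norm_dampedSymbol_of_mem {ζ : ℝ × E2} (hζ : ζ ∈ freqBlock a) :
    ‖dampedSymbol a τ ε ζ‖ = Real.exp (-ε * (‖ζ.2‖ ^ 2 / ζ.1)) := by
  rw [dampedSymbol, Set.indicator_of_mem hζ, norm_mul, Circle.norm_coe, Complex.norm_real,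
    Real.norm_of_nonneg (Real.exp_pos _).le, one_mul]

theorem dampedSymbol_of_notMem {ζ : ℝ × E2} (hζ : ζ ∉ freqBlock a) : dampedSymbol a τ ε ζ = 0 :=
  Set.indicator_of_notMem hζ _

theorem norm_dampedSymbol_le_one (ha : 0 < a) (hε : 0 ≤ ε) (ζ : ℝ × E2) :
    ‖dampedSymbol a τ ε ζ‖ ≤ 1 := by
  by_cases hζ : ζ ∈ freqBlock a
  · have hξ : 0 < ζ.1 := ha.trans_le hζ.1
    rw [norm_dampedSymbol_of_mem hζ, Real.exp_le_one_iff, neg_mul, neg_nonpos]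
    positivity
  · simp [dampedSymbol_of_notMem hζ]

theorem integrable_dampedSymbol (ha : 0 < a) (τ : ℝ) (hε : 0 < ε) :
    Integrable (dampedSymbol a τ ε) := by
  have hslab : Integrable ((Set.Ico a (4 * a)).indicator fun _ => (1 : ℝ)) := by
    rw [integrable_indicator_iff measurableSet_Ico]
    simp
  refine (hslab.mul_prod (integrable_exp_neg_mul_sq_norm (V := E2)
    (by positivity : 0 < ε / (4 * a)))).mono' (measurable_dampedSymbol a τ ε).aestronglyMeasurable
      (Eventually.of_forall fun ζ => ?_)
  by_cases hζ : ζ ∈ freqBlock a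
  · have hζ' : ζ.1 ∈ Set.Ico a (4 * a) := hζ
    have hξ : 0 < ζ.1 := ha.trans_le hζ'.1
    rw [norm_dampedSymbol_of_mem hζ, Set.indicator_of_mem hζ', one_mul, Real.exp_le_exp, neg_mul,
      neg_mul, neg_le_neg_iff, div_mul_eq_mul_div, mul_div_assoc]
    gcongr
    exact hζ'.2.le
  · rw [dampedSymbol_of_notMem hζ, norm_zero]
    exact mul_nonneg (Set.indicator_nonneg (fun _ _ => zero_le_one) _) (Real.exp_pos _).le

theorem ofReal_add_I_mul_ofReal_ne_zero (hε : 0 < ε) (τ : ℝ) : (ε : ℂ) + Complex.I * τ ≠ 0 :=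
  fun h => hε.ne' (by simpa using congrArg Complex.re h)

theorem circleExp_mul_cexp_complete_square (hε : 0 < ε) (τ p v x ξ : ℝ) :
    (Circle.exp (p + x * ξ) : ℂ) *
        Complex.exp (Complex.I ^ 2 * v ^ 2 / (4 * (((ε : ℂ) + Complex.I * τ) / ξ))) =
      Circle.exp (p + (x + τ * v ^ 2 / (4 * (ε ^ 2 + τ ^ 2))) * ξ) *
        (Real.exp (-(ε * v ^ 2 / (4 * (ε ^ 2 + τ ^ 2))) * ξ) : ℝ) := by
  have hb : (ε : ℂ) + Complex.I * τ ≠ 0 := ofReal_add_I_mul_ofReal_ne_zero hε τ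
  have hconj : (ε : ℂ) - Complex.I * τ ≠ 0 := by
    simpa [sub_eq_add_neg] using ofReal_add_I_mul_ofReal_ne_zero hε (-τ)
  have hprod : (ε : ℂ) ^ 2 + (τ : ℂ) ^ 2 = (ε + Complex.I * τ) * (ε - Complex.I * τ) := by
    linear_combination ((τ : ℂ) ^ 2) * Complex.I_sq
  simp only [Circle.coe_exp, Complex.ofReal_exp, ← Complex.exp_add]
  push_cast
  congr 1
  rw [hprod, Complex.I_sq]
  field_simp
  ring

/-- Fresnel's integral in `η`: two transverse dimensions produce exactly one power of `ξ / τ`. -/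
theorem integral_circleExp_mul_dampedSymbol (ha : 0 < a) (hε : 0 < ε) (z : ℝ × E2) {ξ : ℝ}
    (hξ : ξ ∈ Set.Ico a (4 * a)) :
    ∫ η : E2, (Circle.exp (pairing z (ξ, η)) : ℂ) * dampedSymbol a τ ε (ξ, η) =
      Real.pi / ((ε : ℂ) + Complex.I * τ) *
        ((Circle.exp (τ * ξ ^ 3 + (z.1 + τ * ‖z.2‖ ^ 2 / (4 * (ε ^ 2 + τ ^ 2))) * ξ) : ℂ) *
          (ξ * Real.exp (-(ε * ‖z.2‖ ^ 2 / (4 * (ε ^ 2 + τ ^ 2))) * ξ) : ℝ)) := by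
  have hξ0 : 0 < ξ := ha.trans_le hξ.1
  have hξc : (ξ : ℂ) ≠ 0 := Complex.ofReal_ne_zero.2 hξ0.ne'
  set b : ℂ := (ε : ℂ) + Complex.I * τ with hb
  have gauss := GaussianFourier.integral_cexp_neg_mul_sq_norm_add (V := E2) (b := b / (ξ : ℂ))
    (by simpa [Complex.div_ofReal_re, hb] using div_pos hε hξ0) Complex.I z.2
  rw [show ((Module.finrank ℝ E2 : ℕ) : ℂ) / 2 = 1 by simp, Complex.cpow_one] at gauss
  have split : ∀ η : E2, (Circle.exp (pairing z (ξ, η)) : ℂ) * dampedSymbol a τ ε (ξ, η) =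
      Circle.exp (τ * ξ ^ 3 + z.1 * ξ) *
        Complex.exp (-(b / ξ) * ‖η‖ ^ 2 + Complex.I * (inner ℝ z.2 η : ℝ)) := fun η => by
    have hmem : ((ξ, η) : ℝ × E2) ∈ freqBlock a := hξ
    rw [dampedSymbol, Set.indicator_of_mem hmem]
    simp only [pairing, omega, Circle.coe_exp, Complex.ofReal_exp, ← Complex.exp_add, hb]
    push_cast
    congr 1
    field_simp
    ring
  simp_rw [split]
  rw [integral_const_mul, gauss, mul_left_comm, hb, circleExp_mul_cexp_complete_square hε]
  push_cast
  field_simp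

theorem invFourier_dampedSymbol (ha : 0 < a) (hε : 0 < ε) (z : ℝ × E2) :
    invFourier (dampedSymbol a τ ε) z = Real.pi / ((ε : ℂ) + Complex.I * τ) *
      ∫ ξ in a..(4 * a),
        (Circle.exp (τ * ξ ^ 3 + (z.1 + τ * ‖z.2‖ ^ 2 / (4 * (ε ^ 2 + τ ^ 2))) * ξ) : ℂ) *
          (ξ * Real.exp (-(ε * ‖z.2‖ ^ 2 / (4 * (ε ^ 2 + τ ^ 2))) * ξ) : ℝ) := by
  have hinteg : Integrable fun ζ => (Circle.exp (pairing z ζ) : ℂ) * dampedSymbol a τ ε ζ :=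
    integrable_circleExp_mul (integrable_dampedSymbol ha τ hε) (by fun_prop)
  rw [Measure.volume_eq_prod] at hinteg
  rw [invFourier, Measure.volume_eq_prod, integral_prod _ hinteg,
    intervalIntegral.integral_of_le (by linarith), ← integral_Ico_eq_integral_Ioc,
    ← integral_const_mul, ← integral_indicator measurableSet_Ico]
  refine integral_congr_ae (Eventually.of_forall fun ξ => ?_)
  by_cases hξ : ξ ∈ Set.Ico a (4 * a)
  · simp only [Set.indicator_of_mem hξ]
    exact integral_circleExp_mul_dampedSymbol ha hε z hξ
  · have : ∀ η : E2, dampedSymbol a τ ε (ξ, η) = 0 := fun η => dampedSymbol_of_notMem hξ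
    simp [Set.indicator_of_notMem hξ, this]

theorem norm_invFourier_dampedSymbol_le (ha : 0 < a) (hτ : τ ≠ 0) (hε : 0 < ε) (z : ℝ × E2) :
    ‖invFourier (dampedSymbol a τ ε) z‖ ≤ 48 * (Real.sqrt (a / |τ|) / |τ|) := by
  have : 0 < |τ| := abs_pos.2 hτ
  have fresnel_factor : ‖(Real.pi : ℂ) / ((ε : ℂ) + Complex.I * τ)‖ ≤ Real.pi / |τ| := by
    rw [norm_div, Complex.norm_real, Real.norm_of_nonneg Real.pi_pos.le]
    gcongr
    simpa using Complex.abs_im_le_norm ((ε : ℂ) + Complex.I * τ)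
  rw [invFourier_dampedSymbol ha hε, norm_mul]
  calc _ ≤ Real.pi / |τ| * (15 * Real.sqrt (a / |τ|)) := by
        gcongr
        exact norm_integral_cubic_circleExp_le ha hτ (by positivity) _
    _ = (15 * Real.pi) * (Real.sqrt (a / |τ|) / |τ|) := by ring
    _ ≤ _ := by
        gcongr
        linarith [Real.pi_lt_d2]

theorem tendsto_dampedSymbol (a τ : ℝ) (ζ : ℝ × E2) :
    Tendsto (fun n : ℕ => dampedSymbol a τ (1 / ((n : ℝ) + 1)) ζ) atTop
      (nhds ((freqBlock a).indicator (fun ζ => (Circle.exp (τ * omega ζ) : ℂ)) ζ)) := by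
  by_cases hζ : ζ ∈ freqBlock a
  · simp only [dampedSymbol, Set.indicator_of_mem hζ]
    have damping : Tendsto (fun n : ℕ => ((Real.exp (-(1 / ((n : ℝ) + 1)) * (‖ζ.2‖ ^ 2 / ζ.1)) : ℝ)
        : ℂ)) atTop (nhds ((Real.exp (-0 * (‖ζ.2‖ ^ 2 / ζ.1)) : ℝ) : ℂ)) :=
      (Complex.continuous_ofReal.tendsto _).comp ((Real.continuous_exp.tendsto _).comp
        (tendsto_one_div_add_atTop_nhds_zero_nat.neg.mul_const _))
    simpa using damping.const_mul (Circle.exp (τ * omega ζ) : ℂ)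
  · simp only [dampedSymbol_of_notMem hζ, Set.indicator_of_notMem hζ]
    exact tendsto_const_nhds

theorem memLp_two_iff_lintegral_sq_ne_top {X : Type*} [MeasurableSpace X] {μ : Measure X}
    {f : X → ℂ} (hf : AEStronglyMeasurable f μ) :
    MemLp f 2 μ ↔ ∫⁻ x, ‖f x‖ₑ ^ 2 ∂μ ≠ ∞ := by
  rw [MemLp, and_iff_right hf, eLpNorm_lt_top_iff_lintegral_rpow_enorm_lt_top (by simp) (by simp),
    lt_top_iff_ne_top]
  simp

theorem memLp_two_invFourier {V : Type*} [NormedAddCommGroup V] [InnerProductSpace ℝ V]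
    [FiniteDimensional ℝ V] [MeasurableSpace V] [BorelSpace V] {g : ℝ × V → ℂ}
    (hg : Integrable g) (hg2 : ∫⁻ z, ‖g z‖ₑ ^ 2 ≠ ∞) : MemLp (invFourier g) 2 :=
  (memLp_two_iff_lintegral_sq_ne_top (continuous_invFourier hg).aestronglyMeasurable).2
    ((lintegral_invFourier_sq_le hg).trans_lt
      (ENNReal.mul_lt_top ENNReal.ofReal_lt_top hg2.lt_top)).ne

theorem integrable_invFourier_mul_conj {V : Type*} [NormedAddCommGroup V] [InnerProductSpace ℝ V]
    [FiniteDimensional ℝ V] [MeasurableSpace V] [BorelSpace V] {φ ψ : ℝ × V → ℂ}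
    (hφ : Integrable φ) (hψ : Integrable ψ) (hφ2 : ∫⁻ z, ‖φ z‖ₑ ^ 2 ≠ ∞)
    (hψ2 : ∫⁻ z, ‖ψ z‖ₑ ^ 2 ≠ ∞) :
    Integrable fun ζ => invFourier φ ζ * (starRingEnd ℂ) (invFourier ψ ζ) :=
  (memLp_two_invFourier hφ hφ2).integrable_mul (memLp_two_invFourier hψ hψ2).star

theorem enorm_setIntegral_freqBlock_le (ha : 0 < a) (hτ : τ ≠ 0) {φ ψ : ℝ × E2 → ℂ}
    (hφ : Integrable φ) (hψ : Integrable ψ) (hφ2 : ∫⁻ z, ‖φ z‖ₑ ^ 2 ≠ ∞)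
    (hψ2 : ∫⁻ z, ‖ψ z‖ₑ ^ 2 ≠ ∞) :
    ‖∫ ζ in freqBlock a, (Circle.exp (τ * omega ζ) : ℂ) *
        (invFourier φ ζ * (starRingEnd ℂ) (invFourier ψ ζ))‖ₑ ≤
      ENNReal.ofReal (48 * (Real.sqrt (a / |τ|) / |τ|)) * ((∫⁻ z, ‖φ z‖ₑ) * ∫⁻ z, ‖ψ z‖ₑ) := by
  set κ := ENNReal.ofReal (48 * (Real.sqrt (a / |τ|) / |τ|))
  have hinteg := integrable_invFourier_mul_conj hφ hψ hφ2 hψ2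
  have undamped : Tendsto (fun n : ℕ => ∫ ζ, dampedSymbol a τ (1 / ((n : ℝ) + 1)) ζ *
      (invFourier φ ζ * (starRingEnd ℂ) (invFourier ψ ζ))) atTop
      (nhds (∫ ζ in freqBlock a, (Circle.exp (τ * omega ζ) : ℂ) *
        (invFourier φ ζ * (starRingEnd ℂ) (invFourier ψ ζ)))) := by
    rw [← integral_indicator (measurableSet_freqBlock a)]
    refine tendsto_integral_of_dominated_convergence _ (fun n =>
      (measurable_dampedSymbol _ _ _).aestronglyMeasurable.mul hinteg.aestronglyMeasurable)
      hinteg.norm (fun n => Eventually.of_forall fun ζ => ?_) (Eventually.of_forall fun ζ => ?_)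
    · rw [norm_mul]
      exact mul_le_of_le_one_left (norm_nonneg _) (norm_dampedSymbol_le_one ha (by positivity) ζ)
    · rw [Set.indicator_mul_left]
      exact (tendsto_dampedSymbol a τ ζ).mul_const _
  refine le_of_tendsto undamped.enorm (Eventually.of_forall fun n => ?_)
  have kernel_le : ∀ z, ‖invFourier (dampedSymbol a τ (1 / ((n : ℝ) + 1))) z‖ₑ ≤ κ := fun z => by
    rw [← ofReal_norm]
    exact ENNReal.ofReal_le_ofReal (norm_invFourier_dampedSymbol_le ha hτ (by positivity) z)
  calc _ ≤ ∫⁻ x, ∫⁻ y, κ * (‖φ x‖ₑ * ‖ψ y‖ₑ) := by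
        refine (enorm_integral_mul_invFourier_mul_conj_le
          (integrable_dampedSymbol ha τ (by positivity)) hφ hψ).trans ?_
        gcongr with x y
        exact kernel_le _
    _ = _ := by
        simp_rw [← mul_assoc]
        simp_rw [lintegral_const_mul'' _ hψ.aestronglyMeasurable.enorm]
        rw [lintegral_mul_const'' _ (hφ.aestronglyMeasurable.enorm.const_mul _),
          lintegral_const_mul'' _ hφ.aestronglyMeasurable.enorm]

end Dispersive

/-! ### Bilinear estimates for dispersive pairs -/

theorem two_mul_mul_le_weighted (s t : ℝ≥0∞) {c : ℝ} (hc : 0 < c) :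
    2 * (s * t) ≤ ENNReal.ofReal c * s ^ 2 + ENNReal.ofReal c⁻¹ * t ^ 2 := by
  have h := two_mul_mul_le_sq_add_sq (ENNReal.ofReal √c * s) (ENNReal.ofReal (√c)⁻¹ * t)
  have hcancel : ENNReal.ofReal √c * s * (ENNReal.ofReal (√c)⁻¹ * t) = s * t := by
    rw [mul_mul_mul_comm, ← ENNReal.ofReal_mul (by positivity), mul_inv_cancel₀ (by positivity),
      ENNReal.ofReal_one, one_mul]
  rwa [hcancel, mul_pow, mul_pow, ← ENNReal.ofReal_pow (by positivity),
    ← ENNReal.ofReal_pow (by positivity), inv_pow, Real.sq_sqrt hc.le] at h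

theorem lintegral_mul_le_of_lintegral_sq_le {α : Type*} [MeasurableSpace α] {μ : Measure α}
    {f g : α → ℝ≥0∞} (hf : AEMeasurable f μ) (hg : AEMeasurable g μ) {a b : ℝ≥0∞}
    (ha : ∫⁻ x, f x ^ 2 ∂μ ≤ a ^ 2) (hb : ∫⁻ x, g x ^ 2 ∂μ ≤ b ^ 2) :
    ∫⁻ x, f x * g x ∂μ ≤ a * b := by
  have h := ENNReal.lintegral_mul_le_Lp_mul_Lq μ Real.HolderConjugate.two_two hf hg
  simp only [Pi.mul_apply, ENNReal.rpow_ofNat] at h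
  have sqrt_le {x y : ℝ≥0∞} (hxy : x ≤ y ^ 2) : x ^ (1 / 2 : ℝ) ≤ y :=
    calc x ^ (1 / 2 : ℝ) ≤ (y ^ 2) ^ (1 / 2 : ℝ) := by gcongr
      _ = y := by rw [← ENNReal.rpow_natCast, ← ENNReal.rpow_mul]; norm_num
  exact h.trans (mul_le_mul' (sqrt_le ha) (sqrt_le hb))

theorem lintegral_enorm_sq_eq_enorm_integral_mul_conj {α : Type*} [MeasurableSpace α]
    {μ : Measure α} {f : α → ℂ} (hf : Integrable (fun x => f x * (starRingEnd ℂ) (f x)) μ) :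
    ∫⁻ x, ‖f x‖ₑ ^ 2 ∂μ = ‖∫ x, f x * (starRingEnd ℂ) (f x) ∂μ‖ₑ := by
  have hsq (x : α) : f x * (starRingEnd ℂ) (f x) = ((‖f x‖ ^ 2 : ℝ) : ℂ) := by
    rw [Complex.mul_conj, Complex.normSq_eq_norm_sq]
  simp_rw [hsq] at hf ⊢
  have hinteg : Integrable (fun x => ‖f x‖ ^ 2) μ := by
    simpa only [RCLike.re_to_complex, Complex.ofReal_re] using hf.re
  rw [integral_complex_ofReal, ← ofReal_norm, Complex.norm_real,
    Real.norm_of_nonneg (integral_nonneg fun x => by positivity),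
    ofReal_integral_eq_lintegral_ofReal hinteg (Eventually.of_forall fun x => by positivity)]
  simp_rw [ENNReal.ofReal_pow (norm_nonneg _), ofReal_norm]

theorem lintegral_comp_abs (f : ℝ → ℝ≥0∞) :
    ∫⁻ x : ℝ, f |x| = 2 * ∫⁻ x in Set.Ioi (0 : ℝ), f x := by
  have hneg : ∫⁻ x in Set.Iio (0 : ℝ), f |x| = ∫⁻ x in Set.Ioi (0 : ℝ), f x := by
    have h := (Measure.measurePreserving_neg (volume : Measure ℝ)).setLIntegral_comp_preimage_emb
      (MeasurableEquiv.neg ℝ).measurableEmbedding f (Set.Ioi 0)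
    rw [← h, show (Neg.neg ⁻¹' Set.Ioi (0 : ℝ)) = Set.Iio 0 by ext x; simp]
    exact setLIntegral_congr_fun measurableSet_Iio fun x hx => by rw [abs_of_neg hx]
  rw [← lintegral_add_compl (fun x => f |x|) (measurableSet_Ioi (a := (0 : ℝ))), two_mul,
    Set.compl_Ioi, setLIntegral_congr Iio_ae_eq_Iic.symm, hneg]
  congr 1
  exact setLIntegral_congr_fun measurableSet_Ioi fun x hx => by rw [abs_of_pos hx]

/-- The convolution kernel `(lam / |τ|) ^ α` on `ℝ`, cut off to `|τ| ∈ J`. -/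
def powerKernel (J : Set ℝ) (α lam τ : ℝ) : ℝ≥0∞ :=
  J.indicator (fun x => ENNReal.ofReal ((lam / x) ^ α)) |τ|

section PowerKernel

variable {J : Set ℝ} {α lam r : ℝ}

theorem measurable_powerKernel (hJ : MeasurableSet J) (α lam : ℝ) :
    Measurable (powerKernel J α lam) :=
  (Measurable.indicator (f := fun x => ENNReal.ofReal ((lam / x) ^ α)) (by fun_prop) hJ).comp
    (by fun_prop : Measurable fun τ : ℝ => |τ|)

theorem lintegral_powerKernel (hJ : MeasurableSet J) (hJpos : J ⊆ Set.Ioi 0) (hl : 0 ≤ lam)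
    (hinteg : IntegrableOn (fun x : ℝ => x ^ (-α)) J) :
    ∫⁻ τ, powerKernel J α lam τ = ENNReal.ofReal (2 * (lam ^ α * ∫ x in J, x ^ (-α))) := by
  have hfactor : Set.EqOn (fun x => ENNReal.ofReal ((lam / x) ^ α))
      (fun x => ENNReal.ofReal (lam ^ α * x ^ (-α))) J := fun x hx => by
    have hx : 0 < x := hJpos hx
    simp only
    rw [Real.div_rpow hl hx.le, Real.rpow_neg hx.le, div_eq_mul_inv]
  have hnonneg : 0 ≤ᵐ[volume.restrict J] fun x : ℝ => lam ^ α * x ^ (-α) := by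
    filter_upwards [ae_restrict_mem hJ] with x hx
    have hx : 0 < x := hJpos hx
    simp only [Pi.zero_apply]
    positivity
  simp only [powerKernel]
  rw [lintegral_comp_abs, setLIntegral_indicator hJ, Set.inter_eq_left.2 hJpos,
    setLIntegral_congr_fun hJ hfactor,
    ← ofReal_integral_eq_lintegral_ofReal (hinteg.const_mul _) hnonneg, integral_const_mul,
    ENNReal.ofReal_mul two_pos.le, ENNReal.ofReal_ofNat]

theorem lintegral_farKernel (hl : 0 < lam) (hr : 0 < r) :
    ∫⁻ τ, powerKernel (Set.Ioi (lam * r ^ 4)) (3 / 2) lam τ = ENNReal.ofReal (4 * lam / r ^ 2) := by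
  have hT : 0 < lam * r ^ 4 := by positivity
  rw [lintegral_powerKernel measurableSet_Ioi (Set.Ioi_subset_Ioi hT.le) hl.le
    (integrableOn_Ioi_rpow_of_lt (by norm_num) hT), integral_Ioi_rpow_of_lt (by norm_num) hT]
  have hpow : (lam * r ^ 4) ^ (-(3 / 2) + 1 : ℝ) = lam ^ (-(1 / 2) : ℝ) * (r ^ 2)⁻¹ := by
    rw [Real.mul_rpow hl.le (by positivity), ← Real.rpow_natCast, ← Real.rpow_mul hr.le,
      ← Real.rpow_natCast, ← Real.rpow_neg hr.le]
    norm_num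
  have hlam : lam ^ (3 / 2 : ℝ) * lam ^ (-(1 / 2) : ℝ) = lam := by
    rw [← Real.rpow_add hl]; norm_num
  rw [hpow]
  congr 1
  linear_combination 4 / r ^ 2 * hlam

theorem lintegral_nearKernel_le (hl : 0 < lam) (hr : 0 < r) :
    ∫⁻ τ, powerKernel (Set.Ioc 0 (2 * (lam * r ^ 4))) (1 / 2) lam τ ≤
      ENNReal.ofReal (6 * lam * r ^ 2) := by
  have hT : 0 < 2 * (lam * r ^ 4) := by positivity
  rw [lintegral_powerKernel measurableSet_Ioc (fun x hx => hx.1) hl.le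
    (intervalIntegral.intervalIntegrable_rpow' (by norm_num)).1,
    ← intervalIntegral.integral_of_le hT.le, integral_rpow (by left; norm_num),
    Real.zero_rpow (by norm_num)]
  have hpow : (2 * (lam * r ^ 4)) ^ (-(1 / 2) + 1 : ℝ) = √2 * (lam ^ (1 / 2 : ℝ) * r ^ 2) := by
    rw [Real.mul_rpow (by norm_num) (by positivity), Real.mul_rpow hl.le (by positivity),
      ← Real.rpow_natCast, ← Real.rpow_mul hr.le, ← Real.rpow_natCast, Real.sqrt_eq_rpow]
    norm_num
  have hlam : lam ^ (1 / 2 : ℝ) * lam ^ (1 / 2 : ℝ) = lam := by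
    rw [← Real.rpow_add hl]; norm_num
  have hsqrt : √2 ≤ 3 / 2 := Real.sqrt_le_iff.2 ⟨by norm_num, by norm_num⟩
  rw [hpow]
  refine ENNReal.ofReal_le_ofReal ?_
  calc _ = 4 * √2 * (lam ^ (1 / 2 : ℝ) * lam ^ (1 / 2 : ℝ)) * r ^ 2 := by ring
    _ ≤ 4 * (3 / 2) * lam * r ^ 2 := by rw [hlam]; gcongr
    _ = 6 * lam * r ^ 2 := by ring

end PowerKernel

theorem integral_mul_conj_integral_eq {Z : Type*} (w₁ w₂ : ℝ → Z → ℂ) (ζ : Z) :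
    (∫ t, w₁ t ζ) * (starRingEnd ℂ) (∫ t, w₂ t ζ) =
      ∫ p : ℝ × ℝ, w₁ p.1 ζ * (starRingEnd ℂ) (w₂ p.2 ζ) ∂(volume.prod volume) := by
  rw [← integral_conj, integral_prod_mul (fun t => w₁ t ζ) fun s => (starRingEnd ℂ) (w₂ s ζ)]

section Bilinear

variable {Z : Type*} [MeasurableSpace Z] {μ : Measure Z}

/-- A jointly measurable curve `t ↦ w t` of functions on `Z` with `‖w t‖_{L²(μ)} ≤ c * n t`, where
`n` is integrable over time. -/
structure IsL2Curve (μ : Measure Z) (c : ℝ) (w : ℝ → Z → ℂ) (n : ℝ → ℝ≥0∞) : Prop where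
  measurable : Measurable (Function.uncurry w)
  measurable_bound : Measurable n
  lintegral_bound_ne_top : ∫⁻ t, n t ≠ ∞
  lintegral_sq_le : ∀ t, ∫⁻ ζ, ‖w t ζ‖ₑ ^ 2 ∂μ ≤ (ENNReal.ofReal c * n t) ^ 2

/-- The `L²(μ)` inner product `⟨w₁ t, w₂ s⟩` as a function of the pair of times `(t, s)`. -/
def timePairing (μ : Measure Z) (w₁ w₂ : ℝ → Z → ℂ) (p : ℝ × ℝ) : ℂ :=
  ∫ ζ, w₁ p.1 ζ * (starRingEnd ℂ) (w₂ p.2 ζ) ∂μ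

/-- The dispersive estimate `|⟨w₁ t, w₂ s⟩| ≤ d (lam / |t - s|)^{3/2} n₁ t n₂ s`; the exponent
`3/2` is that of KP-II in three space dimensions. -/
def IsDispersivePair (μ : Measure Z) (lam d : ℝ) (w₁ w₂ : ℝ → Z → ℂ) (n₁ n₂ : ℝ → ℝ≥0∞) : Prop :=
  ∀ t s, t ≠ s → ‖timePairing μ w₁ w₂ (t, s)‖ₑ ≤
    ENNReal.ofReal ((lam / |t - s|) ^ (3 / 2 : ℝ) * d) * (n₁ t * n₂ s)

variable {w w₁ w₂ : ℝ → Z → ℂ} {n n₁ n₂ : ℝ → ℝ≥0∞} {c c₁ c₂ d lam r x y : ℝ}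

theorem IsL2Curve.measurable_apply (hw : IsL2Curve μ c w n) (t : ℝ) : Measurable (w t) :=
  hw.measurable.comp measurable_prodMk_left

theorem IsL2Curve.indicator (hw : IsL2Curve μ c w n) {J : Set ℝ} (hJ : MeasurableSet J) :
    IsL2Curve μ c (fun t ζ => J.indicator (fun t => w t ζ) t) n where
  measurable := hw.measurable.indicator (measurable_fst hJ)
  measurable_bound := hw.measurable_bound
  lintegral_bound_ne_top := hw.lintegral_bound_ne_top
  lintegral_sq_le t := by
    refine (lintegral_mono fun ζ => ?_).trans (hw.lintegral_sq_le t)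
    gcongr
    exact enorm_indicator_le_enorm_self _ _

theorem IsL2Curve.lintegral_enorm_mul_conj_le (h₁ : IsL2Curve μ c₁ w₁ n₁) {g : Z → ℂ}
    (hg : Measurable g) {M : ℝ≥0∞} (hgM : ∫⁻ ζ, ‖g ζ‖ₑ ^ 2 ∂μ ≤ M ^ 2) (t : ℝ) :
    ∫⁻ ζ, ‖w₁ t ζ * (starRingEnd ℂ) (g ζ)‖ₑ ∂μ ≤ ENNReal.ofReal c₁ * n₁ t * M := by
  simp only [enorm_mul, RCLike.enorm_conj]
  exact lintegral_mul_le_of_lintegral_sq_le (h₁.measurable_apply t).enorm.aemeasurable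
    hg.enorm.aemeasurable (h₁.lintegral_sq_le t) hgM

theorem IsL2Curve.integrable_prod_mul_conj [SFinite μ] (h₁ : IsL2Curve μ c₁ w₁ n₁)
    (h₂ : IsL2Curve μ c₂ w₂ n₂) :
    Integrable (fun p : (ℝ × ℝ) × Z => w₁ p.1.1 p.2 * (starRingEnd ℂ) (w₂ p.1.2 p.2))
      (((volume : Measure ℝ).prod (volume : Measure ℝ)).prod μ) := by
  have hmeas : Measurable
      (fun p : (ℝ × ℝ) × Z => w₁ p.1.1 p.2 * (starRingEnd ℂ) (w₂ p.1.2 p.2)) :=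
    (h₁.measurable.comp (by fun_prop : Measurable fun p : (ℝ × ℝ) × Z => (p.1.1, p.2))).mul
      (Complex.continuous_conj.measurable.comp
        (h₂.measurable.comp (by fun_prop : Measurable fun p : (ℝ × ℝ) × Z => (p.1.2, p.2))))
  refine ⟨hmeas.aestronglyMeasurable, ?_⟩
  rw [hasFiniteIntegral_iff_enorm, lintegral_prod _ hmeas.enorm.aemeasurable]
  have hn₁ := h₁.measurable_bound
  have hn₂ := h₂.measurable_bound
  calc _ ≤ ∫⁻ p : ℝ × ℝ, ENNReal.ofReal c₁ * n₁ p.1 * (ENNReal.ofReal c₂ * n₂ p.2)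
        ∂(volume.prod volume) := lintegral_mono fun p =>
          h₁.lintegral_enorm_mul_conj_le (h₂.measurable_apply p.2) (h₂.lintegral_sq_le p.2) p.1
    _ = ENNReal.ofReal c₁ * (∫⁻ t, n₁ t) * (ENNReal.ofReal c₂ * ∫⁻ t, n₂ t) := by
      rw [lintegral_prod_mul (f := fun t => ENNReal.ofReal c₁ * n₁ t)
        (g := fun t => ENNReal.ofReal c₂ * n₂ t) (by fun_prop) (by fun_prop),
        lintegral_const_mul _ hn₁,
        lintegral_const_mul _ hn₂]
    _ < ∞ := ENNReal.mul_lt_top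
      (ENNReal.mul_lt_top ENNReal.ofReal_lt_top h₁.lintegral_bound_ne_top.lt_top)
      (ENNReal.mul_lt_top ENNReal.ofReal_lt_top h₂.lintegral_bound_ne_top.lt_top)

theorem IsL2Curve.integrable_integral_mul_conj_integral [SFinite μ] (h₁ : IsL2Curve μ c₁ w₁ n₁)
    (h₂ : IsL2Curve μ c₂ w₂ n₂) :
    Integrable (fun ζ => (∫ t, w₁ t ζ) * (starRingEnd ℂ) (∫ t, w₂ t ζ)) μ := by
  simp_rw [integral_mul_conj_integral_eq]
  exact (h₁.integrable_prod_mul_conj h₂).integral_prod_right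

theorem IsL2Curve.integrable_timePairing [SFinite μ] (h₁ : IsL2Curve μ c₁ w₁ n₁)
    (h₂ : IsL2Curve μ c₂ w₂ n₂) : Integrable (timePairing μ w₁ w₂) (volume.prod volume) :=
  (h₁.integrable_prod_mul_conj h₂).integral_prod_left

theorem IsL2Curve.integral_integral_mul_conj_integral [SFinite μ] (h₁ : IsL2Curve μ c₁ w₁ n₁)
    (h₂ : IsL2Curve μ c₂ w₂ n₂) :
    ∫ ζ, (∫ t, w₁ t ζ) * (starRingEnd ℂ) (∫ t, w₂ t ζ) ∂μ =
      ∫ p, timePairing μ w₁ w₂ p ∂(volume.prod volume) := by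
  simp_rw [integral_mul_conj_integral_eq]
  exact (integral_integral_swap (h₁.integrable_prod_mul_conj h₂)).symm

theorem IsL2Curve.enorm_integral_integral_mul_conj_le [SFinite μ] (h₁ : IsL2Curve μ c w n)
    {g : Z → ℂ} (hg : Measurable g) {M : ℝ≥0∞} (hM : M ≠ ∞)
    (hgM : ∫⁻ ζ, ‖g ζ‖ₑ ^ 2 ∂μ ≤ M ^ 2) :
    ‖∫ t, ∫ ζ, w t ζ * (starRingEnd ℂ) (g ζ) ∂μ‖ₑ ≤
      (∫⁻ ζ, ‖∫ t, w t ζ‖ₑ ^ 2 ∂μ) ^ (1 / 2 : ℝ) * M := by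
  have hinteg : Integrable (fun p : ℝ × Z => w p.1 p.2 * (starRingEnd ℂ) (g p.2))
      ((volume : Measure ℝ).prod μ) := by
    have hmeas : Measurable fun p : ℝ × Z => w p.1 p.2 * (starRingEnd ℂ) (g p.2) :=
      h₁.measurable.mul (Complex.continuous_conj.measurable.comp (hg.comp measurable_snd))
    refine ⟨hmeas.aestronglyMeasurable, ?_⟩
    rw [hasFiniteIntegral_iff_enorm, lintegral_prod _ hmeas.enorm.aemeasurable]
    have hn := h₁.measurable_bound
    refine (lintegral_mono fun t => h₁.lintegral_enorm_mul_conj_le hg hgM t).trans_lt ?_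
    rw [lintegral_mul_const _ (by fun_prop), lintegral_const_mul _ hn]
    exact ENNReal.mul_lt_top
      (ENNReal.mul_lt_top ENNReal.ofReal_lt_top h₁.lintegral_bound_ne_top.lt_top) hM.lt_top
  have hmeas_integral : StronglyMeasurable fun ζ => ∫ t, w t ζ :=
    (h₁.measurable.comp measurable_swap).stronglyMeasurable.integral_prod_right'
  rw [integral_integral_swap hinteg]
  simp_rw [integral_mul_const]
  refine (enorm_integral_le_lintegral_enorm _).trans ?_
  simp only [enorm_mul, RCLike.enorm_conj]
  refine lintegral_mul_le_of_lintegral_sq_le hmeas_integral.measurable.enorm.aemeasurable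
    hg.enorm.aemeasurable ?_ hgM
  rw [← ENNReal.rpow_natCast, ← ENNReal.rpow_mul]
  norm_num

end Bilinear

/-! ### The endpoint argument of Keel and Tao -/

/-- The pairs of times at distance at most `T`. -/
def timeStrip (T : ℝ) : Set (ℝ × ℝ) := {p | |p.1 - p.2| ≤ T}

theorem measurableSet_timeStrip (T : ℝ) : MeasurableSet (timeStrip T) :=
  measurableSet_le (by fun_prop) measurable_const

theorem mem_timeStrip_iff_mem_Icc {T t s : ℝ} :
    (t, s) ∈ timeStrip T ↔ t ∈ Set.Icc (s - T) (s + T) := by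
  rw [timeStrip, Set.mem_ofPred_eq, abs_le, Set.mem_Icc]
  constructor <;> rintro ⟨h₁, h₂⟩ <;> constructor <;> linarith

theorem lintegral_lintegral_indicator_Icc {H : ℝ → ℝ≥0∞} (hH : Measurable H) (T : ℝ) :
    ∫⁻ s, ∫⁻ t, (Set.Icc (s - T) (s + T)).indicator H t = ENNReal.ofReal (2 * T) * ∫⁻ t, H t := by
  have hmeas : Measurable
      (Function.uncurry fun s t => (Set.Icc (s - T) (s + T)).indicator H t) := by
    have heq : (Function.uncurry fun s t => (Set.Icc (s - T) (s + T)).indicator H t) =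
        (Prod.swap ⁻¹' timeStrip T).indicator fun p => H p.2 := by
      ext ⟨s, t⟩
      exact Set.indicator_eq_indicator (by simpa using mem_timeStrip_iff_mem_Icc.symm) rfl
    rw [heq]
    exact (hH.comp measurable_snd).indicator (measurable_swap (measurableSet_timeStrip T))
  have hswap (s t : ℝ) : (Set.Icc (s - T) (s + T)).indicator H t =
      (Set.Icc (t - T) (t + T)).indicator (fun _ => H t) s := by
    refine Set.indicator_eq_indicator ?_ rfl
    rw [Set.mem_Icc, Set.mem_Icc]
    constructor <;> rintro ⟨h₁, h₂⟩ <;> constructor <;> linarith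
  rw [lintegral_lintegral_swap hmeas.aemeasurable, ← lintegral_const_mul _ hH]
  simp_rw [hswap, lintegral_indicator_const measurableSet_Icc, Real.volume_Icc]
  refine lintegral_congr fun t => ?_
  rw [mul_comm]
  ring_nf

theorem two_mul_lintegral_rpow_half_mul_le {α : Type*} [MeasurableSpace α] {μ : Measure α}
    (G : α → ℝ≥0∞) {h : α → ℝ≥0∞} (hh : Measurable h) {c : ℝ} (hc : 0 < c) :
    2 * ∫⁻ s, G s ^ (1 / 2 : ℝ) * h s ∂μ ≤
      ENNReal.ofReal c * (∫⁻ s, h s ^ 2 ∂μ) + ENNReal.ofReal c⁻¹ * ∫⁻ s, G s ∂μ := by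
  rw [← lintegral_const_mul' _ _ ENNReal.ofNat_ne_top,
    ← lintegral_const_mul' _ _ ENNReal.ofReal_ne_top,
    ← lintegral_const_mul' _ _ ENNReal.ofReal_ne_top, ← lintegral_add_left (by fun_prop)]
  refine lintegral_mono fun s => ?_
  rw [mul_comm (G s ^ _)]
  refine (two_mul_mul_le_weighted _ _ hc).trans_eq ?_
  rw [← ENNReal.rpow_natCast (G s ^ _), ← ENNReal.rpow_mul]
  norm_num

section KeelTao

variable {Z : Type*} [MeasurableSpace Z] {μ : Measure Z} {w w₁ w₂ : ℝ → Z → ℂ}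
  {n n₁ n₂ : ℝ → ℝ≥0∞} {c c₁ c₂ d lam r x y : ℝ}

theorem IsDispersivePair.two_mul_lintegral_far_le (h : IsDispersivePair μ lam d w₁ w₂ n₁ n₂)
    (hn₁ : Measurable n₁) (hn₂ : Measurable n₂) (hl : 0 < lam) (hr : 0 < r) (hd : 0 ≤ d) :
    2 * ∫⁻ p in (timeStrip (lam * r ^ 4))ᶜ, ‖timePairing μ w₁ w₂ p‖ₑ ∂(volume.prod volume) ≤
      ENNReal.ofReal (4 * lam / r ^ 2 * d) * ((∫⁻ t, n₁ t ^ 2) + ∫⁻ t, n₂ t ^ 2) := by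
  set T := lam * r ^ 4
  have hT : 0 < T := by positivity
  set k := powerKernel (Set.Ioi T) (3 / 2) lam
  have hk : Measurable k := measurable_powerKernel measurableSet_Ioi _ _
  have hpointwise (p : ℝ × ℝ) : ((timeStrip T)ᶜ).indicator (fun p => ‖timePairing μ w₁ w₂ p‖ₑ) p ≤
      ENNReal.ofReal d * (k (p.1 - p.2) * (n₁ p.1 * n₂ p.2)) := by
    obtain ⟨t, s⟩ := p
    by_cases hp : (t, s) ∈ (timeStrip T)ᶜ
    swap
    · exact (Set.indicator_of_notMem hp _).trans_le zero_le
    rw [Set.indicator_of_mem hp]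
    have hts : T < |t - s| := not_le.1 hp
    have hk_eq : k (t - s) = ENNReal.ofReal ((lam / |t - s|) ^ (3 / 2 : ℝ)) :=
      Set.indicator_of_mem hts _
    refine (h t s fun heq => ?_).trans (le_of_eq ?_)
    · rw [heq, sub_self, abs_zero] at hts
      exact hT.not_gt hts
    · rw [hk_eq, ENNReal.ofReal_mul (by positivity)]
      ring
  rw [← lintegral_indicator (measurableSet_timeStrip T).compl]
  calc _ ≤ 2 * ∫⁻ p : ℝ × ℝ, ENNReal.ofReal d * (k (p.1 - p.2) * (n₁ p.1 * n₂ p.2))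
        ∂(volume.prod volume) := by gcongr with p; exact hpointwise p
    _ = ENNReal.ofReal d * (2 * ∫⁻ t, ∫⁻ s, k (t - s) * (n₁ t * n₂ s)) := by
      rw [lintegral_const_mul _ (by fun_prop), lintegral_prod _ (by fun_prop)]
      ring
    _ ≤ ENNReal.ofReal d * ((∫⁻ τ, k τ) * ((∫⁻ t, n₁ t ^ 2) + ∫⁻ t, n₂ t ^ 2)) := by
      exact mul_le_mul_right (two_mul_lintegral_convolution_le volume hk hn₁ hn₂) _
    _ = _ := by
      rw [lintegral_farKernel hl hr, ← mul_assoc, ← ENNReal.ofReal_mul hd, mul_comm d]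

/- The geometric mean of the dispersive bound and the trivial bound `⟨w t, w s⟩ ≤ x⁴ n t n s`,
which is locally integrable in `t - s`. -/
theorem IsL2Curve.enorm_timePairing_self_le (hw : IsL2Curve μ (x ^ 2) w n)
    (h : IsDispersivePair μ lam (x⁻¹ * x⁻¹) w w n n) (hx : 0 < x) (hl : 0 < lam) {t s : ℝ}
    (hts : t ≠ s) : ‖timePairing μ w w (t, s)‖ₑ ≤
      ENNReal.ofReal (x ^ 2) * (ENNReal.ofReal ((lam / |t - s|) ^ (1 / 2 : ℝ)) * (n t * n s)) := by
  have hpos : 0 < lam / |t - s| := div_pos hl (abs_pos.2 (sub_ne_zero.2 hts))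
  set κ := (lam / |t - s|) ^ (1 / 2 : ℝ) with hκ
  have hκpos : 0 < κ := by positivity
  have hκcube : (lam / |t - s|) ^ (3 / 2 : ℝ) = κ ^ 3 := by
    rw [hκ, ← Real.rpow_natCast, ← Real.rpow_mul hpos.le]; norm_num
  rw [← mul_assoc, ← ENNReal.ofReal_mul (by positivity)]
  rcases le_total κ (x ^ 2) with hle | hle
  · refine (h t s hts).trans ?_
    rw [hκcube]
    refine mul_le_mul_left (ENNReal.ofReal_le_ofReal ?_) _
    calc κ ^ 3 * (x⁻¹ * x⁻¹) = κ * κ ^ 2 * (x⁻¹ * x⁻¹) := by ring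
      _ ≤ κ * (x ^ 2) ^ 2 * (x⁻¹ * x⁻¹) := by gcongr
      _ = x ^ 2 * κ := by field_simp
  · calc _ ≤ ∫⁻ ζ, ‖w t ζ * (starRingEnd ℂ) (w s ζ)‖ₑ ∂μ := enorm_integral_le_lintegral_enorm _
      _ ≤ ENNReal.ofReal (x ^ 2) * n t * (ENNReal.ofReal (x ^ 2) * n s) :=
        hw.lintegral_enorm_mul_conj_le (hw.measurable_apply s) (hw.lintegral_sq_le s) t
      _ = ENNReal.ofReal (x ^ 2 * x ^ 2) * (n t * n s) := by
        rw [ENNReal.ofReal_mul (by positivity)]; ring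
      _ ≤ _ := by gcongr

variable [SFinite μ]

theorem IsL2Curve.lintegral_enorm_integral_window_sq_le (hw : IsL2Curve μ (x ^ 2) w n)
    (h : IsDispersivePair μ lam (x⁻¹ * x⁻¹) w w n n) (hx : 0 < x) (hl : 0 < lam) (s T : ℝ) :
    ∫⁻ ζ, ‖∫ t, (Set.Icc (s - T) (s + T)).indicator (fun t => w t ζ) t‖ₑ ^ 2 ∂μ ≤
      ∫⁻ t, (Set.Icc (s - T) (s + T)).indicator (fun t => ∫⁻ t', ENNReal.ofReal (x ^ 2) *
        (powerKernel (Set.Ioc 0 (2 * T)) (1 / 2) lam (t - t') * (n t * n t'))) t := by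
  set J := Set.Icc (s - T) (s + T)
  have hwJ := hw.indicator (J := J) measurableSet_Icc
  rw [lintegral_enorm_sq_eq_enorm_integral_mul_conj (hwJ.integrable_integral_mul_conj_integral hwJ),
    hwJ.integral_integral_mul_conj_integral hwJ]
  refine (enorm_integral_le_lintegral_enorm _).trans <| (lintegral_prod_le _).trans <|
    lintegral_mono fun t => ?_
  by_cases ht : t ∈ J
  · rw [Set.indicator_of_mem ht]
    refine lintegral_mono_ae ?_
    filter_upwards [Measure.ae_ne volume t] with t' htt'
    by_cases ht' : t' ∈ J
    · simp only [timePairing, Set.indicator_of_mem ht, Set.indicator_of_mem ht']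
      have hmem : |t - t'| ∈ Set.Ioc 0 (2 * T) := by
        refine ⟨abs_pos.2 (sub_ne_zero.2 htt'.symm), abs_le.2 ⟨?_, ?_⟩⟩ <;>
          linarith [ht.1, ht.2, ht'.1, ht'.2]
      rw [powerKernel, Set.indicator_of_mem hmem]
      exact hw.enorm_timePairing_self_le h hx hl htt'.symm
    · simp [timePairing, Set.indicator_of_notMem ht']
  · simp [timePairing, Set.indicator_of_notMem ht]

theorem IsL2Curve.lintegral_lintegral_enorm_integral_window_sq_le (hw : IsL2Curve μ (x ^ 2) w n)
    (h : IsDispersivePair μ lam (x⁻¹ * x⁻¹) w w n n) (hx : 0 < x) (hl : 0 < lam) (hr : 0 < r) :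
    ∫⁻ s, ∫⁻ ζ, ‖∫ t, (Set.Icc (s - lam * r ^ 4) (s + lam * r ^ 4)).indicator
        (fun t => w t ζ) t‖ₑ ^ 2 ∂μ ≤
      ENNReal.ofReal (12 * lam ^ 2 * r ^ 6 * x ^ 2) * ∫⁻ t, n t ^ 2 := by
  set T := lam * r ^ 4 with hT
  have hTpos : 0 < T := by positivity
  set k := powerKernel (Set.Ioc 0 (2 * T)) (1 / 2) lam
  have hk : Measurable k := measurable_powerKernel measurableSet_Ioc _ _
  have hn := hw.measurable_bound
  have hconv : Measurable fun t => ∫⁻ t', k (t - t') * (n t * n t') :=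
    Measurable.lintegral_prod_right' (f := fun p : ℝ × ℝ => k (p.1 - p.2) * (n p.1 * n p.2))
      (by fun_prop)
  calc _ ≤ ∫⁻ s, ∫⁻ t, (Set.Icc (s - T) (s + T)).indicator
        (fun t => ENNReal.ofReal (x ^ 2) * ∫⁻ t', k (t - t') * (n t * n t')) t := by
        simp_rw [← lintegral_const_mul' _ _ ENNReal.ofReal_ne_top]
        exact lintegral_mono fun s => hw.lintegral_enorm_integral_window_sq_le h hx hl s T
    _ = ENNReal.ofReal (T * x ^ 2) * (2 * ∫⁻ t, ∫⁻ t', k (t - t') * (n t * n t')) := by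
      rw [lintegral_lintegral_indicator_Icc (by fun_prop), lintegral_const_mul _ hconv,
        ENNReal.ofReal_mul two_pos.le, ENNReal.ofReal_mul hTpos.le, ENNReal.ofReal_ofNat]
      ring
    _ ≤ ENNReal.ofReal (T * x ^ 2) *
        (ENNReal.ofReal (6 * lam * r ^ 2) * ((∫⁻ t, n t ^ 2) + ∫⁻ t, n t ^ 2)) := by
      refine mul_le_mul_right ((two_mul_lintegral_convolution_le volume hk hn hn).trans ?_) _
      gcongr
      exact lintegral_nearKernel_le hl hr
    _ = _ := by
      rw [← two_mul, ← mul_assoc, ← mul_assoc, ← ENNReal.ofReal_mul (by positivity),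
        ← ENNReal.ofReal_ofNat 2, ← ENNReal.ofReal_mul (by positivity)]
      congr 2
      rw [hT]
      ring

theorem IsL2Curve.ae_enorm_integral_indicator_timePairing_le (h₁ : IsL2Curve μ c₁ w₁ n₁)
    (h₂ : IsL2Curve μ c₂ w₂ n₂) (T : ℝ) :
    ∀ᵐ s : ℝ, ‖∫ t, (timeStrip T).indicator (timePairing μ w₁ w₂) (t, s)‖ₑ ≤
      (∫⁻ ζ, ‖∫ t, (Set.Icc (s - T) (s + T)).indicator (fun t => w₁ t ζ) t‖ₑ ^ 2 ∂μ) ^ (1 / 2 : ℝ) *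
        (ENNReal.ofReal c₂ * n₂ s) := by
  filter_upwards [ae_lt_top h₂.measurable_bound h₂.lintegral_bound_ne_top] with s hs
  have hwindow (t : ℝ) : (timeStrip T).indicator (timePairing μ w₁ w₂) (t, s) =
      ∫ ζ, (Set.Icc (s - T) (s + T)).indicator (fun t => w₁ t ζ) t *
        (starRingEnd ℂ) (w₂ s ζ) ∂μ := by
    by_cases ht : (t, s) ∈ timeStrip T
    · simp only [Set.indicator_of_mem ht, Set.indicator_of_mem (mem_timeStrip_iff_mem_Icc.1 ht),
        timePairing]
    · simp [Set.indicator_of_notMem ht,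
        Set.indicator_of_notMem (mt mem_timeStrip_iff_mem_Icc.2 ht)]
  simp_rw [hwindow]
  exact (h₁.indicator measurableSet_Icc).enorm_integral_integral_mul_conj_le
    (h₂.measurable_apply s) (ENNReal.mul_ne_top ENNReal.ofReal_ne_top hs.ne) (h₂.lintegral_sq_le s)

theorem IsL2Curve.two_mul_enorm_integral_near_le (h₁ : IsL2Curve μ (x ^ 2) w₁ n₁)
    (h₂ : IsL2Curve μ (y ^ 2) w₂ n₂) (h₁₁ : IsDispersivePair μ lam (x⁻¹ * x⁻¹) w₁ w₁ n₁ n₁)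
    (hx : 0 < x) (hy : 0 < y) (hl : 0 < lam) (hr : 0 < r) :
    2 * ‖∫ p in timeStrip (lam * r ^ 4), timePairing μ w₁ w₂ p ∂(volume.prod volume)‖ₑ ≤
      ENNReal.ofReal (4 * lam * r ^ 3 * x * y ^ 2) * ((∫⁻ t, n₁ t ^ 2) + ∫⁻ t, n₂ t ^ 2) := by
  set T := lam * r ^ 4
  set G : ℝ → ℝ≥0∞ := fun s =>
    ∫⁻ ζ, ‖∫ t, (Set.Icc (s - T) (s + T)).indicator (fun t => w₁ t ζ) t‖ₑ ^ 2 ∂μ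
  obtain ⟨c, hc⟩ : ∃ c, c = 4 * lam * r ^ 3 * x / y ^ 2 := ⟨_, rfl⟩
  have hcpos : 0 < c := by rw [hc]; positivity
  have hstrip := measurableSet_timeStrip T
  rw [← integral_indicator hstrip,
    integral_prod_symm _ ((h₁.integrable_timePairing h₂).indicator hstrip)]
  calc _ ≤ 2 * ∫⁻ s, (G s) ^ (1 / 2 : ℝ) * (ENNReal.ofReal (y ^ 2) * n₂ s) := by
        gcongr
        exact (enorm_integral_le_lintegral_enorm _).trans
          (lintegral_mono_ae (h₁.ae_enorm_integral_indicator_timePairing_le h₂ T))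
    _ ≤ ENNReal.ofReal c * (∫⁻ s, (ENNReal.ofReal (y ^ 2) * n₂ s) ^ 2) +
        ENNReal.ofReal c⁻¹ * ∫⁻ s, G s :=
      two_mul_lintegral_rpow_half_mul_le _ (h₂.measurable_bound.const_mul _) hcpos
    _ ≤ ENNReal.ofReal c * (ENNReal.ofReal (y ^ 4) * ∫⁻ t, n₂ t ^ 2) + ENNReal.ofReal c⁻¹ *
        (ENNReal.ofReal (12 * lam ^ 2 * r ^ 6 * x ^ 2) * ∫⁻ t, n₁ t ^ 2) := by
      simp_rw [mul_pow, ← ENNReal.ofReal_pow (sq_nonneg y), ← pow_mul]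
      rw [lintegral_const_mul' _ _ ENNReal.ofReal_ne_top]
      gcongr
      exact h₁.lintegral_lintegral_enorm_integral_window_sq_le h₁₁ hx hl hr
    _ ≤ ENNReal.ofReal (4 * lam * r ^ 3 * x * y ^ 2) * (∫⁻ t, n₂ t ^ 2) +
        ENNReal.ofReal (4 * lam * r ^ 3 * x * y ^ 2) * ∫⁻ t, n₁ t ^ 2 := by
      rw [← mul_assoc, ← mul_assoc, ← ENNReal.ofReal_mul hcpos.le,
        ← ENNReal.ofReal_mul (inv_pos.2 hcpos).le]
      refine add_le_add (mul_le_mul_left (ENNReal.ofReal_le_ofReal ?_) _)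
        (mul_le_mul_left (ENNReal.ofReal_le_ofReal ?_) _)
      · have heq : c * y ^ 4 = 4 * lam * r ^ 3 * x * y ^ 2 := by rw [hc]; field_simp
        exact heq.le
      · calc c⁻¹ * (12 * lam ^ 2 * r ^ 6 * x ^ 2) = 3 * (lam * r ^ 3 * x * y ^ 2) := by
              rw [hc]; field_simp; norm_num
          _ ≤ 4 * (lam * r ^ 3 * x * y ^ 2) := by gcongr; norm_num
          _ = _ := by ring
    _ = _ := by rw [← mul_add, add_comm]

theorem IsL2Curve.two_mul_enorm_integral_le_near_add_far (h₁ : IsL2Curve μ (x ^ 2) w₁ n₁)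
    (h₂ : IsL2Curve μ (y ^ 2) w₂ n₂) (h₁₁ : IsDispersivePair μ lam (x⁻¹ * x⁻¹) w₁ w₁ n₁ n₁)
    (h₁₂ : IsDispersivePair μ lam (x⁻¹ * y⁻¹) w₁ w₂ n₁ n₂)
    (hx : 0 < x) (hy : 0 < y) (hl : 0 < lam) (hr : 0 < r) :
    2 * ‖∫ ζ, (∫ t, w₁ t ζ) * (starRingEnd ℂ) (∫ t, w₂ t ζ) ∂μ‖ₑ ≤
      ENNReal.ofReal (4 * lam * r ^ 3 * x * y ^ 2 + 4 * lam / r ^ 2 * (x⁻¹ * y⁻¹)) *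
        ((∫⁻ t, n₁ t ^ 2) + ∫⁻ t, n₂ t ^ 2) := by
  rw [h₁.integral_integral_mul_conj_integral h₂,
    ← integral_add_compl (measurableSet_timeStrip (lam * r ^ 4)) (h₁.integrable_timePairing h₂),
    ENNReal.ofReal_add (by positivity) (by positivity), add_mul]
  refine (mul_le_mul_right (enorm_add_le _ _) _).trans ?_
  rw [mul_add]
  refine add_le_add (h₁.two_mul_enorm_integral_near_le h₂ h₁₁ hx hy hl hr) ?_
  exact (mul_le_mul_right (enorm_integral_le_lintegral_enorm _) _).trans
    (h₁₂.two_mul_lintegral_far_le h₁.measurable_bound h₂.measurable_bound hl hr (by positivity))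

/- The radius `r = x^{-2/5} y^{-3/5}` balances the near and the far contribution. -/
theorem IsL2Curve.two_mul_enorm_integral_integral_mul_conj_integral_le
    (h₁ : IsL2Curve μ (x ^ 2) w₁ n₁) (h₂ : IsL2Curve μ (y ^ 2) w₂ n₂)
    (h₁₁ : IsDispersivePair μ lam (x⁻¹ * x⁻¹) w₁ w₁ n₁ n₁)
    (h₁₂ : IsDispersivePair μ lam (x⁻¹ * y⁻¹) w₁ w₂ n₁ n₂)
    (hx : 0 < x) (hy : 0 < y) (hl : 0 < lam) :
    2 * ‖∫ ζ, (∫ t, w₁ t ζ) * (starRingEnd ℂ) (∫ t, w₂ t ζ) ∂μ‖ₑ ≤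
      ENNReal.ofReal (8 * lam * (y / x) ^ (1 / 5 : ℝ)) *
        ((∫⁻ t, n₁ t ^ 2) + ∫⁻ t, n₂ t ^ 2) := by
  set a := x ^ (1 / 5 : ℝ)
  set b := y ^ (1 / 5 : ℝ)
  have hapos : 0 < a := by positivity
  have hbpos : 0 < b := by positivity
  have ha : x = a ^ 5 := by rw [← Real.rpow_natCast, ← Real.rpow_mul hx.le]; norm_num
  have hb : y = b ^ 5 := by rw [← Real.rpow_natCast, ← Real.rpow_mul hy.le]; norm_num
  have hr : 0 < (a ^ 2 * b ^ 3)⁻¹ := by positivity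
  refine (h₁.two_mul_enorm_integral_le_near_add_far h₂ h₁₁ h₁₂ hx hy hl hr).trans_eq ?_
  rw [Real.div_rpow hy.le hx.le]
  change _ = ENNReal.ofReal (8 * lam * (b / a)) * _
  congr 2
  rw [ha, hb]
  field_simp
  norm_num

end KeelTao

theorem summable_pow_natAbs {ρ : ℝ} (h0 : 0 ≤ ρ) (h1 : ρ < 1) :
    Summable fun n : ℤ => ρ ^ n.natAbs :=
  Summable.of_nat_of_neg (by simpa using summable_geometric_of_lt_one h0 h1)
    (by simpa using summable_geometric_of_lt_one h0 h1)

/-- The two-sided geometric series `∑_{n ∈ ℤ} ρ^{|n|}`. -/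
def geomSum (ρ : ℝ) : ℝ := ∑' n : ℤ, ρ ^ n.natAbs

theorem geomSum_pos {ρ : ℝ} (h0 : 0 ≤ ρ) (h1 : ρ < 1) : 0 < geomSum ρ := by
  have h : ρ ^ (0 : ℤ).natAbs ≤ geomSum ρ :=
    (summable_pow_natAbs h0 h1).le_tsum 0 fun n _ => by positivity
  exact one_pos.trans_le (by simpa using h)

theorem sum_pow_natAbs_sub_le {ρ : ℝ} (h0 : 0 ≤ ρ) (h1 : ρ < 1) (K : Finset ℤ) (k : ℤ) :
    ∑ l ∈ K, ENNReal.ofReal (ρ ^ (k - l).natAbs) ≤ ENNReal.ofReal (geomSum ρ) := by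
  rw [← ENNReal.ofReal_sum_of_nonneg fun _ _ => by positivity]
  refine ENNReal.ofReal_le_ofReal ?_
  have hreindex : ∑ l ∈ K, ρ ^ (k - l).natAbs =
      ∑ n ∈ K.map (Equiv.subLeft k).toEmbedding, ρ ^ n.natAbs := by
    rw [Finset.sum_map]; simp
  rw [hreindex]
  exact (summable_pow_natAbs h0 h1).sum_le_tsum _ fun n _ => by positivity

theorem sum_sum_pow_natAbs_sub_mul_add_le {ρ : ℝ} (h0 : 0 ≤ ρ) (h1 : ρ < 1) (K : Finset ℤ)
    (A : ℤ → ℝ≥0∞) :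
    ∑ k ∈ K, ∑ l ∈ K, ENNReal.ofReal (ρ ^ (k - l).natAbs) * (A k + A l) ≤
      2 * ENNReal.ofReal (geomSum ρ) * ∑ k ∈ K, A k := by
  have hrow : ∑ k ∈ K, ∑ l ∈ K, ENNReal.ofReal (ρ ^ (k - l).natAbs) * A k ≤
      ENNReal.ofReal (geomSum ρ) * ∑ k ∈ K, A k := by
    rw [Finset.mul_sum]
    refine Finset.sum_le_sum fun k _ => ?_
    rw [← Finset.sum_mul]
    gcongr
    exact sum_pow_natAbs_sub_le h0 h1 K k
  have hcol : ∑ k ∈ K, ∑ l ∈ K, ENNReal.ofReal (ρ ^ (k - l).natAbs) * A l =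
      ∑ k ∈ K, ∑ l ∈ K, ENNReal.ofReal (ρ ^ (k - l).natAbs) * A k := by
    rw [Finset.sum_comm]
    refine Finset.sum_congr rfl fun k _ => Finset.sum_congr rfl fun l _ => ?_
    rw [← Int.natAbs_neg, neg_sub]
  simp_rw [mul_add, Finset.sum_add_distrib]
  rw [hcol, ← two_mul, mul_assoc]
  gcongr

theorem zpow_div_zpow_rpow_eq_pow_natAbs {k l : ℤ} (h : l ≤ k) :
    ((2 : ℝ) ^ l / 2 ^ k) ^ (1 / 5 : ℝ) = ((1 / 2 : ℝ) ^ (1 / 5 : ℝ)) ^ (k - l).natAbs := by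
  rw [← zpow_sub₀ two_ne_zero, ← Real.rpow_natCast, ← Real.rpow_mul (by norm_num), mul_comm,
    Real.rpow_mul (by norm_num), Real.rpow_natCast, one_div (2 : ℝ), inv_pow, ← zpow_natCast,
    ← zpow_neg]
  congr 2
  omega

/-- The constant of the Keel–Tao estimate; `(1/2)^{1/5}` is the decay rate of the bilinear
estimate in the distance between two dyadic scales. -/
def keelTaoConst : ℝ := 8 * geomSum ((1 / 2) ^ (1 / 5 : ℝ))

theorem keelTaoConst_pos : 0 < keelTaoConst :=
  mul_pos (by norm_num) (geomSum_pos (by positivity)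
    (Real.rpow_lt_one (by norm_num) (by norm_num) (by norm_num)))

section KeelTaoSum

variable {Z : Type*} [MeasurableSpace Z] {μ : Measure Z} [SFinite μ] {w : ℤ → ℝ → Z → ℂ}
  {n : ℤ → ℝ → ℝ≥0∞} {lam : ℝ}

theorem two_mul_enorm_integral_dyadic_le (hw : ∀ k, IsL2Curve μ (((2 : ℝ) ^ k) ^ 2) (w k) (n k))
    (hl : 0 < lam)
    (hdisp : ∀ k l, IsDispersivePair μ lam (((2 : ℝ) ^ k)⁻¹ * ((2 : ℝ) ^ l)⁻¹) (w k) (w l)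
      (n k) (n l)) (k l : ℤ) :
    2 * ‖∫ ζ, (∫ t, w k t ζ) * (starRingEnd ℂ) (∫ t, w l t ζ) ∂μ‖ₑ ≤
      ENNReal.ofReal (8 * lam) * (ENNReal.ofReal (((1 / 2 : ℝ) ^ (1 / 5 : ℝ)) ^ (k - l).natAbs) *
        ((∫⁻ t, n k t ^ 2) + ∫⁻ t, n l t ^ 2)) := by
  wlog hkl : l ≤ k generalizing k l with hsymm
  · rw [← RCLike.enorm_conj, ← integral_conj, ← Int.natAbs_neg, neg_sub, add_comm]
    simp_rw [map_mul, Complex.conj_conj, mul_comm ((starRingEnd ℂ) _)]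
    exact hsymm l k (le_of_not_ge hkl)
  rw [← zpow_div_zpow_rpow_eq_pow_natAbs hkl, ← mul_assoc, ← ENNReal.ofReal_mul (by positivity)]
  exact (hw k).two_mul_enorm_integral_integral_mul_conj_integral_le (hw l) (hdisp k k) (hdisp k l)
    (by positivity) (by positivity) hl

theorem lintegral_enorm_sum_integral_sq_le (K : Finset ℤ)
    (hw : ∀ k, IsL2Curve μ (((2 : ℝ) ^ k) ^ 2) (w k) (n k)) (hl : 0 < lam)
    (hdisp : ∀ k l, IsDispersivePair μ lam (((2 : ℝ) ^ k)⁻¹ * ((2 : ℝ) ^ l)⁻¹) (w k) (w l)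
      (n k) (n l)) :
    ∫⁻ ζ, ‖∑ k ∈ K, ∫ t, w k t ζ‖ₑ ^ 2 ∂μ ≤
      ENNReal.ofReal (keelTaoConst * lam) * ∑ k ∈ K, ∫⁻ t, n k t ^ 2 := by
  have hinteg (k l : ℤ) := (hw k).integrable_integral_mul_conj_integral (hw l)
  have hexpand (ζ : Z) : (∑ k ∈ K, ∫ t, w k t ζ) * (starRingEnd ℂ) (∑ k ∈ K, ∫ t, w k t ζ) =
      ∑ k ∈ K, ∑ l ∈ K, (∫ t, w k t ζ) * (starRingEnd ℂ) (∫ t, w l t ζ) := by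
    rw [map_sum, Finset.sum_mul_sum]
  have hrow (k : ℤ) := integrable_finsetSum K fun l _ => hinteg k l
  rw [lintegral_enorm_sq_eq_enorm_integral_mul_conj
    (by simp_rw [hexpand]; exact integrable_finsetSum _ fun k _ => hrow k)]
  simp_rw [hexpand]
  rw [integral_finsetSum _ fun k _ => hrow k]
  simp_rw [integral_finsetSum K fun l _ => hinteg _ l]
  refine (ENNReal.mul_le_mul_iff_right two_ne_zero ENNReal.ofNat_ne_top).1 ?_
  calc _ ≤ 2 * ∑ k ∈ K, ∑ l ∈ K,
        ‖∫ ζ, (∫ t, w k t ζ) * (starRingEnd ℂ) (∫ t, w l t ζ) ∂μ‖ₑ := by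
        gcongr
        exact (enorm_sum_le _ _).trans (Finset.sum_le_sum fun k _ => enorm_sum_le _ _)
    _ ≤ ENNReal.ofReal (8 * lam) * ∑ k ∈ K, ∑ l ∈ K,
        ENNReal.ofReal (((1 / 2 : ℝ) ^ (1 / 5 : ℝ)) ^ (k - l).natAbs) *
          ((∫⁻ t, n k t ^ 2) + ∫⁻ t, n l t ^ 2) := by
      simp_rw [Finset.mul_sum]
      exact Finset.sum_le_sum fun k _ => Finset.sum_le_sum fun l _ =>
        two_mul_enorm_integral_dyadic_le hw hl hdisp k l
    _ ≤ ENNReal.ofReal (8 * lam) * (2 * ENNReal.ofReal (geomSum ((1 / 2) ^ (1 / 5 : ℝ))) *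
        ∑ k ∈ K, ∫⁻ t, n k t ^ 2) := by
      gcongr
      exact sum_sum_pow_natAbs_sub_mul_add_le (by positivity)
        (Real.rpow_lt_one (by norm_num) (by norm_num) (by norm_num)) K _
    _ = _ := by
      rw [keelTaoConst, mul_right_comm 8, ENNReal.ofReal_mul (by positivity : 0 ≤ 8 * lam)]
      ring

end KeelTaoSum

/-! ### Duality for a single frequency block -/

theorem rpow_half_sq (x : ℝ≥0∞) : (x ^ (1 / 2 : ℝ)) ^ 2 = x := by
  rw [← ENNReal.rpow_natCast, ← ENNReal.rpow_mul]
  norm_num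

theorem measurable_invFourier_uncurry {F : ℝ → ℝ × E2 → ℂ} (hF : Measurable (Function.uncurry F)) :
    Measurable fun p : ℝ × (ℝ × E2) => invFourier (F p.1) p.2 := by
  have hkernel : Measurable fun q : (ℝ × (ℝ × E2)) × (ℝ × E2) =>
      (Circle.exp (pairing q.1.2 q.2) : ℂ) * F q.1.1 q.2 :=
    (by fun_prop : Measurable fun q : (ℝ × (ℝ × E2)) × (ℝ × E2) =>
      (Circle.exp (pairing q.1.2 q.2) : ℂ)).mul
    (hF.comp (by fun_prop : Measurable fun q : (ℝ × (ℝ × E2)) × (ℝ × E2) => (q.1.1, q.2)))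
  exact hkernel.stronglyMeasurable.integral_prod_right'.measurable

/-- The free KP-II evolution `S(t)` of the function with Fourier transform `f`, up to the factor
`(2π)³`. -/
def evolution (f : ℝ × E2 → ℂ) (t : ℝ) (z : ℝ × E2) : ℂ :=
  invFourier (fun ζ => (Circle.exp (t * omega ζ) : ℂ) * f ζ) z

theorem norm_evolution_le (f : ℝ × E2 → ℂ) (t : ℝ) (z : ℝ × E2) :
    ‖evolution f t z‖ ≤ ∫ ζ, ‖f ζ‖ :=
  (norm_invFourier_le _ _).trans_eq (by simp only [norm_mul, Circle.norm_coe, one_mul])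

section Duality

variable {f : ℝ × E2 → ℂ} {F : ℝ → ℝ × E2 → ℂ}

theorem measurable_evolution (hf : Measurable f) : Measurable (Function.uncurry (evolution f)) :=
  measurable_invFourier_uncurry (F := fun t ζ => (Circle.exp (t * omega ζ) : ℂ) * f ζ)
    (by fun_prop : Measurable fun p : ℝ × (ℝ × E2) => (Circle.exp (p.1 * omega p.2) : ℂ) * f p.2)

theorem integrable_evolution_kernel (hf : Integrable f)
    (hF : Integrable (Function.uncurry F) (volume.prod volume)) :
    Integrable (fun q : (ℝ × (ℝ × E2)) × (ℝ × E2) =>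
      (Circle.exp (pairing q.1.2 q.2 + q.1.1 * omega q.2) : ℂ) * (F q.1.1 q.1.2 * f q.2))
      ((volume.prod volume).prod volume) :=
  integrable_circleExp_mul (hF.mul_prod hf) (by fun_prop)

theorem integral_evolution_kernel (hF : Integrable (Function.uncurry F) (volume.prod volume))
    (ζ : ℝ × E2) :
    ∫ p : ℝ × (ℝ × E2), (Circle.exp (pairing p.2 ζ + p.1 * omega ζ) : ℂ) * (F p.1 p.2 * f ζ)
        ∂(volume.prod volume) =
      f ζ * ∫ t, (Circle.exp (t * omega ζ) : ℂ) * invFourier (F t) ζ := by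
  have hinteg : Integrable (fun p : ℝ × (ℝ × E2) =>
      (Circle.exp (pairing p.2 ζ + p.1 * omega ζ) : ℂ) * F p.1 p.2) (volume.prod volume) :=
    integrable_circleExp_mul hF (by fun_prop)
  simp_rw [← mul_assoc]
  rw [integral_mul_const, mul_comm, integral_prod _ hinteg]
  congr 2 with t
  rw [invFourier, ← integral_const_mul]
  congr 1 with z
  rw [coe_circleExp_add, pairing_comm]
  ring

theorem integrable_mul_integral_invFourier (hf : Integrable f)
    (hF : Integrable (Function.uncurry F) (volume.prod volume)) :
    Integrable fun ζ => f ζ * ∫ t, (Circle.exp (t * omega ζ) : ℂ) * invFourier (F t) ζ :=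
  (integrable_evolution_kernel hf hF).integral_prod_right.congr
    (Eventually.of_forall fun ζ => integral_evolution_kernel hF ζ)

theorem integral_evolution_mul (hf : Integrable f)
    (hF : Integrable (Function.uncurry F) (volume.prod volume)) :
    ∫ p : ℝ × (ℝ × E2), evolution f p.1 p.2 * F p.1 p.2 ∂(volume.prod volume) =
      ∫ ζ, f ζ * ∫ t, (Circle.exp (t * omega ζ) : ℂ) * invFourier (F t) ζ := by
  have hkernel (p : ℝ × (ℝ × E2)) : evolution f p.1 p.2 * F p.1 p.2 =
      ∫ ζ, (Circle.exp (pairing p.2 ζ + p.1 * omega ζ) : ℂ) * (F p.1 p.2 * f ζ) := by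
    rw [evolution, invFourier, ← integral_mul_const]
    congr 1 with ζ
    rw [coe_circleExp_add]
    ring
  simp_rw [hkernel]
  rw [integral_integral_swap (integrable_evolution_kernel hf hF)]
  exact integral_congr_ae (Eventually.of_forall fun ζ => integral_evolution_kernel hF ζ)

end Duality

/-- The constant `(2π)³` in Plancherel's theorem. -/
def plancherelConst : ℝ := (2 * Real.pi) ^ (Module.finrank ℝ E2 + 1)

theorem one_le_plancherelConst : 1 ≤ plancherelConst :=
  one_le_pow₀ (by linarith [Real.pi_gt_three])

/-- The scale `lam` for which the dispersive estimate of the block `freqBlock a` reads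
`(lam / |τ|)^{3/2}`. -/
def dispersiveScale (a : ℝ) : ℝ := 48 ^ (2 / 3 : ℝ) * a ^ (1 / 3 : ℝ)

theorem dispersiveScale_pos {a : ℝ} (ha : 0 < a) : 0 < dispersiveScale a := by
  unfold dispersiveScale
  positivity

theorem dispersiveScale_div_rpow {a τ : ℝ} (ha : 0 < a) (hτ : 0 < τ) :
    (dispersiveScale a / τ) ^ (3 / 2 : ℝ) = 48 * (√(a / τ) / τ) := by
  have hτ32 : τ ^ (3 / 2 : ℝ) = √τ * τ := by
    rw [Real.sqrt_eq_rpow, ← Real.rpow_add_one hτ.ne']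
    norm_num
  rw [dispersiveScale, Real.div_rpow (by positivity) hτ.le, Real.mul_rpow (by positivity)
    (by positivity), ← Real.rpow_mul (by norm_num), ← Real.rpow_mul ha.le, hτ32,
    Real.sqrt_div ha.le, Real.sqrt_eq_rpow a]
  norm_num
  field_simp

/-- A curve `t ↦ F t` of functions on `Y` that for each `t` satisfies the `L¹` and `L²` bounds of
a function of height `x⁵ n t` on a set of measure `x⁻⁶`, so that `n t` is its `L^{6/5}` size. -/
structure IsAtom {Y : Type*} [MeasureSpace Y] (x : ℝ) (F : ℝ → Y → ℂ) (n : ℝ → ℝ≥0∞) :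
    Prop where
  measurable : Measurable (Function.uncurry F)
  measurable_bound : Measurable n
  bound_ne_top : ∀ t, n t ≠ ∞
  lintegral_bound_ne_top : ∫⁻ t, n t ≠ ∞
  lintegral_le : ∀ t, ∫⁻ z, ‖F t z‖ₑ ≤ ENNReal.ofReal x⁻¹ * n t
  lintegral_sq_le : ∀ t, ∫⁻ z, ‖F t z‖ₑ ^ 2 ≤ (ENNReal.ofReal (x ^ 2) * n t) ^ 2

theorem IsAtom.integrable_apply {Y : Type*} [MeasureSpace Y] {x : ℝ} {F : ℝ → Y → ℂ}
    {n : ℝ → ℝ≥0∞} (h : IsAtom x F n) (t : ℝ) : Integrable (F t) :=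
  ⟨h.measurable.of_uncurry_left.aestronglyMeasurable, (h.lintegral_le t).trans_lt
    (ENNReal.mul_lt_top ENNReal.ofReal_lt_top (h.bound_ne_top t).lt_top)⟩

theorem IsAtom.lintegral_sq_ne_top {Y : Type*} [MeasureSpace Y] {x : ℝ} {F : ℝ → Y → ℂ}
    {n : ℝ → ℝ≥0∞} (h : IsAtom x F n) (t : ℝ) : ∫⁻ z, ‖F t z‖ₑ ^ 2 ≠ ∞ :=
  ne_top_of_le_ne_top (ENNReal.pow_ne_top (ENNReal.mul_ne_top ENNReal.ofReal_ne_top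
    (h.bound_ne_top t))) (h.lintegral_sq_le t)

theorem IsAtom.integrable_uncurry {Y : Type*} [MeasureSpace Y]
    [SFinite (volume : Measure Y)] {x : ℝ} {F : ℝ → Y → ℂ} {n : ℝ → ℝ≥0∞} (h : IsAtom x F n) :
    Integrable (Function.uncurry F) (volume.prod volume) := by
  refine ⟨h.measurable.aestronglyMeasurable, ?_⟩
  rw [hasFiniteIntegral_iff_enorm, lintegral_prod _ h.measurable.enorm.aemeasurable]
  refine (lintegral_mono h.lintegral_le).trans_lt ?_
  rw [lintegral_const_mul _ h.measurable_bound]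
  exact ENNReal.mul_lt_top ENNReal.ofReal_lt_top h.lintegral_bound_ne_top.lt_top

/-- The adjoint of the evolution restricted to the block `freqBlock a`, applied to `F` at time `t`
and seen on the Fourier side. -/
def dualCurve (a : ℝ) (F : ℝ → ℝ × E2 → ℂ) (t : ℝ) (ζ : ℝ × E2) : ℂ :=
  (freqBlock a).indicator (fun ζ => (Circle.exp (t * omega ζ) : ℂ) * invFourier (F t) ζ) ζ

section DualCurve

variable {a x y : ℝ} {F G : ℝ → ℝ × E2 → ℂ} {m n : ℝ → ℝ≥0∞}

theorem measurable_dualCurve (a : ℝ) (hF : Measurable (Function.uncurry F)) :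
    Measurable (Function.uncurry (dualCurve a F)) :=
  ((by fun_prop : Measurable fun p : ℝ × (ℝ × E2) => (Circle.exp (p.1 * omega p.2) : ℂ)).mul
    (measurable_invFourier_uncurry hF)).indicator (measurable_snd (measurableSet_freqBlock a))

theorem enorm_dualCurve_le (a : ℝ) (F : ℝ → ℝ × E2 → ℂ) (t : ℝ) (ζ : ℝ × E2) :
    ‖dualCurve a F t ζ‖ₑ ≤ ‖invFourier (F t) ζ‖ₑ :=
  (enorm_indicator_le_enorm_self _ _).trans_eq
    (enorm_eq_iff_norm_eq.2 (by rw [norm_mul, Circle.norm_coe, one_mul]))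

theorem dualCurve_mul_conj (a : ℝ) (F G : ℝ → ℝ × E2 → ℂ) (t s : ℝ) (ζ : ℝ × E2) :
    dualCurve a F t ζ * (starRingEnd ℂ) (dualCurve a G s ζ) =
      (freqBlock a).indicator (fun ζ => (Circle.exp ((t - s) * omega ζ) : ℂ) *
        (invFourier (F t) ζ * (starRingEnd ℂ) (invFourier (G s) ζ))) ζ := by
  by_cases hζ : ζ ∈ freqBlock a
  · simp only [dualCurve, Set.indicator_of_mem hζ]
    rw [map_mul (starRingEnd ℂ), conj_circleExp, sub_mul, sub_eq_add_neg, coe_circleExp_add]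
    ring
  · simp [dualCurve, hζ]

theorem IsAtom.isL2Curve_dualCurve (h : IsAtom x F n) (a : ℝ) :
    IsL2Curve volume (x ^ 2) (dualCurve a F) fun t => ENNReal.ofReal (√plancherelConst) * n t where
  measurable := measurable_dualCurve a h.measurable
  measurable_bound := h.measurable_bound.const_mul _
  lintegral_bound_ne_top := by
    rw [lintegral_const_mul _ h.measurable_bound]
    exact ENNReal.mul_ne_top ENNReal.ofReal_ne_top h.lintegral_bound_ne_top
  lintegral_sq_le t :=
    calc _ ≤ ∫⁻ ζ, ‖invFourier (F t) ζ‖ₑ ^ 2 := by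
          gcongr with ζ
          exact enorm_dualCurve_le a F t ζ
      _ ≤ ENNReal.ofReal plancherelConst * ∫⁻ z, ‖F t z‖ₑ ^ 2 :=
        lintegral_invFourier_sq_le (h.integrable_apply t)
      _ ≤ ENNReal.ofReal plancherelConst * (ENNReal.ofReal (x ^ 2) * n t) ^ 2 := by
        gcongr
        exact h.lintegral_sq_le t
      _ = _ := by
        nth_rw 1 [← Real.sq_sqrt (zero_le_one.trans one_le_plancherelConst)]
        rw [ENNReal.ofReal_pow (Real.sqrt_nonneg _)]
        ring

theorem IsAtom.isDispersivePair_dualCurve (hF : IsAtom x F m) (hG : IsAtom y G n) (ha : 0 < a)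
    (hx : 0 < x) :
    IsDispersivePair volume (dispersiveScale a) (x⁻¹ * y⁻¹) (dualCurve a F) (dualCurve a G)
      (fun t => ENNReal.ofReal (√plancherelConst) * m t)
      (fun t => ENNReal.ofReal (√plancherelConst) * n t) := by
  intro t s hts
  have hτ := sub_ne_zero.2 hts
  have hconst : 1 ≤ ENNReal.ofReal (√plancherelConst) :=
    ENNReal.one_le_ofReal.2 (Real.one_le_sqrt.2 one_le_plancherelConst)
  simp_rw [timePairing, dualCurve_mul_conj]
  rw [integral_indicator (measurableSet_freqBlock a)]
  calc _ ≤ ENNReal.ofReal (48 * (√(a / |t - s|) / |t - s|)) *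
        ((∫⁻ z, ‖F t z‖ₑ) * ∫⁻ z, ‖G s z‖ₑ) :=
        enorm_setIntegral_freqBlock_le ha hτ (hF.integrable_apply t) (hG.integrable_apply s)
          (hF.lintegral_sq_ne_top t) (hG.lintegral_sq_ne_top s)
    _ ≤ ENNReal.ofReal ((dispersiveScale a / |t - s|) ^ (3 / 2 : ℝ)) *
        ((ENNReal.ofReal x⁻¹ * m t) * (ENNReal.ofReal y⁻¹ * n s)) := by
      rw [dispersiveScale_div_rpow ha (abs_pos.2 hτ)]
      exact mul_le_mul_right (mul_le_mul' (hF.lintegral_le t) (hG.lintegral_le s)) _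
    _ = ENNReal.ofReal ((dispersiveScale a / |t - s|) ^ (3 / 2 : ℝ) * (x⁻¹ * y⁻¹)) *
        (m t * n s) := by
      have := dispersiveScale_pos ha
      rw [ENNReal.ofReal_mul (by positivity), ENNReal.ofReal_mul (by positivity)]
      ring
    _ ≤ _ := mul_le_mul_right
      (mul_le_mul' (le_mul_of_one_le_left' hconst) (le_mul_of_one_le_left' hconst)) _

end DualCurve

/-- The constant of the dual Strichartz estimate for a block, without its dependence on the
frequency. -/
def dualConst : ℝ := keelTaoConst * 48 ^ (2 / 3 : ℝ) * plancherelConst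

theorem dualConst_pos : 0 < dualConst :=
  mul_pos (mul_pos keelTaoConst_pos (by positivity)) (one_pos.trans_le one_le_plancherelConst)

section AtomicDuality

variable {a : ℝ} {f : ℝ × E2 → ℂ} {F : ℤ → ℝ → ℝ × E2 → ℂ} {n : ℤ → ℝ → ℝ≥0∞}

theorem lintegral_enorm_sum_integral_dualCurve_sq_le (ha : 0 < a) (K : Finset ℤ)
    (hF : ∀ k, IsAtom ((2 : ℝ) ^ k) (F k) (n k)) :
    ∫⁻ ζ, ‖∑ k ∈ K, ∫ t, dualCurve a (F k) t ζ‖ₑ ^ 2 ≤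
      ENNReal.ofReal (dualConst * a ^ (1 / 3 : ℝ)) * ∑ k ∈ K, ∫⁻ t, n k t ^ 2 := by
  refine (lintegral_enorm_sum_integral_sq_le K (fun k => (hF k).isL2Curve_dualCurve a)
    (dispersiveScale_pos ha)
    fun k l => (hF k).isDispersivePair_dualCurve (hF l) ha (by positivity)).trans_eq ?_
  have hP := zero_le_one.trans one_le_plancherelConst
  simp_rw [mul_pow, ← ENNReal.ofReal_pow (Real.sqrt_nonneg _), Real.sq_sqrt hP,
    lintegral_const_mul' _ _ ENNReal.ofReal_ne_top]
  rw [← Finset.mul_sum, ← mul_assoc,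
    ← ENNReal.ofReal_mul (mul_pos keelTaoConst_pos (dispersiveScale_pos ha)).le, dualConst,
    dispersiveScale]
  congr 2
  ring

theorem enorm_sum_integral_evolution_mul_le (ha : 0 < a) (hf : Integrable f) (hfm : Measurable f)
    (hsupp : ∀ ζ ∉ freqBlock a, f ζ = 0) (K : Finset ℤ)
    (hF : ∀ k, IsAtom ((2 : ℝ) ^ k) (F k) (n k)) :
    ‖∑ k ∈ K, ∫ p : ℝ × (ℝ × E2), evolution f p.1 p.2 * F k p.1 p.2 ∂(volume.prod volume)‖ₑ ≤
      (∫⁻ ζ, ‖f ζ‖ₑ ^ 2) ^ (1 / 2 : ℝ) *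
        (ENNReal.ofReal (dualConst * a ^ (1 / 3 : ℝ)) *
          ∑ k ∈ K, ∫⁻ t, n k t ^ 2) ^ (1 / 2 : ℝ) := by
  have hdual (k : ℤ) (ζ : ℝ × E2) :
      f ζ * ∫ t, (Circle.exp (t * omega ζ) : ℂ) * invFourier (F k t) ζ =
        f ζ * ∫ t, dualCurve a (F k) t ζ := by
    by_cases hζ : ζ ∈ freqBlock a
    · simp only [dualCurve, Set.indicator_of_mem hζ]
    · simp only [hsupp ζ hζ, zero_mul]
  have hinteg (k : ℤ) := integrable_mul_integral_invFourier hf (hF k).integrable_uncurry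
  simp_rw [hdual] at hinteg
  have hmeas (k : ℤ) : Measurable fun ζ => ∫ t, dualCurve a (F k) t ζ :=
    ((measurable_dualCurve a (hF k).measurable).comp
      measurable_swap).stronglyMeasurable.integral_prod_right'.measurable
  simp_rw [fun k => integral_evolution_mul hf (hF k).integrable_uncurry, hdual]
  rw [← integral_finsetSum _ fun k _ => hinteg k]
  simp_rw [← Finset.mul_sum]
  refine (enorm_integral_le_lintegral_enorm _).trans ?_
  simp_rw [enorm_mul]
  refine lintegral_mul_le_of_lintegral_sq_le (by fun_prop)
    (Finset.measurable_sum _ fun k _ => hmeas k).enorm.aemeasurable ?_ ?_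
  · rw [rpow_half_sq]
  · rw [rpow_half_sq]
    exact lintegral_enorm_sum_integral_dualCurve_sq_le ha K hF

end AtomicDuality

/-! ### Atomic decomposition into level sets -/

section LevelDecomposition

variable {Y : Type*} [MeasureSpace Y] {v : ℝ → Y → ℂ}

/-- The norm of `v t` in `L⁶`, which is `0` also when that norm is infinite. -/
def sixNorm (v : ℝ → Y → ℂ) (t : ℝ) : ℝ := ((∫⁻ z, ‖v t z‖ₑ ^ (6 : ℝ)) ^ (1 / 6 : ℝ)).toReal

/-- The set where `|v|` is comparable to `2^k` times the `L⁶` norm of its time slice. -/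
def levelSet (v : ℝ → Y → ℂ) (k : ℤ) : Set (ℝ × Y) :=
  {p | 0 < sixNorm v p.1 ∧ (2 : ℝ) ^ k * sixNorm v p.1 ≤ ‖v p.1 p.2‖ ∧
    ‖v p.1 p.2‖ < (2 : ℝ) ^ (k + 1) * sixNorm v p.1}

/-- The part of `(|v| / ‖v t‖_{L⁶})⁴` on the `k`-th level set. -/
def levelWeight (v : ℝ → Y → ℂ) (k : ℤ) (t : ℝ) (z : Y) : ℝ :=
  (levelSet v k).indicator (fun p => (‖v p.1 p.2‖ / sixNorm v p.1) ^ 4) (t, z)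

/-- The part of the dual function `|v|⁴ v̄ / ‖v t‖_{L⁶}⁴` on the `k`-th level set. -/
def levelAtom (v : ℝ → Y → ℂ) (k : ℤ) (t : ℝ) (z : Y) : ℂ :=
  levelWeight v k t z * (starRingEnd ℂ) (v t z)

/-- The integral of `v` against its `k`-th level atom; these add up to `‖v t‖_{L⁶}²`. -/
def levelEnergy (v : ℝ → Y → ℂ) (k : ℤ) (t : ℝ) : ℝ≥0∞ :=
  ∫⁻ z, ENNReal.ofReal (levelWeight v k t z * ‖v t z‖ ^ 2)

/-- The `L²` norm of the `k`-th level atom, rescaled to an `L^{6/5}` size. -/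
def levelNorm (v : ℝ → Y → ℂ) (k : ℤ) (t : ℝ) : ℝ≥0∞ :=
  (ENNReal.ofReal (((2 : ℝ) ^ k) ^ 4)⁻¹ * ∫⁻ z, ‖levelAtom v k t z‖ₑ ^ 2) ^ (1 / 2 : ℝ)

theorem levelWeight_nonneg (v : ℝ → Y → ℂ) (k : ℤ) (t : ℝ) (z : Y) : 0 ≤ levelWeight v k t z :=
  Set.indicator_nonneg (fun p _ => by positivity) _

theorem levelWeight_le (v : ℝ → Y → ℂ) (k : ℤ) (t : ℝ) (z : Y) :
    levelWeight v k t z ≤ 16 * ((2 : ℝ) ^ k) ^ 4 := by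
  refine Set.indicator_le' (g := fun _ => 16 * ((2 : ℝ) ^ k) ^ 4) (fun p hp => ?_)
    (fun p _ => by positivity) (t, z)
  obtain ⟨hpos, -, hlt⟩ := hp
  have hratio : ‖v p.1 p.2‖ / sixNorm v p.1 ≤ 2 * 2 ^ k := by
    rw [div_le_iff₀ hpos, mul_comm 2, ← zpow_add_one₀ two_ne_zero]
    exact hlt.le
  calc _ ≤ (2 * (2 : ℝ) ^ k) ^ 4 := by gcongr
    _ = _ := by ring

theorem norm_levelAtom (v : ℝ → Y → ℂ) (k : ℤ) (t : ℝ) (z : Y) :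
    ‖levelAtom v k t z‖ = levelWeight v k t z * ‖v t z‖ := by
  rw [levelAtom, norm_mul, Complex.norm_real, RCLike.norm_conj,
    Real.norm_of_nonneg (levelWeight_nonneg v k t z)]

theorem enorm_levelAtom_sq_le (v : ℝ → Y → ℂ) (k : ℤ) (t : ℝ) (z : Y) :
    ‖levelAtom v k t z‖ₑ ^ 2 ≤ ENNReal.ofReal (16 * ((2 : ℝ) ^ k) ^ 4) *
      ENNReal.ofReal (levelWeight v k t z * ‖v t z‖ ^ 2) := by
  have hw := levelWeight_nonneg v k t z
  rw [← ofReal_norm, ← ENNReal.ofReal_pow (norm_nonneg _), ← ENNReal.ofReal_mul (by positivity),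
    norm_levelAtom]
  refine ENNReal.ofReal_le_ofReal ?_
  calc _ = levelWeight v k t z * (levelWeight v k t z * ‖v t z‖ ^ 2) := by ring
    _ ≤ _ := by gcongr; exact levelWeight_le v k t z

theorem levelNorm_sq (v : ℝ → Y → ℂ) (k : ℤ) (t : ℝ) :
    levelNorm v k t ^ 2 =
      ENNReal.ofReal (((2 : ℝ) ^ k) ^ 4)⁻¹ * ∫⁻ z, ‖levelAtom v k t z‖ₑ ^ 2 :=
  rpow_half_sq _

theorem levelNorm_sq_le (v : ℝ → Y → ℂ) (k : ℤ) (t : ℝ) :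
    levelNorm v k t ^ 2 ≤ 16 * levelEnergy v k t := by
  rw [levelNorm_sq]
  calc _ ≤ ENNReal.ofReal (((2 : ℝ) ^ k) ^ 4)⁻¹ *
        (ENNReal.ofReal (16 * ((2 : ℝ) ^ k) ^ 4) * levelEnergy v k t) :=
        mul_le_mul_right ((lintegral_mono (enorm_levelAtom_sq_le v k t)).trans_eq
          (lintegral_const_mul' _ _ ENNReal.ofReal_ne_top)) _
    _ = _ := by
      rw [← mul_assoc, ← ENNReal.ofReal_mul (by positivity), mul_left_comm,
        inv_mul_cancel₀ (by positivity), mul_one, ENNReal.ofReal_ofNat]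

theorem lintegral_enorm_levelAtom_sq (v : ℝ → Y → ℂ) (k : ℤ) (t : ℝ) :
    ∫⁻ z, ‖levelAtom v k t z‖ₑ ^ 2 =
      (ENNReal.ofReal (((2 : ℝ) ^ k) ^ 2) * levelNorm v k t) ^ 2 := by
  rw [mul_pow, levelNorm_sq, ← ENNReal.ofReal_pow (by positivity), ← mul_assoc,
    ← ENNReal.ofReal_mul (by positivity), ← pow_mul, mul_inv_cancel₀ (by positivity),
    ENNReal.ofReal_one, one_mul]

theorem sixNorm_nonneg (v : ℝ → Y → ℂ) (t : ℝ) : 0 ≤ sixNorm v t := ENNReal.toReal_nonneg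

theorem ofReal_sixNorm_pow {t : ℝ} (hfin : ∫⁻ z, ‖v t z‖ₑ ^ (6 : ℝ) ≠ ∞) (m : ℕ) :
    ENNReal.ofReal (sixNorm v t) ^ m = (∫⁻ z, ‖v t z‖ₑ ^ (6 : ℝ)) ^ ((m : ℝ) / 6) := by
  rw [sixNorm, ENNReal.ofReal_toReal (ENNReal.rpow_ne_top_of_nonneg (by norm_num) hfin),
    ← ENNReal.rpow_natCast, ← ENNReal.rpow_mul, one_div_mul_eq_div]

theorem ofReal_sixNorm_pow_six {t : ℝ} (hfin : ∫⁻ z, ‖v t z‖ₑ ^ (6 : ℝ) ≠ ∞) :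
    ENNReal.ofReal (sixNorm v t) ^ 6 = ∫⁻ z, ‖v t z‖ₑ ^ (6 : ℝ) := by
  rw [ofReal_sixNorm_pow hfin, Nat.cast_ofNat, div_self (by norm_num), ENNReal.rpow_one]

theorem exists_mem_levelSet {t : ℝ} {z : Y} (ht : 0 < sixNorm v t) (hz : 0 < ‖v t z‖) :
    ∃ k, (t, z) ∈ levelSet v k := by
  obtain ⟨k, hle, hlt⟩ := exists_mem_Ico_zpow (div_pos hz ht) (one_lt_two (α := ℝ))
  exact ⟨k, ht, (le_div_iff₀ ht).1 hle, (div_lt_iff₀ ht).1 hlt⟩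

theorem ofReal_inv_mul_enorm_le_tsum_levelWeight {t : ℝ} (ht : 0 < sixNorm v t) (z : Y) :
    ENNReal.ofReal (sixNorm v t ^ 4)⁻¹ * ‖v t z‖ₑ ^ (6 : ℝ) ≤
      ∑' k, ENNReal.ofReal (levelWeight v k t z * ‖v t z‖ ^ 2) := by
  rcases (norm_nonneg (v t z)).eq_or_lt with hz | hz
  · rw [← ofReal_norm, ← hz]
    simp
  obtain ⟨k, hk⟩ := exists_mem_levelSet ht hz
  refine le_trans (le_of_eq ?_) (ENNReal.le_tsum k)
  rw [levelWeight, Set.indicator_of_mem hk, ← ofReal_norm, ENNReal.rpow_ofNat,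
    ← ENNReal.ofReal_pow hz.le, ← ENNReal.ofReal_mul (by positivity)]
  congr 1
  field_simp

theorem volume_levelSet_le (hv : Measurable (Function.uncurry v)) {t : ℝ}
    (hfin : ∫⁻ z, ‖v t z‖ₑ ^ (6 : ℝ) ≠ ∞) (k : ℤ) :
    volume (Prod.mk t ⁻¹' levelSet v k) ≤ ENNReal.ofReal (((2 : ℝ) ^ k) ^ 3)⁻¹ ^ 2 := by
  by_cases hN : 0 < sixNorm v t
  swap
  · have hempty : Prod.mk t ⁻¹' levelSet v k = ∅ :=
      Set.eq_empty_of_forall_notMem fun z hz => hN hz.1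
    rw [hempty, measure_empty]
    exact zero_le
  set ε := ENNReal.ofReal (2 ^ k * sixNorm v t) ^ 6 with hε
  have hsubset : Prod.mk t ⁻¹' levelSet v k ⊆ {z | ε ≤ ‖v t z‖ₑ ^ (6 : ℝ)} := by
    intro z hz
    change ε ≤ ‖v t z‖ₑ ^ (6 : ℝ)
    rw [hε, ENNReal.rpow_ofNat, ← ofReal_norm]
    exact pow_le_pow_left' (ENNReal.ofReal_le_ofReal hz.2.1) 6
  calc _ ≤ volume {z | ε ≤ ‖v t z‖ₑ ^ (6 : ℝ)} := measure_mono hsubset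
    _ ≤ (∫⁻ z, ‖v t z‖ₑ ^ (6 : ℝ)) / ε :=
      meas_ge_le_lintegral_div (hv.of_uncurry_left.enorm.pow_const _).aemeasurable
        (by positivity) (ENNReal.pow_ne_top ENNReal.ofReal_ne_top)
    _ = _ := by
      rw [← ofReal_sixNorm_pow_six hfin, hε, ← ENNReal.ofReal_pow hN.le,
        ← ENNReal.ofReal_pow (by positivity), ← ENNReal.ofReal_div_of_pos (by positivity),
        ← ENNReal.ofReal_pow (by positivity)]
      congr 1
      field_simp

section Measurability

variable [SFinite (volume : Measure Y)]

theorem measurable_sixNorm (hv : Measurable (Function.uncurry v)) : Measurable (sixNorm v) :=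
  ((hv.enorm.pow_const (6 : ℝ)).lintegral_prod_right'.pow_const _).ennreal_toReal

theorem measurableSet_levelSet (hv : Measurable (Function.uncurry v)) (k : ℤ) :
    MeasurableSet (levelSet v k) := by
  have hN : Measurable fun p : ℝ × Y => sixNorm v p.1 := (measurable_sixNorm hv).comp measurable_fst
  exact (measurableSet_lt measurable_const hN).inter
    ((measurableSet_le (hN.const_mul _) hv.norm).inter (measurableSet_lt hv.norm (hN.const_mul _)))

theorem measurable_levelWeight (hv : Measurable (Function.uncurry v)) (k : ℤ) :
    Measurable (Function.uncurry (levelWeight v k)) :=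
  ((hv.norm.div ((measurable_sixNorm hv).comp measurable_fst)).pow_const 4).indicator
    (measurableSet_levelSet hv k)

theorem measurable_levelAtom (hv : Measurable (Function.uncurry v)) (k : ℤ) :
    Measurable (Function.uncurry (levelAtom v k)) :=
  (Complex.measurable_ofReal.comp (measurable_levelWeight hv k)).mul
    (Complex.continuous_conj.measurable.comp hv)

theorem measurable_levelWeight_mul_sq (hv : Measurable (Function.uncurry v)) (k : ℤ) :
    Measurable fun p : ℝ × Y => levelWeight v k p.1 p.2 * ‖v p.1 p.2‖ ^ 2 :=
  (measurable_levelWeight hv k).mul (hv.norm.pow_const 2)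

theorem measurable_levelEnergy (hv : Measurable (Function.uncurry v)) (k : ℤ) :
    Measurable (levelEnergy v k) :=
  (measurable_levelWeight_mul_sq hv k).ennreal_ofReal.lintegral_prod_right'

theorem measurable_levelNorm (hv : Measurable (Function.uncurry v)) (k : ℤ) :
    Measurable (levelNorm v k) :=
  (((measurable_levelAtom hv k).enorm.pow_const 2).lintegral_prod_right'.const_mul _).pow_const _

theorem lintegral_enorm_levelAtom_le (hv : Measurable (Function.uncurry v)) {t : ℝ}
    (hfin : ∫⁻ z, ‖v t z‖ₑ ^ (6 : ℝ) ≠ ∞) (k : ℤ) :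
    ∫⁻ z, ‖levelAtom v k t z‖ₑ ≤ ENNReal.ofReal ((2 : ℝ) ^ k)⁻¹ * levelNorm v k t := by
  have hsupp : Function.support (fun z => ‖levelAtom v k t z‖ₑ) ⊆ Prod.mk t ⁻¹' levelSet v k := by
    intro z hz
    by_contra hmem
    have hmem' : (t, z) ∉ levelSet v k := hmem
    exact hz (by simp [levelAtom, levelWeight, hmem'])
  calc _ = ∫⁻ z in Prod.mk t ⁻¹' levelSet v k, ‖levelAtom v k t z‖ₑ * 1 := by
        simp_rw [mul_one]
        exact (setLIntegral_eq_of_support_subset hsupp).symm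
    _ ≤ ENNReal.ofReal (((2 : ℝ) ^ k) ^ 2) * levelNorm v k t *
        ENNReal.ofReal (((2 : ℝ) ^ k) ^ 3)⁻¹ := by
      refine lintegral_mul_le_of_lintegral_sq_le
        (measurable_levelAtom hv k).of_uncurry_left.enorm.aemeasurable aemeasurable_const
        ((setLIntegral_le_lintegral _ _).trans_eq (lintegral_enorm_levelAtom_sq v k t)) ?_
      rw [one_pow, setLIntegral_one]
      exact volume_levelSet_le hv hfin k
    _ = _ := by
      rw [mul_right_comm, ← ENNReal.ofReal_mul (by positivity)]
      congr 2
      field_simp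

theorem rpow_third_le_tsum_levelEnergy (hv : Measurable (Function.uncurry v)) {t : ℝ}
    (hfin : ∫⁻ z, ‖v t z‖ₑ ^ (6 : ℝ) ≠ ∞) :
    (∫⁻ z, ‖v t z‖ₑ ^ (6 : ℝ)) ^ (1 / 3 : ℝ) ≤ ∑' k, levelEnergy v k t := by
  have hsq : ENNReal.ofReal (sixNorm v t) ^ 2 = (∫⁻ z, ‖v t z‖ₑ ^ (6 : ℝ)) ^ (1 / 3 : ℝ) := by
    rw [ofReal_sixNorm_pow hfin]
    norm_num
  rw [← hsq]
  rcases (sixNorm_nonneg v t).eq_or_lt with hN | hN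
  · simp [← hN]
  calc _ = ENNReal.ofReal (sixNorm v t ^ 4)⁻¹ * ∫⁻ z, ‖v t z‖ₑ ^ (6 : ℝ) := by
        rw [← ofReal_sixNorm_pow_six hfin, ← ENNReal.ofReal_pow hN.le, ← ENNReal.ofReal_pow hN.le,
          ← ENNReal.ofReal_mul (by positivity)]
        congr 1
        field_simp
    _ ≤ ∫⁻ z, ∑' k, ENNReal.ofReal (levelWeight v k t z * ‖v t z‖ ^ 2) := by
      rw [← lintegral_const_mul' _ _ ENNReal.ofReal_ne_top]
      exact lintegral_mono (ofReal_inv_mul_enorm_le_tsum_levelWeight hN)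
    _ = _ := lintegral_tsum fun k =>
      ((measurable_levelWeight_mul_sq hv k).comp measurable_prodMk_left).ennreal_ofReal.aemeasurable

end Measurability

/-- A jointly measurable function on space-time that is bounded by `M` and vanishes outside the
product of a set of times `I` and a set `B`, both of finite measure. -/
structure IsBoundedOnBox (I : Set ℝ) (B : Set Y) (M : ℝ) (v : ℝ → Y → ℂ) : Prop where
  measurable : Measurable (Function.uncurry v)
  measurableSet_times : MeasurableSet I
  measurableSet_space : MeasurableSet B
  volume_times_ne_top : volume I ≠ ∞
  volume_space_ne_top : volume B ≠ ∞
  norm_le : ∀ t z, ‖v t z‖ ≤ M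
  eq_zero : ∀ t z, (t, z) ∉ I ×ˢ B → v t z = 0

variable {I : Set ℝ} {B : Set Y} {M : ℝ}

theorem lintegral_le_indicator_mul_volume (hB : MeasurableSet B) {g : ℝ → Y → ℝ≥0∞} {c : ℝ≥0∞}
    (hg : ∀ t z, g t z ≤ c) (hzero : ∀ t z, (t, z) ∉ I ×ˢ B → g t z = 0) (t : ℝ) :
    ∫⁻ z, g t z ≤ I.indicator (fun _ => c * volume B) t := by
  by_cases ht : t ∈ I
  · rw [Set.indicator_of_mem ht, ← setLIntegral_const, ← lintegral_indicator hB]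
    refine lintegral_mono fun z => ?_
    by_cases hz : z ∈ B
    · rw [Set.indicator_of_mem hz]
      exact hg t z
    · rw [hzero t z fun h => hz h.2]
      exact zero_le
  · simp [hzero t _ fun h => ht h.1]

namespace IsBoundedOnBox

theorem lintegral_six_ne_top (h : IsBoundedOnBox I B M v) (t : ℝ) :
    ∫⁻ z, ‖v t z‖ₑ ^ (6 : ℝ) ≠ ∞ := by
  have hle := lintegral_le_indicator_mul_volume (I := I) (c := ENNReal.ofReal M ^ (6 : ℝ))
    h.measurableSet_space (g := fun t z => ‖v t z‖ₑ ^ (6 : ℝ))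
    (fun t z => by gcongr; rw [← ofReal_norm]; exact ENNReal.ofReal_le_ofReal (h.norm_le t z))
    (fun t z hp => by simp [h.eq_zero t z hp]) t
  refine ne_top_of_le_ne_top ?_ (hle.trans (Set.indicator_le_self _ _ _))
  exact ENNReal.mul_ne_top (ENNReal.rpow_ne_top_of_nonneg (by norm_num) ENNReal.ofReal_ne_top)
    h.volume_space_ne_top

theorem levelEnergy_le (h : IsBoundedOnBox I B M v) (k : ℤ) (t : ℝ) :
    levelEnergy v k t ≤
      I.indicator (fun _ => ENNReal.ofReal (16 * ((2 : ℝ) ^ k) ^ 4 * M ^ 2) * volume B) t := by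
  refine lintegral_le_indicator_mul_volume h.measurableSet_space
    (g := fun t z => ENNReal.ofReal (levelWeight v k t z * ‖v t z‖ ^ 2))
    (fun t z => ENNReal.ofReal_le_ofReal ?_) (fun t z hp => by simp [h.eq_zero t z hp]) t
  gcongr
  · exact levelWeight_le v k t z
  · exact h.norm_le t z

theorem lintegral_levelEnergy_ne_top (h : IsBoundedOnBox I B M v) (k : ℤ) :
    ∫⁻ t, levelEnergy v k t ≠ ∞ := by
  refine ne_top_of_le_ne_top ?_ (lintegral_mono (h.levelEnergy_le k))
  rw [lintegral_indicator_const h.measurableSet_times]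
  exact ENNReal.mul_ne_top (ENNReal.mul_ne_top ENNReal.ofReal_ne_top h.volume_space_ne_top)
    h.volume_times_ne_top

theorem exists_levelNorm_le_indicator (h : IsBoundedOnBox I B M v) (k : ℤ) :
    ∃ c ≠ ∞, ∀ t, levelNorm v k t ≤ I.indicator (fun _ => c) t := by
  set c := ENNReal.ofReal (16 * ((2 : ℝ) ^ k) ^ 4 * M ^ 2) * volume B
  refine ⟨(16 * c) ^ (1 / 2 : ℝ), ?_, fun t => ?_⟩
  · exact ENNReal.rpow_ne_top_of_nonneg (by norm_num) (ENNReal.mul_ne_top (by norm_num)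
      (ENNReal.mul_ne_top ENNReal.ofReal_ne_top h.volume_space_ne_top))
  · have hsq := (levelNorm_sq_le v k t).trans (mul_le_mul_right (h.levelEnergy_le k t) _)
    by_cases ht : t ∈ I
    · rw [Set.indicator_of_mem ht] at hsq ⊢
      rwa [← ENNReal.pow_le_pow_left_iff two_ne_zero, rpow_half_sq]
    · rw [Set.indicator_of_notMem ht] at hsq ⊢
      simpa using hsq

theorem isAtom_levelAtom [SFinite (volume : Measure Y)] (h : IsBoundedOnBox I B M v) (k : ℤ) :
    IsAtom ((2 : ℝ) ^ k) (levelAtom v k) (levelNorm v k) := by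
  obtain ⟨c, hc, hle⟩ := h.exists_levelNorm_le_indicator k
  exact
    { measurable := measurable_levelAtom h.measurable k
      measurable_bound := measurable_levelNorm h.measurable k
      bound_ne_top := fun t =>
        ne_top_of_le_ne_top hc ((hle t).trans (Set.indicator_le_self _ _ _))
      lintegral_bound_ne_top := by
        refine ne_top_of_le_ne_top ?_ (lintegral_mono hle)
        rw [lintegral_indicator_const h.measurableSet_times]
        exact ENNReal.mul_ne_top hc h.volume_times_ne_top
      lintegral_le := fun t =>
        lintegral_enorm_levelAtom_le h.measurable (h.lintegral_six_ne_top t) k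
      lintegral_sq_le := fun t => (lintegral_enorm_levelAtom_sq v k t).le }

theorem integral_mul_levelAtom [SFinite (volume : Measure Y)] (h : IsBoundedOnBox I B M v)
    {u : ℝ → Y → ℂ} (hu : ∀ t z, u t z * (starRingEnd ℂ) (v t z) = ((‖v t z‖ ^ 2 : ℝ) : ℂ))
    (k : ℤ) :
    ∫ p : ℝ × Y, u p.1 p.2 * levelAtom v k p.1 p.2 ∂(volume.prod volume) =
      ((∫⁻ t, levelEnergy v k t).toReal : ℂ) := by
  have hpoint (p : ℝ × Y) : u p.1 p.2 * levelAtom v k p.1 p.2 =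
      ((levelWeight v k p.1 p.2 * ‖v p.1 p.2‖ ^ 2 : ℝ) : ℂ) := by
    rw [levelAtom, mul_left_comm, hu, Complex.ofReal_mul]
  have hmeas := measurable_levelWeight_mul_sq h.measurable k
  simp_rw [hpoint]
  rw [integral_complex_ofReal, integral_eq_lintegral_of_nonneg_ae
    (Eventually.of_forall fun p => mul_nonneg (levelWeight_nonneg v k _ _) (sq_nonneg _))
    hmeas.aestronglyMeasurable, lintegral_prod _ hmeas.ennreal_ofReal.aemeasurable]
  rfl

theorem enorm_sum_integral_mul_levelAtom [SFinite (volume : Measure Y)]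
    (h : IsBoundedOnBox I B M v) {u : ℝ → Y → ℂ}
    (hu : ∀ t z, u t z * (starRingEnd ℂ) (v t z) = ((‖v t z‖ ^ 2 : ℝ) : ℂ)) (K : Finset ℤ) :
    ‖∑ k ∈ K, ∫ p : ℝ × Y, u p.1 p.2 * levelAtom v k p.1 p.2 ∂(volume.prod volume)‖ₑ =
      ∑ k ∈ K, ∫⁻ t, levelEnergy v k t := by
  simp_rw [h.integral_mul_levelAtom hu]
  rw [← Complex.ofReal_sum, ← ofReal_norm, Complex.norm_real,
    Real.norm_of_nonneg (Finset.sum_nonneg fun _ _ => ENNReal.toReal_nonneg),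
    ENNReal.ofReal_sum_of_nonneg fun _ _ => ENNReal.toReal_nonneg]
  simp_rw [fun k => ENNReal.ofReal_toReal (h.lintegral_levelEnergy_ne_top k)]

end IsBoundedOnBox

end LevelDecomposition

/-! ### The endpoint estimate for a frequency block -/

theorem le_of_sq_le_mul {S D : ℝ≥0∞} (hS : S ≠ ∞) (h : S ^ 2 ≤ D * S) : S ≤ D := by
  by_cases h0 : S = 0
  · simp [h0]
  · rw [pow_two] at h
    exact (ENNReal.mul_le_mul_iff_left h0 hS).1 h

theorem lintegral_lintegral_rpow_le_of_tendsto {Y : Type*} [MeasureSpace Y]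
    [SFinite (volume : Measure Y)] {q r : ℝ} (hr : 0 < r) {v : ℕ → ℝ → Y → ℂ}
    {w : ℝ → Y → ℂ} (hv : ∀ n, Measurable (Function.uncurry (v n)))
    (hlim : ∀ t z, Tendsto (fun n => v n t z) atTop (nhds (w t z))) {B : ℝ≥0∞}
    (hB : ∀ n, ∫⁻ t, (∫⁻ z, ‖v n t z‖ₑ ^ q) ^ r ≤ B) :
    ∫⁻ t, (∫⁻ z, ‖w t z‖ₑ ^ q) ^ r ≤ B := by
  have hpow (t : ℝ) (z : Y) : Tendsto (fun n => ‖v n t z‖ₑ ^ q) atTop (nhds (‖w t z‖ₑ ^ q)) :=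
    (ENNReal.continuous_rpow_const.tendsto _).comp (hlim t z).enorm
  have hslice (t : ℝ) : (∫⁻ z, ‖w t z‖ₑ ^ q) ^ r ≤
      liminf (fun n => (∫⁻ z, ‖v n t z‖ₑ ^ q) ^ r) atTop :=
    calc _ = (∫⁻ z, liminf (fun n => ‖v n t z‖ₑ ^ q) atTop) ^ r := by
          simp_rw [fun z => (hpow t z).liminf_eq]
      _ ≤ (liminf (fun n => ∫⁻ z, ‖v n t z‖ₑ ^ q) atTop) ^ r := by
        gcongr
        exact lintegral_liminf_le fun n => (hv n).of_uncurry_left.enorm.pow_const q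
      _ = _ := (ENNReal.monotone_rpow_of_nonneg hr.le).map_liminf_of_continuousAt _
        ENNReal.continuous_rpow_const.continuousAt
  calc _ ≤ ∫⁻ t, liminf (fun n => (∫⁻ z, ‖v n t z‖ₑ ^ q) ^ r) atTop := lintegral_mono hslice
    _ ≤ liminf (fun n => ∫⁻ t, (∫⁻ z, ‖v n t z‖ₑ ^ q) ^ r) atTop :=
      lintegral_liminf_le fun n => ((hv n).enorm.pow_const q).lintegral_prod_right'.pow_const r
    _ ≤ B := (liminf_le_liminf (Eventually.of_forall hB)).trans_eq (liminf_const B)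

/-- The evolution cut off to `|t| ≤ R`, `|z| ≤ R`. -/
def truncEvolution (f : ℝ × E2 → ℂ) (R : ℝ) (t : ℝ) (z : ℝ × E2) : ℂ :=
  (Set.Icc (-R) R ×ˢ Metric.closedBall 0 R).indicator (Function.uncurry (evolution f)) (t, z)

section BlockEndpoint

variable {a : ℝ} {f : ℝ × E2 → ℂ}

theorem isBoundedOnBox_truncEvolution (hfm : Measurable f) (R : ℝ) :
    IsBoundedOnBox (Set.Icc (-R) R) (Metric.closedBall 0 R) (∫ ζ, ‖f ζ‖) (truncEvolution f R) where
  measurable := (measurable_evolution hfm).indicator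
    (measurableSet_Icc.prod Metric.isClosed_closedBall.measurableSet)
  measurableSet_times := measurableSet_Icc
  measurableSet_space := Metric.isClosed_closedBall.measurableSet
  volume_times_ne_top := measure_Icc_lt_top.ne
  volume_space_ne_top := measure_closedBall_lt_top.ne
  norm_le t z := (norm_indicator_le_norm_self _ _).trans (norm_evolution_le f t z)
  eq_zero _ _ h := Set.indicator_of_notMem h _

theorem evolution_mul_conj_truncEvolution (f : ℝ × E2 → ℂ) (R t : ℝ) (z : ℝ × E2) :
    evolution f t z * (starRingEnd ℂ) (truncEvolution f R t z) =
      ((‖truncEvolution f R t z‖ ^ 2 : ℝ) : ℂ) := by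
  unfold truncEvolution
  by_cases h : (t, z) ∈ Set.Icc (-R) R ×ˢ Metric.closedBall 0 R
  · rw [Set.indicator_of_mem h, Function.uncurry_apply_pair, Complex.mul_conj,
      Complex.normSq_eq_norm_sq]
  · simp [Set.indicator_of_notMem h]

theorem tendsto_truncEvolution (f : ℝ × E2 → ℂ) (t : ℝ) (z : ℝ × E2) :
    Tendsto (fun n : ℕ => truncEvolution f n t z) atTop (nhds (evolution f t z)) := by
  refine tendsto_const_nhds.congr' ?_
  filter_upwards [eventually_ge_atTop ⌈max |t| ‖z‖⌉₊] with n hn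
  have hmax : max |t| ‖z‖ ≤ n := Nat.ceil_le.1 hn
  have hmem : (t, z) ∈ Set.Icc (-n : ℝ) n ×ˢ Metric.closedBall 0 (n : ℝ) :=
    ⟨abs_le.1 ((le_max_left _ _).trans hmax), by simpa using (le_max_right _ _).trans hmax⟩
  rw [truncEvolution, Set.indicator_of_mem hmem, Function.uncurry_apply_pair]

theorem sum_lintegral_levelEnergy_truncEvolution_le (ha : 0 < a) (hf : Integrable f)
    (hfm : Measurable f) (hsupp : ∀ ζ ∉ freqBlock a, f ζ = 0) (R : ℝ) (K : Finset ℤ) :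
    ∑ k ∈ K, ∫⁻ t, levelEnergy (truncEvolution f R) k t ≤
      16 * ENNReal.ofReal (dualConst * a ^ (1 / 3 : ℝ)) * ∫⁻ ζ, ‖f ζ‖ₑ ^ 2 := by
  set v := truncEvolution f R
  set S := ∑ k ∈ K, ∫⁻ t, levelEnergy v k t
  have hbox := isBoundedOnBox_truncEvolution hfm R
  have hdual := enorm_sum_integral_evolution_mul_le ha hf hfm hsupp K hbox.isAtom_levelAtom
  rw [hbox.enorm_sum_integral_mul_levelAtom (evolution_mul_conj_truncEvolution f R)] at hdual
  have hnorm : ∑ k ∈ K, ∫⁻ t, levelNorm v k t ^ 2 ≤ 16 * S := by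
    rw [Finset.mul_sum]
    refine Finset.sum_le_sum fun k _ => ?_
    rw [← lintegral_const_mul' _ _ (by norm_num)]
    exact lintegral_mono (levelNorm_sq_le v k)
  refine le_of_sq_le_mul (ENNReal.sum_ne_top.2 fun k _ => hbox.lintegral_levelEnergy_ne_top k) ?_
  calc S ^ 2 ≤ (∫⁻ ζ, ‖f ζ‖ₑ ^ 2) * (ENNReal.ofReal (dualConst * a ^ (1 / 3 : ℝ)) *
        ∑ k ∈ K, ∫⁻ t, levelNorm v k t ^ 2) := by
        refine (pow_le_pow_left' hdual 2).trans_eq ?_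
        rw [mul_pow, rpow_half_sq, rpow_half_sq]
    _ ≤ (∫⁻ ζ, ‖f ζ‖ₑ ^ 2) * (ENNReal.ofReal (dualConst * a ^ (1 / 3 : ℝ)) * (16 * S)) := by
      gcongr
    _ = _ := by ring

theorem lintegral_truncEvolution_le (ha : 0 < a) (hf : Integrable f) (hfm : Measurable f)
    (hsupp : ∀ ζ ∉ freqBlock a, f ζ = 0) (R : ℝ) :
    ∫⁻ t, (∫⁻ z, ‖truncEvolution f R t z‖ₑ ^ (6 : ℝ)) ^ (1 / 3 : ℝ) ≤
      16 * ENNReal.ofReal (dualConst * a ^ (1 / 3 : ℝ)) * ∫⁻ ζ, ‖f ζ‖ₑ ^ 2 := by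
  have hbox := isBoundedOnBox_truncEvolution hfm R
  calc _ ≤ ∫⁻ t, ∑' k, levelEnergy (truncEvolution f R) k t := lintegral_mono fun t =>
        rpow_third_le_tsum_levelEnergy hbox.measurable (hbox.lintegral_six_ne_top t)
    _ = ∑' k, ∫⁻ t, levelEnergy (truncEvolution f R) k t :=
      lintegral_tsum fun k => (measurable_levelEnergy hbox.measurable k).aemeasurable
    _ ≤ _ := by
      rw [ENNReal.tsum_eq_iSup_sum]
      exact iSup_le fun K => sum_lintegral_levelEnergy_truncEvolution_le ha hf hfm hsupp R K

theorem lintegral_evolution_freqBlock_le (ha : 0 < a) (hf : Integrable f) (hfm : Measurable f)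
    (hsupp : ∀ ζ ∉ freqBlock a, f ζ = 0) :
    ∫⁻ t, (∫⁻ z, ‖evolution f t z‖ₑ ^ (6 : ℝ)) ^ (1 / 3 : ℝ) ≤
      16 * ENNReal.ofReal (dualConst * a ^ (1 / 3 : ℝ)) * ∫⁻ ζ, ‖f ζ‖ₑ ^ 2 :=
  lintegral_lintegral_rpow_le_of_tendsto (by norm_num)
    (fun n => (isBoundedOnBox_truncEvolution hfm n).measurable) (tendsto_truncEvolution f)
    fun n => lintegral_truncEvolution_le ha hf hfm hsupp n

end BlockEndpoint

/-! ### Summation of frequency-separated pieces in `L⁶` -/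

theorem ofReal_integral_le_lintegral {X : Type*} [MeasurableSpace X] {μ : Measure X} {f : X → ℝ}
    (hf : Integrable f μ) : ENNReal.ofReal (∫ x, f x ∂μ) ≤ ∫⁻ x, ENNReal.ofReal (f x) ∂μ := by
  rw [integral_eq_lintegral_pos_part_sub_lintegral_neg_part hf]
  exact (ENNReal.ofReal_le_ofReal (sub_le_self _ ENNReal.toReal_nonneg)).trans
    ENNReal.ofReal_toReal_le

theorem rpow_third_cube (x : ℝ≥0∞) : (x ^ (1 / 3 : ℝ)) ^ 3 = x := by
  rw [← ENNReal.rpow_natCast, ← ENNReal.rpow_mul]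
  norm_num

theorem cube_le_of_abs_le {A B r : ℝ} (hr : |r| ≤ 2 * (A * B)) :
    (A ^ 2 + r + B ^ 2) ^ 3 ≤ A ^ 6 + (3 * (A ^ 4 * r) + 59 * (A ^ 4 * B ^ 2 + B ^ 6)) := by
  have hr2 : r ^ 2 ≤ 4 * (A ^ 2 * B ^ 2) := by
    rw [← sq_abs]
    nlinarith [abs_nonneg r]
  have hsum : r + B ^ 2 ≤ A ^ 2 + 2 * B ^ 2 := by nlinarith [le_abs_self r, sq_nonneg (A - B)]
  have hsq : (r + B ^ 2) ^ 2 ≤ 8 * (A ^ 2 * B ^ 2) + 2 * B ^ 4 := by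
    nlinarith [sq_nonneg (r - B ^ 2)]
  have hcube : (r + B ^ 2) ^ 3 ≤ (A ^ 2 + 2 * B ^ 2) * (8 * (A ^ 2 * B ^ 2) + 2 * B ^ 4) :=
    calc (r + B ^ 2) ^ 3 = (r + B ^ 2) * (r + B ^ 2) ^ 2 := by ring
      _ ≤ (A ^ 2 + 2 * B ^ 2) * (r + B ^ 2) ^ 2 := by gcongr
      _ ≤ _ := by gcongr
  have hmixed : A ^ 2 * (r + B ^ 2) ^ 2 ≤ A ^ 2 * (8 * (A ^ 2 * B ^ 2) + 2 * B ^ 4) := by gcongr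
  have hyoung : 0 ≤ B ^ 2 * (A ^ 2 - B ^ 2) ^ 2 := by positivity
  have hpos : 0 ≤ A ^ 4 * B ^ 2 := by positivity
  have hpos' : 0 ≤ B ^ 6 := by positivity
  nlinarith

/-- The part of `|U + u|⁶` that is linear in `u` is six times the real part of
`linearTerm U u = |U|⁴ conj(U) u`, written as a product of functions and their conjugates so that
its frequencies can be read off. -/
def linearTerm (U u : ℂ) : ℂ :=
  (starRingEnd ℂ) U * U * ((starRingEnd ℂ) U * U) * ((starRingEnd ℂ) U * u)

theorem norm_linearTerm (U u : ℂ) : ‖linearTerm U u‖ = ‖U‖ ^ 5 * ‖u‖ := by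
  simp only [linearTerm, norm_mul, RCLike.norm_conj]
  ring

theorem norm_add_pow_six_le (U u : ℂ) :
    ‖U + u‖ ^ 6 ≤
      ‖U‖ ^ 6 + (6 * (linearTerm U u).re + 59 * (‖U‖ ^ 4 * ‖u‖ ^ 2 + ‖u‖ ^ 6)) := by
  set r := 2 * ((starRingEnd ℂ) U * u).re with hr
  have hadd : ‖U + u‖ ^ 2 = ‖U‖ ^ 2 + r + ‖u‖ ^ 2 := by
    rw [← Complex.normSq_eq_norm_sq, Complex.normSq_add, Complex.normSq_eq_norm_sq,
      Complex.normSq_eq_norm_sq, hr, mul_comm, ← Complex.conj_re, map_mul, Complex.conj_conj]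
    ring
  have hlinear : 6 * (linearTerm U u).re = 3 * (‖U‖ ^ 4 * r) := by
    have hmul : (starRingEnd ℂ) U * U = ((‖U‖ ^ 2 : ℝ) : ℂ) := by
      rw [mul_comm, Complex.mul_conj, Complex.normSq_eq_norm_sq]
    rw [linearTerm, hmul, ← Complex.ofReal_mul, Complex.re_ofReal_mul, hr]
    ring
  have hr_le : |r| ≤ 2 * (‖U‖ * ‖u‖) := by
    rw [hr, abs_mul, abs_two, ← RCLike.norm_conj U, ← norm_mul]
    gcongr
    exact Complex.abs_re_le_norm _
  calc ‖U + u‖ ^ 6 = (‖U + u‖ ^ 2) ^ 3 := by ring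
    _ ≤ _ := by
      rw [hadd, hlinear]
      exact cube_le_of_abs_le hr_le

section LinearTerm

variable {X : Type*} [MeasurableSpace X] {μ : Measure X} {U u : X → ℂ}

theorem integrable_linearTerm (hU : MemLp U 6 μ) (hu : MemLp u 6 μ) :
    Integrable (fun x => linearTerm (U x) (u x)) μ := by
  have hU6 : Integrable (fun x => ‖U x‖ ^ 6) μ := hU.integrable_norm_pow (p := 6) (by norm_num)
  have hu6 : Integrable (fun x => ‖u x‖ ^ 6) μ := hu.integrable_norm_pow (p := 6) (by norm_num)
  have hconj : AEStronglyMeasurable (fun x => (starRingEnd ℂ) (U x)) μ :=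
    Complex.continuous_conj.comp_aestronglyMeasurable hU.1
  have hmeas := ((hconj.mul hU.1).mul (hconj.mul hU.1)).mul (hconj.mul hu.1)
  refine (hU6.add hu6).mono' hmeas (Eventually.of_forall fun x => ?_)
  rw [norm_linearTerm]
  rcases le_total ‖U x‖ ‖u x‖ with h | h
  · calc ‖U x‖ ^ 5 * ‖u x‖ ≤ ‖u x‖ ^ 5 * ‖u x‖ := by gcongr
      _ ≤ ‖U x‖ ^ 6 + ‖u x‖ ^ 6 := by rw [← pow_succ]; exact le_add_of_nonneg_left (by positivity)
  · calc ‖U x‖ ^ 5 * ‖u x‖ ≤ ‖U x‖ ^ 5 * ‖U x‖ := by gcongr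
      _ ≤ ‖U x‖ ^ 6 + ‖u x‖ ^ 6 := by rw [← pow_succ]; exact le_add_of_nonneg_right (by positivity)

theorem lintegral_enorm_add_pow_six_le (hU : MemLp U 6 μ) (hu : MemLp u 6 μ)
    (hzero : ∫ x, linearTerm (U x) (u x) ∂μ = 0) :
    ∫⁻ x, ‖U x + u x‖ₑ ^ (6 : ℝ) ∂μ ≤ ∫⁻ x, ‖U x‖ₑ ^ (6 : ℝ) ∂μ +
      59 * (∫⁻ x, ‖U x‖ₑ ^ (4 : ℝ) * ‖u x‖ₑ ^ (2 : ℝ) ∂μ + ∫⁻ x, ‖u x‖ₑ ^ (6 : ℝ) ∂μ) := by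
  have hlin := integrable_linearTerm hU hu
  have hsix : Integrable (fun x => ‖U x + u x‖ ^ 6) μ :=
    (hU.add hu).integrable_norm_pow (p := 6) (by norm_num)
  have hlinre : Integrable (fun x => 6 * (linearTerm (U x) (u x)).re) μ := hlin.re.const_mul 6
  have hre : ∫ x, (linearTerm (U x) (u x)).re ∂μ = 0 := by
    rw [show ∫ x, (linearTerm (U x) (u x)).re ∂μ = (∫ x, linearTerm (U x) (u x) ∂μ).re from
      integral_re hlin, hzero, Complex.zero_re]
  have hdiff : ∫ x, (‖U x + u x‖ ^ 6 - 6 * (linearTerm (U x) (u x)).re) ∂μ =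
      ∫ x, ‖U x + u x‖ ^ 6 ∂μ := by
    rw [integral_sub hsix hlinre, integral_const_mul, hre, mul_zero, sub_zero]
  have hU' := hU.1.aemeasurable
  have hu' := hu.1.aemeasurable
  simp only [ENNReal.rpow_ofNat]
  calc ∫⁻ x, ‖U x + u x‖ₑ ^ 6 ∂μ = ENNReal.ofReal (∫ x, ‖U x + u x‖ ^ 6 ∂μ) := by
        rw [ofReal_integral_eq_lintegral_ofReal hsix (Eventually.of_forall fun x => by positivity)]
        simp [ENNReal.ofReal_pow]
    _ ≤ ∫⁻ x, ENNReal.ofReal (‖U x + u x‖ ^ 6 - 6 * (linearTerm (U x) (u x)).re) ∂μ :=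
      hdiff ▸ ofReal_integral_le_lintegral (hsix.sub hlinre)
    _ ≤ ∫⁻ x, ‖U x‖ₑ ^ 6 + 59 * (‖U x‖ₑ ^ 4 * ‖u x‖ₑ ^ 2 + ‖u x‖ₑ ^ 6) ∂μ := by
      refine lintegral_mono fun x => ?_
      simp only [← ofReal_norm, ← ENNReal.ofReal_pow, norm_nonneg]
      rw [← ENNReal.ofReal_mul (by positivity),
        ← ENNReal.ofReal_add (by positivity) (by positivity), ← ENNReal.ofReal_ofNat,
        ← ENNReal.ofReal_mul (by positivity),
        ← ENNReal.ofReal_add (by positivity) (by positivity)]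
      exact ENNReal.ofReal_le_ofReal (by linarith [norm_add_pow_six_le (U x) (u x)])
    _ = _ := by
      rw [lintegral_add_left' (by fun_prop), lintegral_const_mul'' _ (by fun_prop),
        lintegral_add_left' (by fun_prop)]

theorem rpow_third_lintegral_enorm_add_le (hU : MemLp U 6 μ) (hu : MemLp u 6 μ)
    (hzero : ∫ x, linearTerm (U x) (u x) ∂μ = 0) :
    (∫⁻ x, ‖U x + u x‖ₑ ^ (6 : ℝ) ∂μ) ^ (1 / 3 : ℝ) ≤
      (∫⁻ x, ‖U x‖ₑ ^ (6 : ℝ) ∂μ) ^ (1 / 3 : ℝ) +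
        59 * (∫⁻ x, ‖u x‖ₑ ^ (6 : ℝ) ∂μ) ^ (1 / 3 : ℝ) := by
  set S := (∫⁻ x, ‖U x‖ₑ ^ (6 : ℝ) ∂μ) ^ (1 / 3 : ℝ) with hS
  set d := (∫⁻ x, ‖u x‖ₑ ^ (6 : ℝ) ∂μ) ^ (1 / 3 : ℝ) with hd
  have hS3 : ∫⁻ x, ‖U x‖ₑ ^ (6 : ℝ) ∂μ = S ^ 3 := (rpow_third_cube _).symm
  have hd3 : ∫⁻ x, ‖u x‖ₑ ^ (6 : ℝ) ∂μ = d ^ 3 := (rpow_third_cube _).symm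
  have hholder : ∫⁻ x, ‖U x‖ₑ ^ (4 : ℝ) * ‖u x‖ₑ ^ (2 : ℝ) ∂μ ≤ S ^ 2 * d := by
    have := ENNReal.lintegral_mul_norm_pow_le (μ := μ) (f := fun x => ‖U x‖ₑ ^ (6 : ℝ))
      (g := fun x => ‖u x‖ₑ ^ (6 : ℝ)) (hU.1.enorm.pow_const _) (hu.1.enorm.pow_const _)
      (p := 2 / 3) (q := 1 / 3) (by norm_num) (by norm_num) (by norm_num)
    simp only [← ENNReal.rpow_mul] at this
    rw [hS, hd, ← ENNReal.rpow_natCast, ← ENNReal.rpow_mul]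
    norm_num at this ⊢
    exact this
  have hcube : ∫⁻ x, ‖U x + u x‖ₑ ^ (6 : ℝ) ∂μ ≤ (S + 59 * d) ^ 3 := by
    calc _ ≤ S ^ 3 + 59 * (S ^ 2 * d + d ^ 3) := by
          refine (lintegral_enorm_add_pow_six_le hU hu hzero).trans ?_
          rw [hS3, hd3]
          gcongr
      _ ≤ S ^ 3 + 59 * (S ^ 2 * d + d ^ 3) +
          (118 * (S ^ 2 * d) + 3 * 59 ^ 2 * (S * d ^ 2) + 205320 * d ^ 3) := le_self_add
      _ = _ := by ring
  calc _ ≤ ((S + 59 * d) ^ 3) ^ (1 / 3 : ℝ) := ENNReal.rpow_le_rpow hcube (by norm_num)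
    _ = S + 59 * d := by
      rw [← ENNReal.rpow_natCast, ← ENNReal.rpow_mul]
      norm_num

end LinearTerm

section Superposition

variable {V : Type*} [NormedAddCommGroup V] [InnerProductSpace ℝ V]

theorem gaussianHat_le {ε c : ℝ} (hε : 0 < ε) (hc : 0 ≤ c) {ζ : ℝ × V} (hζ : c ≤ ζ.1) :
    gaussianHat ε ζ ≤
      (Real.pi / ε) ^ ((1 + Module.finrank ℝ V : ℝ) / 2) * Real.exp (-(c ^ 2 / 4) * (1 / ε)) := by
  have hsq : c ^ 2 ≤ ζ.1 ^ 2 + ‖ζ.2‖ ^ 2 := by nlinarith [sq_nonneg ‖ζ.2‖]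
  unfold gaussianHat gaussian
  refine mul_le_mul_of_nonneg_left (Real.exp_le_exp.2 ?_) (by positivity)
  calc -(1 / (4 * ε)) * (ζ.1 ^ 2 + ‖ζ.2‖ ^ 2) ≤ -(1 / (4 * ε)) * c ^ 2 :=
        mul_le_mul_of_nonpos_left hsq (neg_nonpos.2 (by positivity))
    _ = -(c ^ 2 / 4) * (1 / ε) := by ring

theorem tendsto_rpow_mul_exp_neg_mul_inv (s : ℝ) {b : ℝ} (hb : 0 < b) :
    Tendsto (fun n : ℕ => (Real.pi / (1 / ((n : ℝ) + 1))) ^ s *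
      Real.exp (-b * (1 / (1 / ((n : ℝ) + 1))))) atTop (nhds 0) := by
  have hlim := ((tendsto_rpow_mul_exp_neg_mul_atTop_nhds_zero s b hb).comp
    (tendsto_atTop_add_const_right _ 1 tendsto_natCast_atTop_atTop)).const_mul (Real.pi ^ s)
  rw [mul_zero] at hlim
  refine hlim.congr fun n => ?_
  rw [Function.comp_apply, one_div_one_div, div_div_eq_mul_div, div_one,
    Real.mul_rpow Real.pi_pos.le (by positivity), mul_assoc]

variable [MeasurableSpace V] {Ω Ω' : Type*} [MeasurableSpace Ω] [MeasurableSpace Ω']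

/-- `P` is the superposition `∫ e^{i z·X(w)} h(w) dμ(w)` of plane waves whose frequencies lie in the
half-space `c ≤ ζ.1`. Frequencies are parametrised by an auxiliary measure space, so that a product
of superpositions is a superposition over the product of the parameter spaces. -/
structure IsSuperposition (c : ℝ) (μ : Measure Ω) (X : Ω → ℝ × V) (h : Ω → ℂ) (P : ℝ × V → ℂ) :
    Prop where
  measurable : Measurable X
  integrable : Integrable h μ
  le_fst : ∀ w, h w ≠ 0 → c ≤ (X w).1
  eq_integral : ∀ z, P z = ∫ w, (Circle.exp (pairing z (X w)) : ℂ) * h w ∂μ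

theorem IsSuperposition.mul [FiniteDimensional ℝ V] [BorelSpace V] {c c' : ℝ} {μ : Measure Ω}
    {μ' : Measure Ω'} [SFinite μ] [SFinite μ'] {X : Ω → ℝ × V} {X' : Ω' → ℝ × V} {h : Ω → ℂ}
    {h' : Ω' → ℂ} {P P' : ℝ × V → ℂ} (hP : IsSuperposition c μ X h P)
    (hP' : IsSuperposition c' μ' X' h' P') :
    IsSuperposition (c + c') (μ.prod μ') (fun w => X w.1 + X' w.2) (fun w => h w.1 * h' w.2)
      (fun z => P z * P' z) where
  measurable := (hP.measurable.comp measurable_fst).add (hP'.measurable.comp measurable_snd)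
  integrable := hP.integrable.mul_prod hP'.integrable
  le_fst w hw :=
    add_le_add (hP.le_fst _ (left_ne_zero_of_mul hw)) (hP'.le_fst _ (right_ne_zero_of_mul hw))
  eq_integral z := by
    rw [hP.eq_integral, hP'.eq_integral, ← integral_prod_mul]
    refine integral_congr_ae (Eventually.of_forall fun w => ?_)
    simp only [pairing_add_right, coe_circleExp_add]
    ring

variable [FiniteDimensional ℝ V] [BorelSpace V]

theorem isSuperposition_invFourier {c : ℝ} {g : ℝ × V → ℂ} (hg : Integrable g)
    (hc : ∀ ζ, g ζ ≠ 0 → c ≤ ζ.1) : IsSuperposition c volume id g (invFourier g) :=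
  ⟨measurable_id, hg, hc, fun _ => rfl⟩

theorem isSuperposition_conj_invFourier {c : ℝ} {g : ℝ × V → ℂ} (hg : Integrable g)
    (hc : ∀ ζ, g ζ ≠ 0 → ζ.1 ≤ c) :
    IsSuperposition (-c) volume (fun ζ => -ζ) (fun ζ => (starRingEnd ℂ) (g ζ))
      (fun z => (starRingEnd ℂ) (invFourier g z)) where
  measurable := measurable_neg
  integrable := integrable_conj hg
  le_fst ζ hζ := neg_le_neg (hc ζ (by simpa using hζ))
  eq_integral z := by
    rw [invFourier, ← integral_conj]
    refine integral_congr_ae (Eventually.of_forall fun ζ => ?_)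
    simp only [map_mul (starRingEnd ℂ), conj_circleExp, pairing_neg_right]

variable {c : ℝ} {μ : Measure Ω} {X : Ω → ℝ × V} {h : Ω → ℂ} {P : ℝ × V → ℂ}

theorem IsSuperposition.integral_mul_gaussian [SFinite μ] (hP : IsSuperposition c μ X h P) {ε : ℝ}
    (hε : 0 < ε) :
    ∫ z, P z * (gaussian ε z : ℂ) = ∫ w, h w * (gaussianHat ε (X w) : ℂ) ∂μ := by
  have hX := hP.measurable
  have hintegrable : Integrable (fun q : (ℝ × V) × Ω => (Circle.exp (pairing q.1 (X q.2)) : ℂ) *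
      ((gaussian ε q.1 : ℂ) * h q.2)) ((volume : Measure (ℝ × V)).prod μ) :=
    integrable_circleExp_mul ((integrable_gaussian hε).ofReal.mul_prod hP.integrable)
      (by fun_prop)
  calc _ = ∫ z, (∫ w, (Circle.exp (pairing z (X w)) : ℂ) * ((gaussian ε z : ℂ) * h w) ∂μ) := by
        refine integral_congr_ae (Eventually.of_forall fun z => ?_)
        simp only [hP.eq_integral, ← integral_mul_const]
        refine integral_congr_ae (Eventually.of_forall fun w => ?_)
        simp only
        ring
    _ = ∫ w, (∫ z, (Circle.exp (pairing z (X w)) : ℂ) * ((gaussian ε z : ℂ) * h w)) ∂μ :=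
      integral_integral_swap hintegrable
    _ = _ := by
      refine integral_congr_ae (Eventually.of_forall fun w => ?_)
      simp only [← invFourier_gaussian hε, invFourier, ← integral_const_mul, pairing_comm (X w)]
      refine integral_congr_ae (Eventually.of_forall fun z => ?_)
      simp only
      ring

theorem tendsto_integral_mul_gaussian (hP : Integrable P) :
    Tendsto (fun n : ℕ => ∫ z, P z * (gaussian (1 / ((n : ℝ) + 1)) z : ℂ)) atTop
      (nhds (∫ z, P z)) := by
  refine tendsto_integral_of_dominated_convergence (fun z => ‖P z‖) (fun n => ?_) hP.norm
    (fun n => Eventually.of_forall fun z => ?_) (Eventually.of_forall fun z => ?_)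
  · exact hP.aestronglyMeasurable.mul
      (Complex.continuous_ofReal.comp (continuous_gaussian _)).aestronglyMeasurable
  · rw [norm_mul, Complex.norm_real, Real.norm_of_nonneg (gaussian_pos _ _).le]
    refine mul_le_of_le_one_right (norm_nonneg _) (Real.exp_le_one_iff.2 ?_)
    exact mul_nonpos_of_nonpos_of_nonneg (neg_nonpos.2 (by positivity)) (by positivity)
  · simpa using
      ((Complex.continuous_ofReal.tendsto _).comp (tendsto_gaussian_one z)).const_mul (P z)

/-- The integral of `P` is its zero-frequency component. -/
theorem IsSuperposition.integral_eq_zero [SFinite μ] (hP : IsSuperposition c μ X h P) (hc : 0 < c)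
    (hinteg : Integrable P) : ∫ z, P z = 0 := by
  have hlim := (tendsto_rpow_mul_exp_neg_mul_inv ((1 + Module.finrank ℝ V : ℝ) / 2)
    (b := c ^ 2 / 4) (by positivity)).const_mul (∫ w, ‖h w‖ ∂μ)
  rw [mul_zero] at hlim
  refine tendsto_nhds_unique (tendsto_integral_mul_gaussian hinteg)
    (squeeze_zero_norm (fun n => ?_) hlim)
  have hε : 0 < 1 / ((n : ℝ) + 1) := by positivity
  rw [hP.integral_mul_gaussian hε, ← integral_mul_const]
  refine norm_integral_le_of_norm_le (hP.integrable.norm.mul_const _)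
    (Eventually.of_forall fun w => ?_)
  rw [norm_mul, Complex.norm_real, Real.norm_of_nonneg (gaussianHat_nonneg hε _)]
  by_cases hw : h w = 0
  · simp [hw]
  · exact mul_le_mul_of_nonneg_left (gaussianHat_le hε hc.le (hP.le_fst w hw)) (norm_nonneg _)

end Superposition

section FrequencySeparated

variable {V : Type*} [NormedAddCommGroup V] [InnerProductSpace ℝ V] [FiniteDimensional ℝ V]
  [MeasurableSpace V] [BorelSpace V]

theorem integral_linearTerm_invFourier_eq_zero {b c : ℝ} (hbc : 3 * b < c) {F g : ℝ × V → ℂ}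
    (hF : Integrable F) (hg : Integrable g) (hFsupp : ∀ ζ, F ζ ≠ 0 → 0 ≤ ζ.1 ∧ ζ.1 ≤ b)
    (hgsupp : ∀ ζ, g ζ ≠ 0 → c ≤ ζ.1)
    (hinteg : Integrable fun z => linearTerm (invFourier F z) (invFourier g z)) :
    ∫ z, linearTerm (invFourier F z) (invFourier g z) = 0 := by
  have hU := isSuperposition_invFourier hF fun ζ hζ => (hFsupp ζ hζ).1
  have hUconj := isSuperposition_conj_invFourier hF fun ζ hζ => (hFsupp ζ hζ).2
  have hu := isSuperposition_invFourier hg hgsupp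
  have hUU := hUconj.mul hU
  have : SFinite ((volume : Measure (ℝ × V)).prod (volume : Measure (ℝ × V))) := inferInstance
  exact ((hUU.mul hUU).mul (hUconj.mul hu)).integral_eq_zero (by linarith) hinteg

/-- The Fourier-side data to which the estimates apply: integrable, so that `evolution` is given by
a convergent integral, and square-integrable. -/
structure IsProfile (g : ℝ × V → ℂ) : Prop where
  measurable : Measurable g
  integrable : Integrable g
  lintegral_sq_ne_top : ∫⁻ ζ, ‖g ζ‖ₑ ^ 2 ≠ ∞

theorem IsProfile.memLp_two {g : ℝ × V → ℂ} (hg : IsProfile g) : MemLp g 2 :=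
  (memLp_two_iff_lintegral_sq_ne_top hg.measurable.aestronglyMeasurable).2 hg.lintegral_sq_ne_top

theorem isProfile_sum {ι : Type*} {f : ι → ℝ × V → ℂ} (hf : ∀ i, IsProfile (f i)) (s : Finset ι) :
    IsProfile fun ζ => ∑ i ∈ s, f i ζ where
  measurable := Finset.measurable_fun_sum s fun i _ => (hf i).measurable
  integrable := integrable_finsetSum s fun i _ => (hf i).integrable
  lintegral_sq_ne_top :=
    (memLp_two_iff_lintegral_sq_ne_top (Finset.measurable_fun_sum s
      fun i _ => (hf i).measurable).aestronglyMeasurable).1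
      (memLp_finsetSum s fun i _ => (hf i).memLp_two)

theorem IsProfile.memLp_six_invFourier {g : ℝ × V → ℂ} (hg : IsProfile g) :
    MemLp (invFourier g) 6 := by
  have hcont := continuous_invFourier hg.integrable
  have hL2 := (memLp_two_iff_lintegral_sq_ne_top hcont.aestronglyMeasurable).1
    (memLp_two_invFourier hg.integrable hg.lintegral_sq_ne_top)
  set M := ENNReal.ofReal (∫ ζ, ‖g ζ‖) ^ 4
  have hM : M ≠ ∞ := ENNReal.pow_ne_top ENNReal.ofReal_ne_top
  refine ⟨hcont.aestronglyMeasurable, ?_⟩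
  rw [eLpNorm_lt_top_iff_lintegral_rpow_enorm_lt_top (by simp) (by simp)]
  calc ∫⁻ z, ‖invFourier g z‖ₑ ^ (6 : ℝ≥0∞).toReal
      ≤ ∫⁻ z, M * ‖invFourier g z‖ₑ ^ 2 := by
        refine lintegral_mono fun z => ?_
        rw [ENNReal.toReal_ofNat, ENNReal.rpow_ofNat, show 6 = 4 + 2 from rfl, pow_add,
          ← ofReal_norm]
        exact mul_le_mul_left (pow_le_pow_left'
          (ENNReal.ofReal_le_ofReal (norm_invFourier_le g z)) 4) _
    _ = M * ∫⁻ z, ‖invFourier g z‖ₑ ^ 2 := lintegral_const_mul' _ _ hM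
    _ < ∞ := ENNReal.mul_lt_top hM.lt_top hL2.lt_top

theorem rpow_third_lintegral_invFourier_add_le {b c : ℝ} (hbc : 3 * b < c) {F g : ℝ × V → ℂ}
    (hF : IsProfile F) (hg : IsProfile g) (hFsupp : ∀ ζ, F ζ ≠ 0 → 0 ≤ ζ.1 ∧ ζ.1 ≤ b)
    (hgsupp : ∀ ζ, g ζ ≠ 0 → c ≤ ζ.1) :
    (∫⁻ z, ‖invFourier (fun ζ => F ζ + g ζ) z‖ₑ ^ (6 : ℝ)) ^ (1 / 3 : ℝ) ≤
      (∫⁻ z, ‖invFourier F z‖ₑ ^ (6 : ℝ)) ^ (1 / 3 : ℝ) +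
        59 * (∫⁻ z, ‖invFourier g z‖ₑ ^ (6 : ℝ)) ^ (1 / 3 : ℝ) := by
  have hU := hF.memLp_six_invFourier
  have hu := hg.memLp_six_invFourier
  simp_rw [invFourier_add hF.integrable hg.integrable]
  exact rpow_third_lintegral_enorm_add_le hU hu (integral_linearTerm_invFourier_eq_zero hbc
    hF.integrable hg.integrable hFsupp hgsupp (integrable_linearTerm hU hu))

end FrequencySeparated

theorem rpow_third_lintegral_invFourier_sum_le {a : ℝ} (ha : 0 < a) {f : ℕ → ℝ × E2 → ℂ}
    (hf : ∀ i, IsProfile (f i)) (hsupp : ∀ i, ∀ ζ ∉ freqBlock (a * 16 ^ i), f i ζ = 0) (n : ℕ) :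
    (∫⁻ z, ‖invFourier (fun ζ => ∑ i ∈ Finset.range n, f i ζ) z‖ₑ ^ (6 : ℝ)) ^ (1 / 3 : ℝ) ≤
      59 * ∑ i ∈ Finset.range n, (∫⁻ z, ‖invFourier (f i) z‖ₑ ^ (6 : ℝ)) ^ (1 / 3 : ℝ) := by
  have hmem : ∀ i ζ, f i ζ ≠ 0 → ζ ∈ freqBlock (a * 16 ^ i) := fun i ζ =>
    not_imp_comm.1 (hsupp i ζ)
  induction n with
  | zero => simp [invFourier]
  | succ n ih =>
    have hpos : 0 < a * 16 ^ n := by positivity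
    have hlow : ∀ ζ, ∑ i ∈ Finset.range n, f i ζ ≠ 0 → 0 ≤ ζ.1 ∧ ζ.1 ≤ a * 16 ^ n / 4 := by
      intro ζ hζ
      obtain ⟨i, hi, hne⟩ := Finset.exists_ne_zero_of_sum_ne_zero hζ
      obtain ⟨hle, hlt⟩ := hmem i ζ hne
      have hpow : a * (16 : ℝ) ^ (i + 1) ≤ a * 16 ^ n := by
        gcongr
        · norm_num
        · exact Finset.mem_range.1 hi
      rw [pow_succ] at hpow
      exact ⟨le_trans (by positivity) hle, by linarith⟩
    simp only [Finset.sum_range_succ, mul_add]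
    exact (rpow_third_lintegral_invFourier_add_le (by linarith) (isProfile_sum hf _) (hf n) hlow
      fun ζ hζ => (hmem n ζ hζ).1).trans (add_le_add_left ih _)

/-! ### Mixed norms -/

theorem rpow_lintegral_le_interpolate {α : Type*} [MeasurableSpace α] {μ : Measure α} {r s q θ : ℝ}
    (hr : 0 < r) (hs : 0 < s) (hq : 0 < q) (hθ₀ : 0 ≤ θ) (hθ₁ : θ ≤ 1)
    (hrsq : 1 / q = (1 - θ) / r + θ / s) {u : α → ℝ≥0∞} (hu : AEMeasurable u μ) :
    (∫⁻ x, u x ^ q ∂μ) ^ (1 / q) ≤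
      (∫⁻ x, u x ^ r ∂μ) ^ ((1 - θ) / r) * (∫⁻ x, u x ^ s ∂μ) ^ (θ / s) := by
  have : 0 ≤ 1 - θ := sub_nonneg.2 hθ₁
  have hsum : (1 - θ) * q / r + θ * q / s = 1 := by
    calc _ = ((1 - θ) / r + θ / s) * q := by ring
      _ = 1 := by rw [← hrsq, one_div_mul_cancel hq.ne']
  calc (∫⁻ x, u x ^ q ∂μ) ^ (1 / q)
      = (∫⁻ x, (u x ^ r) ^ ((1 - θ) * q / r) * (u x ^ s) ^ (θ * q / s) ∂μ) ^ (1 / q) := by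
        congr 2 with x
        rw [← ENNReal.rpow_mul, ← ENNReal.rpow_mul, mul_div_cancel₀ _ hr.ne',
          mul_div_cancel₀ _ hs.ne',
          ← ENNReal.rpow_add_of_nonneg _ _ (by positivity) (by positivity)]
        ring_nf
    _ ≤ ((∫⁻ x, u x ^ r ∂μ) ^ ((1 - θ) * q / r) * (∫⁻ x, u x ^ s ∂μ) ^ (θ * q / s)) ^ (1 / q) :=
      ENNReal.rpow_le_rpow (ENNReal.lintegral_mul_norm_pow_le (hu.pow_const _) (hu.pow_const _)
        (by positivity) (by positivity) hsum) (by positivity)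
    _ = _ := by
      rw [ENNReal.mul_rpow_of_nonneg _ _ (by positivity), ← ENNReal.rpow_mul, ← ENNReal.rpow_mul]
      congr 2 <;> field_simp

section MixedLp

variable {X Y : Type*} [MeasureSpace X] [MeasureSpace Y]

/-- The mixed norm `‖w‖_{L^p(X; L^q(Y))}` of a nonnegative function, for finite real exponents. -/
def mixedLp (p q : ℝ) (w : X → Y → ℝ≥0∞) : ℝ≥0∞ :=
  (∫⁻ t, ((∫⁻ z, w t z ^ q) ^ (1 / q)) ^ p) ^ (1 / p)

theorem mixedLp_eq (p q : ℝ) (w : X → Y → ℝ≥0∞) :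
    mixedLp p q w = (∫⁻ t, (∫⁻ z, w t z ^ q) ^ (p / q)) ^ (1 / p) := by
  simp_rw [mixedLp, ← ENNReal.rpow_mul, one_div_mul_eq_div]

theorem mixedLp_mono {p q : ℝ} (hp : 0 ≤ p) (hq : 0 ≤ q) {w w' : X → Y → ℝ≥0∞}
    (h : ∀ t z, w t z ≤ w' t z) : mixedLp p q w ≤ mixedLp p q w' := by
  refine ENNReal.rpow_le_rpow (lintegral_mono fun t => ?_) (by positivity)
  refine ENNReal.rpow_le_rpow (ENNReal.rpow_le_rpow (lintegral_mono fun z => ?_) (by positivity)) hp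
  exact ENNReal.rpow_le_rpow (h t z) hq

theorem mixedLp_sq (p q : ℝ) (w : X → Y → ℝ≥0∞) :
    mixedLp p q w ^ 2 = mixedLp (p / 2) (q / 2) fun t z => w t z ^ 2 := by
  have hexp (x : ℝ≥0∞) : (x ^ 2) ^ (q / 2) = x ^ q := by
    rw [← ENNReal.rpow_natCast, ← ENNReal.rpow_mul]
    congr 1
    push_cast
    ring
  simp_rw [mixedLp_eq, hexp, div_div_div_cancel_right₀ (two_ne_zero' ℝ)]
  rw [← ENNReal.rpow_natCast, ← ENNReal.rpow_mul]
  congr 1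
  push_cast
  rw [one_div_div, one_div_mul_eq_div]

variable [SFinite (volume : Measure Y)] {p q : ℝ}

theorem measurable_rpow_lintegral_rpow {w : X → Y → ℝ≥0∞} (hw : Measurable (Function.uncurry w))
    (q r : ℝ) : Measurable fun t => (∫⁻ z, w t z ^ q) ^ r :=
  (Measurable.lintegral_prod_right' (hw.pow_const q)).pow_const r

theorem mixedLp_add_le (hp : 1 ≤ p) (hq : 1 ≤ q) {v w : X → Y → ℝ≥0∞}
    (hv : Measurable (Function.uncurry v)) (hw : Measurable (Function.uncurry w)) :
    mixedLp p q (fun t z => v t z + w t z) ≤ mixedLp p q v + mixedLp p q w := by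
  refine le_trans (ENNReal.rpow_le_rpow (lintegral_mono fun t => ?_) (by positivity))
    (ENNReal.lintegral_Lp_add_le (measurable_rpow_lintegral_rpow hv q (1 / q)).aemeasurable
      (measurable_rpow_lintegral_rpow hw q (1 / q)).aemeasurable hp)
  exact ENNReal.rpow_le_rpow (ENNReal.lintegral_Lp_add_le hv.of_uncurry_left.aemeasurable
    hw.of_uncurry_left.aemeasurable hq) (by positivity)

theorem mixedLp_sum_le {ι : Type*} (hp : 1 ≤ p) (hq : 1 ≤ q) (s : Finset ι)
    {w : ι → X → Y → ℝ≥0∞} (hw : ∀ i, Measurable (Function.uncurry (w i))) :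
    mixedLp p q (fun t z => ∑ i ∈ s, w i t z) ≤ ∑ i ∈ s, mixedLp p q (w i) := by
  classical
  induction s using Finset.induction_on with
  | empty =>
    have hp₀ := zero_lt_one.trans_le hp
    have hq₀ := zero_lt_one.trans_le hq
    simp [mixedLp, hp₀, hq₀]
  | insert i s hi ih =>
    simp only [Finset.sum_insert hi]
    exact (mixedLp_add_le hp hq (hw i) (w := fun t z => ∑ j ∈ s, w j t z)
      (Finset.measurable_fun_sum s fun j _ => hw j)).trans (add_le_add_right ih _)

theorem mixedLp_sum_sq_le {ι : Type*} (hp : 2 ≤ p) (hq : 2 ≤ q) (s : Finset ι)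
    {w : ι → X → Y → ℝ≥0∞} (hw : ∀ i, Measurable (Function.uncurry (w i))) :
    mixedLp p q (fun t z => ∑ i ∈ s, w i t z) ^ 2 ≤
      ∑ i ∈ s, ∑ j ∈ s, mixedLp (p / 2) (q / 2) fun t z => w i t z * w j t z := by
  simp_rw [mixedLp_sq, sq, Finset.sum_mul_sum, ← Finset.sum_product']
  exact mixedLp_sum_le (by linarith) (by linarith) (s ×ˢ s)
    (w := fun k t z => w k.1 t z * w k.2 t z) fun k => (hw k.1).mul (hw k.2)

theorem mixedLp_mul_le {p₁ p₂ q₁ q₂ : ℝ} (hp : 0 < p) (hp₁ : p < p₁) (hpp : 1 / p = 1 / p₁ + 1 / p₂)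
    (hq : 0 < q) (hq₁ : q < q₁) (hqq : 1 / q = 1 / q₁ + 1 / q₂) {v w : X → Y → ℝ≥0∞}
    (hv : Measurable (Function.uncurry v)) (hw : Measurable (Function.uncurry w)) :
    mixedLp p q (fun t z => v t z * w t z) ≤ mixedLp p₁ q₁ v * mixedLp p₂ q₂ w := by
  refine le_trans (ENNReal.rpow_le_rpow (lintegral_mono fun t => ?_) (by positivity))
    (ENNReal.lintegral_Lp_mul_le_Lq_mul_Lr hp hp₁ hpp _
      (measurable_rpow_lintegral_rpow hv q₁ (1 / q₁)).aemeasurable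
      (measurable_rpow_lintegral_rpow hw q₂ (1 / q₂)).aemeasurable)
  exact ENNReal.rpow_le_rpow (ENNReal.lintegral_Lp_mul_le_Lq_mul_Lr hq hq₁ hqq _
    hv.of_uncurry_left.aemeasurable hw.of_uncurry_left.aemeasurable) hp.le

theorem mixedLp_le_interpolate {θ : ℝ} (hθ₀ : 0 < θ) (hθ₁ : θ ≤ 1) (hq : 0 < q)
    (hθq : 1 / q = 1 / 2 - θ / 3) {w : X → Y → ℝ≥0∞} (hw : Measurable (Function.uncurry w))
    {G τ : ℝ≥0∞} (hG : ∀ t, ∫⁻ z, w t z ^ (2 : ℝ) ≤ G)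
    (hτ : ∫⁻ t, (∫⁻ z, w t z ^ (6 : ℝ)) ^ (1 / 3 : ℝ) ≤ τ * G) :
    mixedLp (2 / θ) q w ≤ G ^ (1 / 2 : ℝ) * τ ^ (θ / 2) := by
  have : 0 ≤ 1 - θ := sub_nonneg.2 hθ₁
  have hslice (t : X) : ((∫⁻ z, w t z ^ q) ^ (1 / q)) ^ (2 / θ) ≤
      G ^ ((1 - θ) / θ) * (∫⁻ z, w t z ^ (6 : ℝ)) ^ (1 / 3 : ℝ) := by
    calc _ ≤ (G ^ ((1 - θ) / 2) * (∫⁻ z, w t z ^ (6 : ℝ)) ^ (θ / 6)) ^ (2 / θ) := by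
          refine ENNReal.rpow_le_rpow ((rpow_lintegral_le_interpolate (s := 6) two_pos (by norm_num)
            hq hθ₀.le hθ₁ (by linarith) hw.of_uncurry_left.aemeasurable).trans ?_) (by positivity)
          exact mul_le_mul_left (ENNReal.rpow_le_rpow (hG t) (by positivity)) _
      _ = _ := by
        rw [ENNReal.mul_rpow_of_nonneg _ _ (by positivity), ← ENNReal.rpow_mul, ← ENNReal.rpow_mul]
        congr 2
        · field_simp
        · field_simp
          norm_num
  calc mixedLp (2 / θ) q w
      ≤ (∫⁻ t, G ^ ((1 - θ) / θ) * (∫⁻ z, w t z ^ (6 : ℝ)) ^ (1 / 3 : ℝ)) ^ (1 / (2 / θ)) :=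
        ENNReal.rpow_le_rpow (lintegral_mono hslice) (by positivity)
    _ ≤ (G ^ ((1 - θ) / θ) * (τ * G)) ^ (1 / (2 / θ)) := by
      rw [lintegral_const_mul _ (measurable_rpow_lintegral_rpow hw _ _)]
      exact ENNReal.rpow_le_rpow (mul_le_mul_right hτ _) (by positivity)
    _ = G ^ (1 / 2 : ℝ) * τ ^ (θ / 2) := by
      have hpow : G ^ ((1 - θ) / θ) * G = G ^ (1 / θ) := by
        nth_rw 2 [← ENNReal.rpow_one G]
        rw [← ENNReal.rpow_add_of_nonneg _ _ (by positivity) zero_le_one]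
        congr 1
        field_simp
        ring
      rw [mul_left_comm, hpow, mul_comm, ENNReal.mul_rpow_of_nonneg _ _ (by positivity),
        ← ENNReal.rpow_mul, one_div_div]
      congr 2
      field_simp

end MixedLp

/-! ### Estimates for finitely many separated blocks -/

theorem enorm_circleExp_mul (r : ℝ) (c : ℂ) : ‖(Circle.exp r : ℂ) * c‖ₑ = ‖c‖ₑ := by
  rw [enorm_mul, ← ofReal_norm (Circle.exp r : ℂ), Circle.norm_coe, ENNReal.ofReal_one, one_mul]

section Profile

variable {f g : ℝ × E2 → ℂ}

theorem IsProfile.modulate (hf : IsProfile f) (t : ℝ) :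
    IsProfile fun ζ => (Circle.exp (t * omega ζ) : ℂ) * f ζ where
  measurable := (by fun_prop : Measurable fun ζ => (Circle.exp (t * omega ζ) : ℂ)).mul hf.measurable
  integrable := integrable_circleExp_mul hf.integrable (measurable_omega.const_mul t)
  lintegral_sq_ne_top := by
    simpa only [enorm_circleExp_mul] using hf.lintegral_sq_ne_top

theorem evolution_add (hf : IsProfile f) (hg : IsProfile g) (t : ℝ) (z : ℝ × E2) :
    evolution (fun ζ => f ζ + g ζ) t z = evolution f t z + evolution g t z := by
  simp only [evolution, mul_add]
  exact invFourier_add (hf.modulate t).integrable (hg.modulate t).integrable z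

theorem evolution_sum {ι : Type*} {f : ι → ℝ × E2 → ℂ} (hf : ∀ i, IsProfile (f i)) (s : Finset ι)
    (t : ℝ) (z : ℝ × E2) :
    evolution (fun ζ => ∑ i ∈ s, f i ζ) t z = ∑ i ∈ s, evolution (f i) t z := by
  simp only [evolution, invFourier, Finset.mul_sum]
  exact integral_finsetSum s fun i _ =>
    integrable_circleExp_mul ((hf i).modulate t).integrable (by fun_prop)

/-- A constant valid both in the energy estimate and in the endpoint estimate for one block. -/
def blockConst : ℝ≥0∞ := ENNReal.ofReal plancherelConst + 16 * ENNReal.ofReal dualConst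

theorem blockConst_ne_top : blockConst ≠ ∞ := by
  simp [blockConst, ENNReal.mul_eq_top]

theorem lintegral_evolution_sq_le (hf : IsProfile f) (t : ℝ) :
    ∫⁻ z, ‖evolution f t z‖ₑ ^ (2 : ℝ) ≤ blockConst * ∫⁻ ζ, ‖f ζ‖ₑ ^ 2 := by
  have hplancherel := lintegral_invFourier_sq_le (hf.modulate t).integrable
  simp only [enorm_circleExp_mul] at hplancherel
  simp only [ENNReal.rpow_ofNat]
  exact hplancherel.trans (mul_le_mul_left le_self_add _)

theorem lintegral_evolution_freqBlock_le_blockConst {a : ℝ} (ha : 0 < a) (hf : IsProfile f)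
    (hsupp : ∀ ζ ∉ freqBlock a, f ζ = 0) :
    ∫⁻ t, (∫⁻ z, ‖evolution f t z‖ₑ ^ (6 : ℝ)) ^ (1 / 3 : ℝ) ≤
      ENNReal.ofReal (a ^ (1 / 3 : ℝ)) * (blockConst * ∫⁻ ζ, ‖f ζ‖ₑ ^ 2) := by
  refine (lintegral_evolution_freqBlock_le ha hf.integrable hf.measurable hsupp).trans ?_
  rw [ENNReal.ofReal_mul dualConst_pos.le, ← mul_assoc, ← mul_assoc,
    mul_comm (ENNReal.ofReal (a ^ _))]
  exact mul_le_mul_left (mul_le_mul_left le_add_self _) _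

theorem mixedLp_evolution_freqBlock_le {a θ q : ℝ} (ha : 0 < a) (hf : IsProfile f)
    (hsupp : ∀ ζ ∉ freqBlock a, f ζ = 0) (hθ₀ : 0 < θ) (hθ₁ : θ ≤ 1) (hq : 0 < q)
    (hθq : 1 / q = 1 / 2 - θ / 3) :
    mixedLp (2 / θ) q (fun t z => ‖evolution f t z‖ₑ) ≤
      (blockConst * ∫⁻ ζ, ‖f ζ‖ₑ ^ 2) ^ (1 / 2 : ℝ) * ENNReal.ofReal (a ^ (θ / 6)) := by
  refine (mixedLp_le_interpolate hθ₀ hθ₁ hq hθq (measurable_evolution hf.measurable).enorm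
    (lintegral_evolution_sq_le hf)
    (lintegral_evolution_freqBlock_le_blockConst ha hf hsupp)).trans_eq ?_
  rw [ENNReal.ofReal_rpow_of_pos (by positivity), ← Real.rpow_mul ha.le]
  ring_nf

end Profile

/-- The squared `L²` norm of `|ξ|^{s/2} f`. -/
def weightedSq (s : ℝ) (f : ℝ × E2 → ℂ) : ℝ≥0∞ :=
  ∫⁻ ζ, ENNReal.ofReal (|ζ.1| ^ s) * ‖f ζ‖ₑ ^ 2

theorem ofReal_rpow_mul_lintegral_le_weightedSq {a s : ℝ} (ha : 0 ≤ a) (hs : 0 ≤ s)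
    {f : ℝ × E2 → ℂ} (hsupp : ∀ ζ ∉ freqBlock a, f ζ = 0) :
    ENNReal.ofReal (a ^ s) * ∫⁻ ζ, ‖f ζ‖ₑ ^ 2 ≤ weightedSq s f := by
  rw [← lintegral_const_mul' _ _ ENNReal.ofReal_ne_top]
  refine lintegral_mono fun ζ => ?_
  by_cases hζ : ζ ∈ freqBlock a
  · exact mul_le_mul_left (ENNReal.ofReal_le_ofReal
      (Real.rpow_le_rpow ha (hζ.1.trans (le_abs_self _)) hs)) _
  · simp [hsupp ζ hζ]

/-- The Strichartz estimate at the real exponents `(p, q)` for finite sums of profiles supported in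
the 16-adically separated blocks `freqBlock (a * 16 ^ i)`, uniformly in the number of blocks. -/
def HasSeparatedStrichartz (p q : ℝ) : Prop :=
  ∃ C : ℝ≥0∞, C ≠ ∞ ∧ ∀ a : ℝ, 0 < a → ∀ (n : ℕ) (f : ℕ → ℝ × E2 → ℂ), (∀ i, IsProfile (f i)) →
    (∀ i, ∀ ζ ∉ freqBlock (a * 16 ^ i), f i ζ = 0) →
    mixedLp p q (fun t z => ‖evolution (fun ζ => ∑ i ∈ Finset.range n, f i ζ) t z‖ₑ) ^ 2 ≤
      C * ∑ i ∈ Finset.range n, weightedSq (2 / (3 * p)) (f i)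

theorem hasSeparatedStrichartz_two_six : HasSeparatedStrichartz 2 6 := by
  refine ⟨59 * blockConst, ENNReal.mul_ne_top (by norm_num) blockConst_ne_top,
    fun a ha n f hf hsupp => ?_⟩
  have hslice (t : ℝ) :
      (∫⁻ z, ‖evolution (fun ζ => ∑ i ∈ Finset.range n, f i ζ) t z‖ₑ ^ (6 : ℝ)) ^ (1 / 3 : ℝ) ≤
        59 * ∑ i ∈ Finset.range n, (∫⁻ z, ‖evolution (f i) t z‖ₑ ^ (6 : ℝ)) ^ (1 / 3 : ℝ) := by
    simp only [evolution, Finset.mul_sum]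
    rw [← Finset.mul_sum]
    exact rpow_third_lintegral_invFourier_sum_le ha (fun i => (hf i).modulate t)
      (fun i ζ hζ => by rw [hsupp i ζ hζ, mul_zero]) n
  calc _ = ∫⁻ t, (∫⁻ z, ‖evolution (fun ζ => ∑ i ∈ Finset.range n, f i ζ) t z‖ₑ ^ (6 : ℝ))
        ^ (1 / 3 : ℝ) := by
        rw [mixedLp_eq, rpow_half_sq]
        norm_num
    _ ≤ 59 * ∑ i ∈ Finset.range n,
        ∫⁻ t, (∫⁻ z, ‖evolution (f i) t z‖ₑ ^ (6 : ℝ)) ^ (1 / 3 : ℝ) := by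
      refine (lintegral_mono hslice).trans_eq ?_
      rw [lintegral_const_mul' _ _ (by norm_num), lintegral_finsetSum _ fun i _ =>
        measurable_rpow_lintegral_rpow (measurable_evolution (hf i).measurable).enorm _ _]
    _ ≤ 59 * ∑ i ∈ Finset.range n, blockConst * weightedSq (1 / 3) (f i) := by
      refine mul_le_mul_right (Finset.sum_le_sum fun i _ => ?_) _
      refine (lintegral_evolution_freqBlock_le_blockConst (by positivity) (hf i) (hsupp i)).trans ?_
      rw [mul_left_comm]
      exact mul_le_mul_right (ofReal_rpow_mul_lintegral_le_weightedSq (by positivity)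
        (by norm_num) (hsupp i)) _
    _ = _ := by
      rw [← Finset.mul_sum, mul_assoc]
      norm_num

theorem rpow_mul_rpow_eq_pow_mul {a : ℝ} (ha : 0 < a) (θ : ℝ) (k : ℕ) :
    (a * 16 ^ k) ^ (θ ^ 2 / 6) * a ^ ((2 * θ - θ ^ 2) / 6) =
      ((16 : ℝ) ^ (-(θ * (1 - θ) / 6))) ^ k * ((a * 16 ^ k) ^ (θ / 6) * a ^ (θ / 6)) := by
  obtain ⟨x, rfl⟩ : ∃ x, a = Real.exp x := ⟨Real.log a, (Real.exp_log ha).symm⟩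
  obtain ⟨y, hy⟩ : ∃ y, (16 : ℝ) = Real.exp y := ⟨Real.log 16, (Real.exp_log (by norm_num)).symm⟩
  rw [mul_one_sub, ← sq]
  generalize θ ^ 2 = s
  simp only [hy, ← Real.rpow_natCast, ← Real.exp_mul, ← Real.exp_add]
  congr 1
  ring

theorem rpow_half_mul_ofReal_le_weightedSq {a θ : ℝ} (ha : 0 ≤ a) (hθ : 0 ≤ θ)
    {f : ℝ × E2 → ℂ} (hsupp : ∀ ζ ∉ freqBlock a, f ζ = 0) :
    (blockConst * ∫⁻ ζ, ‖f ζ‖ₑ ^ 2) ^ (1 / 2 : ℝ) * ENNReal.ofReal (a ^ (θ / 6)) ≤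
      (blockConst * weightedSq (θ / 3) f) ^ (1 / 2 : ℝ) := by
  rw [show a ^ (θ / 6) = (a ^ (θ / 3)) ^ (1 / 2 : ℝ) by rw [← Real.rpow_mul ha]; ring_nf,
    ← ENNReal.ofReal_rpow_of_nonneg (by positivity) (by norm_num),
    ← ENNReal.mul_rpow_of_nonneg _ _ (by norm_num), mul_assoc, mul_comm (∫⁻ ζ, _)]
  exact ENNReal.rpow_le_rpow (mul_le_mul_right
    (ofReal_rpow_mul_lintegral_le_weightedSq ha (by positivity) hsupp) _) (by norm_num)

theorem rpow_half_mul_rpow_half_le_add (x y : ℝ≥0∞) : x ^ (1 / 2 : ℝ) * y ^ (1 / 2 : ℝ) ≤ x + y :=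
  calc _ ≤ 2 * (x ^ (1 / 2 : ℝ) * y ^ (1 / 2 : ℝ)) := le_mul_of_one_le_left' one_le_two
    _ ≤ x + y := by
      simpa only [rpow_half_sq] using two_mul_mul_le_sq_add_sq (x ^ (1 / 2 : ℝ)) (y ^ (1 / 2 : ℝ))

section Interpolation

variable {q θ : ℝ}

theorem mixedLp_evolution_mul_evolution_le (hθ₀ : 0 < θ) (hθ₁ : θ < 1) (hq : 0 < q)
    (hθq : 1 / q = 1 / 2 - θ / 3) {a : ℝ} (ha : 0 < a) {f g : ℝ × E2 → ℂ} (hf : IsProfile f)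
    (hg : IsProfile g) (k : ℕ) (hfsupp : ∀ ζ ∉ freqBlock (a * 16 ^ k), f ζ = 0)
    (hgsupp : ∀ ζ ∉ freqBlock a, g ζ = 0) :
    mixedLp (1 / θ) (q / 2) (fun t z => ‖evolution f t z‖ₑ * ‖evolution g t z‖ₑ) ≤
      ENNReal.ofReal (((16 : ℝ) ^ (-(θ * (1 - θ) / 6))) ^ k) *
        (blockConst * weightedSq (θ / 3) f + blockConst * weightedSq (θ / 3) g) := by
  -- Interpolate the high block at `θ ^ 2` and the low block at `2 * θ - θ ^ 2`: the average is
  -- `θ`, and the imbalance produces the decay in `k`.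
  have hsq₀ : 0 < θ ^ 2 := by positivity
  have hsq_lt : θ ^ 2 < θ := by nlinarith
  have hlow_le : 2 * θ - θ ^ 2 ≤ 1 := by nlinarith [sq_nonneg (1 - θ)]
  obtain ⟨q₁, hq₁, hq₁θ⟩ : ∃ q₁ : ℝ, 0 < q₁ ∧ 1 / q₁ = 1 / 2 - θ ^ 2 / 3 :=
    ⟨(1 / 2 - θ ^ 2 / 3)⁻¹, inv_pos.2 (by linarith), by rw [one_div, inv_inv]⟩
  obtain ⟨q₂, hq₂, hq₂θ⟩ : ∃ q₂ : ℝ, 0 < q₂ ∧ 1 / q₂ = 1 / 2 - (2 * θ - θ ^ 2) / 3 :=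
    ⟨(1 / 2 - (2 * θ - θ ^ 2) / 3)⁻¹, inv_pos.2 (by linarith), by rw [one_div, inv_inv]⟩
  have hq_eq : 1 / (q / 2) = 1 / q₁ + 1 / q₂ := by
    rw [one_div_div, hq₁θ, hq₂θ, ← mul_one_div, hθq]
    ring
  have hq_lt : q / 2 < q₁ := by
    refine (one_div_lt_one_div hq₁ (by positivity)).1 ?_
    rw [hq_eq]
    exact lt_add_of_pos_right _ (by positivity)
  have hAk : 0 < a * 16 ^ k := by positivity
  refine (mixedLp_mul_le (p₁ := 2 / θ ^ 2) (p₂ := 2 / (2 * θ - θ ^ 2))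
    (by positivity) (by rw [div_lt_div_iff₀ hθ₀ hsq₀]; linarith)
    (by simp only [one_div_div]; ring) (by positivity) hq_lt hq_eq
    (measurable_evolution hf.measurable).enorm (measurable_evolution hg.measurable).enorm).trans
    ((mul_le_mul' (mixedLp_evolution_freqBlock_le hAk hf hfsupp hsq₀
    (by linarith) hq₁ hq₁θ) (mixedLp_evolution_freqBlock_le ha hg hgsupp (by linarith)
    hlow_le hq₂ hq₂θ)).trans ?_)
  rw [mul_mul_mul_comm, ← ENNReal.ofReal_mul (by positivity), rpow_mul_rpow_eq_pow_mul ha,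
    ENNReal.ofReal_mul (by positivity), ENNReal.ofReal_mul (by positivity), mul_left_comm,
    mul_mul_mul_comm]
  exact mul_le_mul_right ((mul_le_mul' (rpow_half_mul_ofReal_le_weightedSq hAk.le hθ₀.le hfsupp)
    (rpow_half_mul_ofReal_le_weightedSq ha.le hθ₀.le hgsupp)).trans
    (rpow_half_mul_rpow_half_le_add _ _)) _

variable {a : ℝ} {f : ℕ → ℝ × E2 → ℂ}

theorem mixedLp_evolution_mul_evolution_le_natAbs (hθ₀ : 0 < θ) (hθ₁ : θ < 1) (hq : 0 < q)
    (hθq : 1 / q = 1 / 2 - θ / 3) (ha : 0 < a) (hf : ∀ i, IsProfile (f i))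
    (hsupp : ∀ i, ∀ ζ ∉ freqBlock (a * 16 ^ i), f i ζ = 0) (i j : ℕ) :
    mixedLp (1 / θ) (q / 2) (fun t z => ‖evolution (f i) t z‖ₑ * ‖evolution (f j) t z‖ₑ) ≤
      ENNReal.ofReal (((16 : ℝ) ^ (-(θ * (1 - θ) / 6))) ^ ((i : ℤ) - j).natAbs) *
        (blockConst * weightedSq (θ / 3) (f i) + blockConst * weightedSq (θ / 3) (f j)) := by
  wlog hji : j ≤ i generalizing i j
  · rw [← Int.natAbs_neg, neg_sub, add_comm (blockConst * _)]
    simpa only [mul_comm] using this j i (le_of_not_ge hji)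
  obtain ⟨k, rfl⟩ := Nat.exists_eq_add_of_le hji
  rw [show (((j + k : ℕ) : ℤ) - j).natAbs = k by simp]
  refine mixedLp_evolution_mul_evolution_le hθ₀ hθ₁ hq hθq (by positivity) (hf _) (hf j) k
    (fun ζ hζ => hsupp _ ζ ?_) (hsupp j)
  rwa [pow_add, ← mul_assoc]

end Interpolation

theorem sum_range_sum_range_pow_natAbs_sub_mul_add_le {ρ : ℝ} (h0 : 0 ≤ ρ) (h1 : ρ < 1) (n : ℕ)
    (A : ℕ → ℝ≥0∞) :
    ∑ i ∈ Finset.range n, ∑ j ∈ Finset.range n,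
        ENNReal.ofReal (ρ ^ ((i : ℤ) - j).natAbs) * (A i + A j) ≤
      2 * ENNReal.ofReal (geomSum ρ) * ∑ i ∈ Finset.range n, A i := by
  simpa only [Finset.sum_map, Nat.castEmbedding_apply, Int.toNat_natCast] using
    sum_sum_pow_natAbs_sub_mul_add_le h0 h1 ((Finset.range n).map Nat.castEmbedding)
      fun k => A k.toNat

theorem hasSeparatedStrichartz_of_two_lt {p q : ℝ} (hp : 2 < p) (hq : 2 ≤ q)
    (hpq : 2 / p + 3 / q = 3 / 2) : HasSeparatedStrichartz p q := by
  obtain ⟨θ, hθ⟩ : ∃ θ, θ = 2 / p := ⟨_, rfl⟩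
  have hθ₀ : 0 < θ := hθ ▸ by positivity
  have hθ₁ : θ < 1 := by rwa [hθ, div_lt_one (by linarith)]
  have hθq : 1 / q = 1 / 2 - θ / 3 := by rw [hθ]; linear_combination hpq / 3
  have hpθ : p / 2 = 1 / θ := by rw [hθ, one_div_div]
  have hweight : 2 / (3 * p) = θ / 3 := by rw [hθ]; ring
  have hdecay : (16 : ℝ) ^ (-(θ * (1 - θ) / 6)) < 1 :=
    Real.rpow_lt_one_of_one_lt_of_neg (by norm_num) (by nlinarith)
  refine ⟨2 * ENNReal.ofReal (geomSum (16 ^ (-(θ * (1 - θ) / 6)))) * blockConst,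
    ENNReal.mul_ne_top (by finiteness) blockConst_ne_top, fun a ha n f hf hsupp => ?_⟩
  rw [hweight]
  calc _ ≤ mixedLp p q (fun t z => ∑ i ∈ Finset.range n, ‖evolution (f i) t z‖ₑ) ^ 2 := by
        simp only [evolution_sum hf]
        exact pow_le_pow_left' (mixedLp_mono (by linarith) (by linarith)
          fun t z => enorm_sum_le _ _) 2
    _ ≤ ∑ i ∈ Finset.range n, ∑ j ∈ Finset.range n, mixedLp (1 / θ) (q / 2)
          (fun t z => ‖evolution (f i) t z‖ₑ * ‖evolution (f j) t z‖ₑ) := by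
      rw [← hpθ]
      exact mixedLp_sum_sq_le hp.le hq _ fun i => (measurable_evolution (hf i).measurable).enorm
    _ ≤ _ := Finset.sum_le_sum fun i _ => Finset.sum_le_sum fun j _ =>
      mixedLp_evolution_mul_evolution_le_natAbs hθ₀ hθ₁ (by linarith) hθq ha hf hsupp i j
    _ ≤ _ := sum_range_sum_range_pow_natAbs_sub_mul_add_le (by positivity) hdecay n
      fun i => blockConst * weightedSq (θ / 3) (f i)
    _ = _ := by rw [← Finset.mul_sum, mul_assoc _ blockConst]

/-! ### Summation over all frequency blocks -/

theorem weightedSq_indicator (s : ℝ) (f : ℝ × E2 → ℂ) {S : Set (ℝ × E2)} (hS : MeasurableSet S) :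
    weightedSq s (S.indicator f) = ∫⁻ ζ in S, ENNReal.ofReal (|ζ.1| ^ s) * ‖f ζ‖ₑ ^ 2 := by
  rw [weightedSq, ← lintegral_indicator hS]
  refine lintegral_congr fun ζ => ?_
  by_cases hζ : ζ ∈ S <;> simp [hζ]

theorem weightedSq_indicator_le (s : ℝ) (f : ℝ × E2 → ℂ) {S : Set (ℝ × E2)}
    (hS : MeasurableSet S) : weightedSq s (S.indicator f) ≤ weightedSq s f :=
  (weightedSq_indicator s f hS).trans_le (setLIntegral_le_lintegral _ _)

theorem IsProfile.indicator {f : ℝ × E2 → ℂ} (hf : IsProfile f) {S : Set (ℝ × E2)}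
    (hS : MeasurableSet S) : IsProfile (S.indicator f) where
  measurable := hf.measurable.indicator hS
  integrable := hf.integrable.indicator hS
  lintegral_sq_ne_top := by
    refine ne_top_of_le_ne_top hf.lintegral_sq_ne_top (lintegral_mono fun ζ => ?_)
    by_cases hζ : ζ ∈ S <;> simp [hζ]

theorem disjoint_freqBlock {a b : ℝ} (hab : 4 * a ≤ b) : Disjoint (freqBlock a) (freqBlock b) :=
  Set.disjoint_left.2 fun _ hζa hζb => (hζa.2.trans_le hab).not_ge hζb.1

theorem pairwiseDisjoint_freqBlock_mul_pow {a : ℝ} (ha : 0 < a) (s : Set ℕ) :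
    s.PairwiseDisjoint fun i => freqBlock (a * 16 ^ i) := by
  have hdisj {i j : ℕ} (hij : i < j) :
      Disjoint (freqBlock (a * 16 ^ i)) (freqBlock (a * 16 ^ j)) := by
    refine disjoint_freqBlock ?_
    calc 4 * (a * 16 ^ i) ≤ 16 * (a * 16 ^ i) := by gcongr; norm_num
      _ = a * 16 ^ (i + 1) := by ring
      _ ≤ a * 16 ^ j := by gcongr <;> [norm_num; exact hij]
  intro i _ j _ hij
  exact hij.lt_or_gt.elim hdisj fun hji => (hdisj hji).symm

/-- The union of the blocks `freqBlock (a * 16 ^ i)`, `i < n`. -/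
def blockUnion (a : ℝ) (n : ℕ) : Set (ℝ × E2) := ⋃ i ∈ Finset.range n, freqBlock (a * 16 ^ i)

theorem measurableSet_blockUnion (a : ℝ) (n : ℕ) : MeasurableSet (blockUnion a n) :=
  Finset.measurableSet_biUnion _ fun _ _ => measurableSet_freqBlock _

theorem mem_blockUnion {a : ℝ} {n : ℕ} {ζ : ℝ × E2} :
    ζ ∈ blockUnion a n ↔ ∃ i < n, ζ ∈ freqBlock (a * 16 ^ i) := by
  simp [blockUnion]

theorem sum_weightedSq_indicator_freqBlock_le {a : ℝ} (ha : 0 < a) (n : ℕ) (s : ℝ)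
    (f : ℝ × E2 → ℂ) :
    ∑ i ∈ Finset.range n, weightedSq s ((freqBlock (a * 16 ^ i)).indicator f) ≤ weightedSq s f := by
  simp only [weightedSq_indicator s f (measurableSet_freqBlock _)]
  rw [← lintegral_biUnion_finset (pairwiseDisjoint_freqBlock_mul_pow ha _)
    fun i _ => measurableSet_freqBlock _]
  exact setLIntegral_le_lintegral _ _

section

variable {p q : ℝ}

theorem HasSeparatedStrichartz.exists_blockUnion_le (h : HasSeparatedStrichartz p q) :
    ∃ C : ℝ≥0∞, C ≠ ∞ ∧ ∀ a : ℝ, 0 < a → ∀ (n : ℕ) (f : ℝ × E2 → ℂ), IsProfile f →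
      mixedLp p q (fun t z => ‖evolution ((blockUnion a n).indicator f) t z‖ₑ) ≤
        C * weightedSq (2 / (3 * p)) f ^ (1 / 2 : ℝ) := by
  obtain ⟨C, hC_top, hC⟩ := h
  refine ⟨C ^ (1 / 2 : ℝ), ENNReal.rpow_ne_top_of_nonneg (by norm_num) hC_top,
    fun a ha n f hf => ?_⟩
  have hsum : (blockUnion a n).indicator f =
      fun ζ => ∑ i ∈ Finset.range n, (freqBlock (a * 16 ^ i)).indicator f ζ :=
    Finset.indicator_biUnion _ _ (pairwiseDisjoint_freqBlock_mul_pow ha _)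
  have hsq := (hC a ha n _ (fun i => hf.indicator (measurableSet_freqBlock (a * 16 ^ i)))
    fun i ζ hζ => Set.indicator_of_notMem hζ f).trans
    (mul_le_mul_right (sum_weightedSq_indicator_freqBlock_le ha n _ f) _)
  rw [← hsum] at hsq
  rw [← ENNReal.mul_rpow_of_nonneg _ _ (by norm_num), one_div, ENNReal.le_rpow_inv_iff two_pos,
    ENNReal.rpow_ofNat]
  exact hsq

theorem tendsto_evolution_indicator {f : ℝ × E2 → ℂ} (hf : IsProfile f) {S : ℕ → Set (ℝ × E2)}
    (hS : ∀ n, MeasurableSet (S n)) (hmono : Monotone S) (t : ℝ) (z : ℝ × E2) :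
    Tendsto (fun n => evolution ((S n).indicator f) t z) atTop
      (nhds (evolution ((⋃ n, S n).indicator f) t z)) := by
  refine tendsto_integral_of_dominated_convergence (fun ζ => ‖f ζ‖) (fun n => ?_)
    hf.integrable.norm (fun n => Eventually.of_forall fun ζ => ?_)
    (Eventually.of_forall fun ζ => ?_)
  · exact (integrable_circleExp_mul ((hf.indicator (hS n)).modulate t).integrable
      (by fun_prop)).aestronglyMeasurable
  · simp only [norm_mul, Circle.norm_coe, one_mul]
    exact norm_indicator_le_norm_self _ _
  · exact (((hmono.tendsto_indicator S f ζ).mono_right (pure_le_nhds _)).const_mul _).const_mul _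

/-- The union of the blocks `freqBlock (a * 16 ^ k)`, `-N ≤ k < N`. -/
def blockExhaustion (a : ℝ) (N : ℕ) : Set (ℝ × E2) := blockUnion (a * (16 ^ N)⁻¹) (2 * N)

theorem measurableSet_blockExhaustion (a : ℝ) (N : ℕ) : MeasurableSet (blockExhaustion a N) :=
  measurableSet_blockUnion _ _

theorem monotone_blockExhaustion (a : ℝ) : Monotone (blockExhaustion a) := by
  refine monotone_nat_of_le_succ fun N ζ hζ => ?_
  obtain ⟨i, hi, hζi⟩ := mem_blockUnion.1 hζ
  refine mem_blockUnion.2 ⟨i + 1, by lia, ?_⟩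
  rwa [show a * (16 ^ (N + 1))⁻¹ * 16 ^ (i + 1) = a * (16 ^ N)⁻¹ * 16 ^ i by field_simp; ring]

theorem mem_iUnion_blockExhaustion {a : ℝ} {ζ : ℝ × E2} (m : ℤ)
    (hζ : ζ ∈ freqBlock (a * 16 ^ m)) : ζ ∈ ⋃ N, blockExhaustion a N := by
  refine Set.mem_iUnion.2 ⟨m.natAbs + 1, mem_blockUnion.2
    ⟨(m + (m.natAbs + 1)).toNat, by lia, ?_⟩⟩
  convert hζ using 2
  rw [mul_assoc, ← zpow_natCast, ← zpow_natCast, ← zpow_neg, ← zpow_add₀ (by norm_num)]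
  congr 2
  lia

theorem mem_iUnion_blockExhaustion_one_or_four {ζ : ℝ × E2} (hζ : 0 < ζ.1) :
    ζ ∈ ⋃ N, blockExhaustion 1 N ∨ ζ ∈ ⋃ N, blockExhaustion 4 N := by
  obtain ⟨m, hlow, hhigh⟩ := exists_mem_Ico_zpow hζ (by norm_num : (1 : ℝ) < 16)
  rw [zpow_add₀ (by norm_num), zpow_one] at hhigh
  rcases lt_or_ge ζ.1 (4 * 16 ^ m) with hlt | hge
  · exact .inl (mem_iUnion_blockExhaustion m ⟨by linarith, by linarith⟩)
  · exact .inr (mem_iUnion_blockExhaustion m ⟨hge, by linarith⟩)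

theorem HasSeparatedStrichartz.exists_iUnion_blockExhaustion_le (hp : 0 < p) (hq : 0 < q)
    (h : HasSeparatedStrichartz p q) :
    ∃ C : ℝ≥0∞, C ≠ ∞ ∧ ∀ a : ℝ, 0 < a → ∀ f : ℝ × E2 → ℂ, IsProfile f →
      mixedLp p q (fun t z => ‖evolution ((⋃ N, blockExhaustion a N).indicator f) t z‖ₑ) ≤
        C * weightedSq (2 / (3 * p)) f ^ (1 / 2 : ℝ) := by
  obtain ⟨C, hC_top, hC⟩ := h.exists_blockUnion_le
  refine ⟨C, hC_top, fun a ha f hf => ?_⟩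
  have hmeas := measurableSet_blockExhaustion a
  rw [mixedLp_eq, one_div, ENNReal.rpow_inv_le_iff hp]
  refine lintegral_lintegral_rpow_le_of_tendsto (by positivity)
    (fun N => measurable_evolution (hf.indicator (hmeas N)).measurable)
    (tendsto_evolution_indicator hf hmeas (monotone_blockExhaustion a)) fun N => ?_
  rw [← ENNReal.rpow_inv_le_iff hp, ← one_div, ← mixedLp_eq]
  exact hC _ (by positivity) _ f hf

theorem mixedLp_evolution_add_le (hp : 1 ≤ p) (hq : 1 ≤ q) {f g : ℝ × E2 → ℂ} (hf : IsProfile f)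
    (hg : IsProfile g) :
    mixedLp p q (fun t z => ‖evolution (fun ζ => f ζ + g ζ) t z‖ₑ) ≤
      mixedLp p q (fun t z => ‖evolution f t z‖ₑ) + mixedLp p q fun t z => ‖evolution g t z‖ₑ := by
  refine le_trans (mixedLp_mono (by linarith) (by linarith) fun t z => ?_)
    (mixedLp_add_le hp hq (measurable_evolution hf.measurable).enorm
      (measurable_evolution hg.measurable).enorm)
  rw [evolution_add hf hg]
  exact enorm_add_le _ _

theorem eq_indicator_add_indicator_indicator_compl {X M : Type*} [AddZeroClass M] {f : X → M}
    {S T : Set X} (h : Function.support f ⊆ S ∪ T) :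
    f = fun x => S.indicator f x + T.indicator (Sᶜ.indicator f) x := by
  ext x
  by_cases hS : x ∈ S
  · have hSc : Sᶜ.indicator f x = 0 := Set.indicator_of_notMem (not_not.2 hS) f
    rw [Set.indicator_of_mem hS, Set.indicator_apply_eq_zero.2 fun _ => hSc, add_zero]
  · have hT : T.indicator f x = f x := Set.indicator_apply_eq_self.2 fun hT =>
      Function.notMem_support.1 fun hx => (h hx).elim hS hT
    rw [Set.indicator_of_notMem hS, zero_add, Set.indicator_indicator, Set.inter_comm,
      ← Set.indicator_indicator, Set.indicator_of_mem (Set.mem_compl hS), hT]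

theorem HasSeparatedStrichartz.exists_le_of_pos (hp : 1 ≤ p) (hq : 1 ≤ q)
    (h : HasSeparatedStrichartz p q) :
    ∃ C : ℝ≥0∞, C ≠ ∞ ∧ ∀ f : ℝ × E2 → ℂ, IsProfile f → Function.support f ⊆ {ζ | 0 < ζ.1} →
      mixedLp p q (fun t z => ‖evolution f t z‖ₑ) ≤
        C * weightedSq (2 / (3 * p)) f ^ (1 / 2 : ℝ) := by
  obtain ⟨C, hC_top, hC⟩ := h.exists_iUnion_blockExhaustion_le (by linarith) (by linarith)
  refine ⟨2 * C, by finiteness, fun f hf hpos => ?_⟩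
  have hmeas (a : ℝ) : MeasurableSet (⋃ N, blockExhaustion a N) :=
    .iUnion (measurableSet_blockExhaustion a)
  have hrest := hf.indicator (hmeas 1).compl
  have hsplit := eq_indicator_add_indicator_indicator_compl fun ζ hζ =>
    mem_iUnion_blockExhaustion_one_or_four (hpos hζ)
  calc _ ≤ mixedLp p q (fun t z => ‖evolution ((⋃ N, blockExhaustion 1 N).indicator f) t z‖ₑ) +
        mixedLp p q (fun t z => ‖evolution ((⋃ N, blockExhaustion 4 N).indicator
          ((⋃ N, blockExhaustion 1 N)ᶜ.indicator f)) t z‖ₑ) := by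
        conv_lhs => rw [hsplit]
        exact mixedLp_evolution_add_le hp hq (hf.indicator (hmeas 1)) (hrest.indicator (hmeas 4))
    _ ≤ C * weightedSq (2 / (3 * p)) f ^ (1 / 2 : ℝ) +
        C * weightedSq (2 / (3 * p)) f ^ (1 / 2 : ℝ) := by
      refine add_le_add (hC 1 one_pos f hf) ((hC 4 (by norm_num) _ hrest).trans ?_)
      exact mul_le_mul_right (ENNReal.rpow_le_rpow
        (weightedSq_indicator_le _ f (hmeas 1).compl) (by norm_num)) _
    _ = _ := by rw [← two_mul, mul_assoc]

/-- The Fourier-side counterpart of complex conjugation of the solution; it exchanges the half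
spaces `ξ > 0` and `ξ < 0`. -/
def reflect (f : ℝ × E2 → ℂ) (ζ : ℝ × E2) : ℂ := starRingEnd ℂ (f (-ζ))

theorem IsProfile.reflect {f : ℝ × E2 → ℂ} (hf : IsProfile f) : IsProfile (reflect f) where
  measurable := Complex.continuous_conj.measurable.comp (hf.measurable.comp measurable_neg)
  integrable := integrable_conj hf.integrable.comp_neg
  lintegral_sq_ne_top := by
    simp only [KP.reflect, RCLike.enorm_conj]
    rw [lintegral_neg_eq_self fun ζ => ‖f ζ‖ₑ ^ 2]
    exact hf.lintegral_sq_ne_top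

theorem weightedSq_reflect (s : ℝ) (f : ℝ × E2 → ℂ) :
    weightedSq s (reflect f) = weightedSq s f := by
  rw [weightedSq, weightedSq,
    ← lintegral_neg_eq_self fun ζ : ℝ × E2 => ENNReal.ofReal (|ζ.1| ^ s) * ‖f ζ‖ₑ ^ 2]
  simp only [reflect, RCLike.enorm_conj, Prod.fst_neg, abs_neg]

theorem omega_neg (ζ : ℝ × E2) : omega (-ζ) = -omega ζ := by
  simp only [omega, Prod.fst_neg, Prod.snd_neg, norm_neg, div_neg]
  ring

theorem evolution_reflect (f : ℝ × E2 → ℂ) (t : ℝ) (z : ℝ × E2) :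
    evolution (reflect f) t z = starRingEnd ℂ (evolution f t z) := by
  rw [evolution, evolution, invFourier, invFourier, ← integral_conj, ← integral_neg_eq_self]
  simp only [reflect, pairing_neg_right, omega_neg, neg_neg, map_mul, conj_circleExp, mul_neg]

theorem evolution_congr_ae {f g : ℝ × E2 → ℂ} (h : f =ᵐ[volume] g) (t : ℝ) (z : ℝ × E2) :
    evolution f t z = evolution g t z := by
  refine integral_congr_ae ?_
  filter_upwards [h] with ζ hζ
  simp only [hζ]

theorem ae_eq_indicator_pos_add_indicator_neg (f : ℝ × E2 → ℂ) :
    f =ᵐ[volume] fun ζ =>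
      {ζ : ℝ × E2 | 0 < ζ.1}.indicator f ζ + {ζ : ℝ × E2 | ζ.1 < 0}.indicator f ζ := by
  have hne : ∀ᵐ ζ : ℝ × E2, ζ.1 ≠ 0 :=
    (Measure.quasiMeasurePreserving_fst (μ := (volume : Measure ℝ))
      (ν := (volume : Measure E2))).ae (by simp [ae_iff] : ∀ᵐ x : ℝ, x ≠ 0)
  filter_upwards [hne] with ζ hζ
  rcases hζ.lt_or_gt with hneg | hpos
  · simp [hneg, hneg.le]
  · simp [hpos, hpos.le]

theorem HasSeparatedStrichartz.exists_mixedLp_evolution_le (hp : 1 ≤ p) (hq : 1 ≤ q)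
    (h : HasSeparatedStrichartz p q) :
    ∃ C : ℝ≥0∞, C ≠ ∞ ∧ ∀ f : ℝ × E2 → ℂ, IsProfile f →
      mixedLp p q (fun t z => ‖evolution f t z‖ₑ) ≤
        C * weightedSq (2 / (3 * p)) f ^ (1 / 2 : ℝ) := by
  obtain ⟨C, hC_top, hC⟩ := h.exists_le_of_pos hp hq
  refine ⟨2 * C, by finiteness, fun f hf => ?_⟩
  have hmeas_pos : MeasurableSet {ζ : ℝ × E2 | 0 < ζ.1} :=
    measurableSet_lt measurable_const measurable_fst
  have hmeas_neg : MeasurableSet {ζ : ℝ × E2 | ζ.1 < 0} :=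
    measurableSet_lt measurable_fst measurable_const
  have hindicator {S : Set (ℝ × E2)} (hS : MeasurableSet S) :
      C * weightedSq (2 / (3 * p)) (S.indicator f) ^ (1 / 2 : ℝ) ≤
        C * weightedSq (2 / (3 * p)) f ^ (1 / 2 : ℝ) :=
    mul_le_mul_right (ENNReal.rpow_le_rpow (weightedSq_indicator_le _ f hS) (by norm_num)) _
  have hpos := hC _ (hf.indicator hmeas_pos) Set.support_indicator_subset
  have hneg := hC _ (hf.indicator hmeas_neg).reflect fun ζ hζ => by
    simpa using Set.support_indicator_subset ((map_ne_zero (starRingEnd ℂ)).1 hζ)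
  simp only [evolution_reflect, RCLike.enorm_conj, weightedSq_reflect] at hneg
  simp only [evolution_congr_ae (ae_eq_indicator_pos_add_indicator_neg f)]
  refine ((mixedLp_evolution_add_le hp hq (hf.indicator hmeas_pos)
    (hf.indicator hmeas_neg)).trans (add_le_add
    (hpos.trans (hindicator hmeas_pos)) (hneg.trans (hindicator hmeas_neg)))).trans_eq ?_
  rw [← two_mul, mul_assoc]

end

/-! ### The evolution of Schwartz data -/

theorem ft_eq_fourier (u₀ : SchwartzMap (ℝ × E2) ℂ) (ζ : ℝ × E2) :
    ft u₀ ζ = FourierTransform.fourier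
      (SchwartzMap.compCLMOfContinuousLinearEquiv ℂ (WithLp.prodContinuousLinearEquiv 2 ℝ ℝ E2) u₀)
      (WithLp.toLp 2 ((2 * Real.pi)⁻¹ • ζ)) := by
  rw [SchwartzMap.fourier_coe, Real.fourier_eq', ft,
    ← (WithLp.volume_preserving_toLp ℝ E2).integral_comp
      (MeasurableEquiv.toLp 2 (ℝ × E2)).measurableEmbedding]
  refine integral_congr_ae (Eventually.of_forall fun z => ?_)
  have hphase : -2 * Real.pi * inner ℝ (WithLp.toLp 2 z) (WithLp.toLp 2 ((2 * Real.pi)⁻¹ • ζ)) =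
      -(z.1 * ζ.1 + inner ℝ z.2 ζ.2) := by
    simp only [WithLp.prod_inner_apply, Prod.smul_fst, Prod.smul_snd, inner_smul_right,
      RCLike.inner_apply, conj_trivial, smul_eq_mul]
    field_simp
  simp only [hphase, smul_eq_mul]
  congr 2
  push_cast
  ring

theorem exists_schwartzMap_eq_ft (u₀ : SchwartzMap (ℝ × E2) ℂ) :
    ∃ v : SchwartzMap (ℝ × E2) ℂ, ft u₀ = v := by
  have hscale : (2 * Real.pi)⁻¹ ≠ 0 := inv_ne_zero Real.two_pi_pos.ne'
  exact ⟨SchwartzMap.compCLMOfContinuousLinearEquiv ℂ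
    ((ContinuousLinearEquiv.smulLeft (Units.mk0 _ hscale)).trans
      (WithLp.prodContinuousLinearEquiv 2 ℝ ℝ E2).symm)
    (FourierTransform.fourier (SchwartzMap.compCLMOfContinuousLinearEquiv ℂ
      (WithLp.prodContinuousLinearEquiv 2 ℝ ℝ E2) u₀)), funext (ft_eq_fourier u₀)⟩

theorem isProfile_schwartzMap (v : SchwartzMap (ℝ × E2) ℂ) : IsProfile v where
  measurable := v.continuous.measurable
  integrable := v.integrable
  lintegral_sq_ne_top :=
    (memLp_two_iff_lintegral_sq_ne_top v.continuous.aestronglyMeasurable).1 (v.memLp 2)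

theorem isProfile_ft (u₀ : SchwartzMap (ℝ × E2) ℂ) : IsProfile (ft u₀) := by
  obtain ⟨v, hv⟩ := exists_schwartzMap_eq_ft u₀
  exact hv ▸ isProfile_schwartzMap v

theorem kpEvol_eq_evolution (u₀ : SchwartzMap (ℝ × E2) ℂ) : kpEvol u₀ = evolution (ft u₀) := by
  ext t z
  refine integral_congr_ae (Eventually.of_forall fun ζ => ?_)
  simp only [← mul_assoc, ← coe_circleExp_add]
  rw [Circle.coe_exp, pairing]
  congr 2
  push_cast
  ring

theorem eLpNorm_two_abs_rpow_mul (s : ℝ) (f : ℝ × E2 → ℂ) :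
    eLpNorm (fun ζ : ℝ × E2 => ((|ζ.1| ^ s : ℝ) : ℂ) * f ζ) 2 volume =
      weightedSq (2 * s) f ^ (1 / 2 : ℝ) := by
  have hpow (x : ℝ) : ENNReal.ofReal (|x| ^ s) ^ 2 = ENNReal.ofReal (|x| ^ (2 * s)) := by
    rw [← ENNReal.ofReal_pow (by positivity), mul_comm, Real.rpow_mul (abs_nonneg x),
      Real.rpow_two]
  simp only [eLpNorm_eq_lintegral_rpow_enorm_toReal two_ne_zero ENNReal.ofNat_ne_top,
    ENNReal.toReal_ofNat, ENNReal.rpow_ofNat, enorm_mul, mul_pow, weightedSq, ← hpow]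
  have henorm (x : ℝ) : ‖((|x| ^ s : ℝ) : ℂ)‖ₑ = ENNReal.ofReal (|x| ^ s) := by
    rw [← ofReal_norm, Complex.norm_real, Real.norm_of_nonneg (by positivity)]
  simp only [henorm]

theorem mixedNorm_eq_mixedLp {p q : ℝ≥0∞} (hp : p ≠ ∞) (hq₀ : q ≠ 0) (hq : q ≠ ∞)
    (u : ℝ → ℝ × E2 → ℂ) :
    mixedNorm p q u = mixedLp p.toReal q.toReal fun t z => ‖u t z‖ₑ := by
  simp only [mixedNorm, lpENN, if_neg hp, eLpNorm_eq_lintegral_rpow_enorm_toReal hq₀ hq, mixedLp]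

theorem two_le_of_admissible {p q : ℝ} (hp : 2 ≤ p) (hpq : 2 / p + 3 / q = 3 / 2) : 2 ≤ q := by
  have hp_pos : 0 < 2 / p := by positivity
  have hp_le : 2 / p ≤ 1 := (div_le_one (by linarith)).2 hp
  have hq : 0 < q := by
    by_contra! hq
    linarith [div_nonpos_of_nonneg_of_nonpos zero_le_three hq]
  have h : 3 / q ≤ 3 / 2 := by linarith
  rw [div_le_div_iff₀ hq two_pos] at h
  linarith

theorem hasSeparatedStrichartz {p q : ℝ} (hp : 2 ≤ p) (hpq : 2 / p + 3 / q = 3 / 2) :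
    HasSeparatedStrichartz p q := by
  have hq : 2 ≤ q := two_le_of_admissible hp hpq
  rcases hp.eq_or_lt with rfl | hp
  · obtain rfl : q = 6 := by
      field_simp at hpq
      linarith
    exact hasSeparatedStrichartz_two_six
  · exact hasSeparatedStrichartz_of_two_lt hp hq hpq

section

variable {p q : ℝ≥0∞}

theorem ne_zero_of_admissible (hpq : 2 / p + 3 / q = 3 / 2) : q ≠ 0 := by
  rintro rfl
  rw [ENNReal.div_zero three_ne_zero, add_top] at hpq
  exact (ENNReal.div_ne_top ENNReal.ofNat_ne_top two_ne_zero) hpq.symm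

theorem toReal_admissible (hp : 2 ≤ p) (hpq : 2 / p + 3 / q = 3 / 2) :
    2 / p.toReal + 3 / q.toReal = 3 / 2 := by
  have hp₀ : p ≠ 0 := (zero_lt_two.trans_le hp).ne'
  have h := congrArg ENNReal.toReal hpq
  rwa [ENNReal.toReal_add (ENNReal.div_ne_top ENNReal.ofNat_ne_top hp₀)
    (ENNReal.div_ne_top ENNReal.ofNat_ne_top (ne_zero_of_admissible hpq)), ENNReal.toReal_div,
    ENNReal.toReal_div, ENNReal.toReal_div, ENNReal.toReal_ofNat, ENNReal.toReal_ofNat] at h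

theorem mixedNorm_top_two_evolution_le {f : ℝ × E2 → ℂ} (hf : IsProfile f) :
    mixedNorm ∞ 2 (evolution f) ≤ blockConst ^ (1 / 2 : ℝ) * weightedSq 0 f ^ (1 / 2 : ℝ) := by
  rw [mixedNorm, lpENN, if_pos rfl]
  refine essSup_le_of_ae_le _ (Eventually.of_forall fun t => ?_)
  simp only [eLpNorm_eq_lintegral_rpow_enorm_toReal two_ne_zero ENNReal.ofNat_ne_top,
    ENNReal.toReal_ofNat]
  rw [← ENNReal.mul_rpow_of_nonneg _ _ (by norm_num)]
  refine ENNReal.rpow_le_rpow ((lintegral_evolution_sq_le hf t).trans_eq ?_) (by norm_num)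
  simp [weightedSq]

theorem exists_mixedNorm_evolution_le (hp : 2 ≤ p) (hpq : 2 / p + 3 / q = 3 / 2) :
    ∃ C : ℝ≥0∞, C ≠ ∞ ∧ ∀ f : ℝ × E2 → ℂ, IsProfile f →
      mixedNorm p q (evolution f) ≤ C * weightedSq (2 * (1 / (3 * p.toReal))) f ^ (1 / 2 : ℝ) := by
  rcases eq_or_ne p ∞ with rfl | hp_top
  · obtain rfl : q = 2 := by
      rw [ENNReal.div_top, zero_add, div_eq_mul_inv, div_eq_mul_inv,
        ENNReal.mul_right_inj three_ne_zero ENNReal.ofNat_ne_top] at hpq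
      exact inv_inj.1 hpq
    refine ⟨blockConst ^ (1 / 2 : ℝ),
      ENNReal.rpow_ne_top_of_nonneg (by norm_num) blockConst_ne_top, fun f hf => ?_⟩
    simpa using mixedNorm_top_two_evolution_le hf
  · have hreal := toReal_admissible hp hpq
    have hp_real : 2 ≤ p.toReal := by simpa using ENNReal.toReal_mono hp_top hp
    have hq_real : 2 ≤ q.toReal := two_le_of_admissible hp_real hreal
    have hq_top : q ≠ ∞ := by
      rintro rfl
      norm_num at hq_real
    obtain ⟨C, hC_top, hC⟩ := (hasSeparatedStrichartz hp_real hreal).exists_mixedLp_evolution_le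
      (by linarith) (by linarith)
    refine ⟨C, hC_top, fun f hf => ?_⟩
    rw [mixedNorm_eq_mixedLp hp_top (ne_zero_of_admissible hpq) hq_top, mul_one_div]
    exact hC f hf

end

end KP

theorem strichartz_kp3d (p q : ℝ≥0∞) (hp : 2 ≤ p) (hpq : 2 / p + 3 / q = 3 / 2) :
    ∃ C : ℝ, 0 < C ∧ ∀ u₀ : SchwartzMap (ℝ × E2) ℂ,
      mixedNorm p q (kpEvol u₀) ≤
        ENNReal.ofReal C *
          eLpNorm (fun ζ : ℝ × E2 =>
            ((|ζ.1| ^ (1 / (3 * p.toReal)) : ℝ) : ℂ) * ft (fun w => u₀ w) ζ) 2 volume := by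
  obtain ⟨C, hC_top, hC⟩ := KP.exists_mixedNorm_evolution_le hp hpq
  have hC_le : C ≤ ENNReal.ofReal (C.toReal + 1) :=
    ENNReal.le_ofReal_iff_toReal_le hC_top (by positivity) |>.2 (by linarith)
  refine ⟨C.toReal + 1, by positivity, fun u₀ => ?_⟩
  rw [KP.kpEvol_eq_evolution, KP.eLpNorm_two_abs_rpow_mul]
  exact (hC _ (KP.isProfile_ft u₀)).trans (mul_le_mul_left hC_le _)
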